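/- arXiv:2509.11069 — 4 statements merged into one kernel-verified Lean document; each statement's English description precedes it below -/
import Mathlib

section
/- Let r₀ > 0, ν̄ > 0, and let f : ℝ × B[0,r₀] × [0,ν̄] → ℝⁿ be continuous, with f_ν := f(·,·,ν) RAP in t uniformly with respect to (x,ν), continuously differentiable in x with ∂f_ν/∂x continuous in x uniformly in t ∈ ℝ. Suppose the averaged function f₀(x) := lim_{T→∞} (1/(2T)) ∫_{−T}^{T} f(t,x,0) dt exists, with the convergence of (1/(2T)) ∫_{−T}^{T} f(t+s,x,0) dt to f₀(x) uniform in s ∈ ℝ and x ∈ B[0,r₀]. Then for every r < r₀ there exist ν₀ > 0 and a continuous function U : ℝ × B[0,r] × (0,ν₀] → ℝⁿ such that: (1) for each ν ∈ (0,ν₀], U(·,·,ν) is RAP in t uniformly in x and possesses a mean value lim_{T→∞} (1/(2T)) ∫_{−T}^{T} U(t,x,ν) dt; (2) ∂U/∂t and ∂U/∂x exist and are continuous, and are RAP in t and possess mean values for each ν; (3) setting G(t,x,ν) := ∂U/∂t(t,x,ν) − f(t,x,0) + f₀(x), each of the functions ν·U, ν·∂U/∂x, G, and ∂G/∂x tends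 to 0 as ν → 0⁺, uniformly on ℝ × B[0,r]; (4) for each ν ∈ (0,ν₀] the change of variables x = y + ν·U(t,y,ν) is invertible on ℝ × B[0,r], and it transforms the equation x' = ν·f_ν(t,x) into y' = ν·f₀(y) + ν·F_ν(t,y), where F_ν is RAP in t uniformly and F_ν → 0 uniformly on ℝ × B[0,r] as ν → 0⁺. -/
open MeasureTheory Filter Metric

def RelativelyDense (S : Set ℝ) : Prop :=
  ∃ l > 0, ∀ a : ℝ, ∃ τ ∈ S, τ ∈ Set.Icc a (a + l)

def RAPUniform {E F : Type*} [NormedAddCommGroup E] [NormedAddCommGroup F]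
    (f : ℝ → E → F) (S : Set E) : Prop :=
  (∃ C, ∀ t, ∀ x ∈ S, ‖f t x‖ ≤ C) ∧
  UniformContinuousOn (fun p : ℝ × E => f p.1 p.2) (Set.univ ×ˢ S) ∧
  ∀ ε > 0, RelativelyDense
    {τ | Filter.limsup (fun t => ⨆ x ∈ S, ‖f (t + τ) x - f t x‖) (Filter.cocompact ℝ) < ε}

section good

/-- Eventual translation numbers. -/
def AcvTr {E F : Type*} [NormedAddCommGroup E] [NormedAddCommGroup F]
    (f : ℝ → E → F) (S : Set E) (δ : ℝ) : Set ℝ :=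
  {τ | ∃ L, ∀ t, L ≤ |t| → ∀ x ∈ S, ‖f (t + τ) x - f t x‖ ≤ δ}

def AcvGood {E F : Type*} [NormedAddCommGroup E] [NormedAddCommGroup F]
    (A : ℝ → Set ℝ) (f : ℝ → E → F) (S : Set E) : Prop :=
  (∃ C, ∀ t, ∀ x ∈ S, ‖f t x‖ ≤ C) ∧
  (∀ ε > 0, ∃ δ > 0, ∀ t s, ∀ x ∈ S, ∀ y ∈ S, |t - s| < δ → ‖x - y‖ < δ →
    ‖f t x - f s y‖ ≤ ε) ∧
  ∀ ε > 0, ∃ δ > 0, ∀ τ ∈ A δ, τ ∈ AcvTr f S ε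

theorem acvTr_mono {E F : Type*} [NormedAddCommGroup E] [NormedAddCommGroup F]
    (f : ℝ → E → F) (S : Set E) : Monotone (AcvTr f S) := by
  intro a b hab τ ⟨L, hL⟩
  exact ⟨L, fun t ht x hx => (hL t ht x hx).trans hab⟩

variable {E F G : Type*} [NormedAddCommGroup E] [NormedAddCommGroup F] [NormedAddCommGroup G]
variable {A : ℝ → Set ℝ}

theorem acv_uc_iff (f : ℝ → E → F) (S : Set E) :
    UniformContinuousOn (fun p : ℝ × E => f p.1 p.2) (Set.univ ×ˢ S) ↔
    (∀ ε > 0, ∃ δ > 0, ∀ t s, ∀ x ∈ S, ∀ y ∈ S, |t - s| < δ → ‖x - y‖ < δ →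
    ‖f t x - f s y‖ ≤ ε) := by
  rw [Metric.uniformContinuousOn_iff]
  constructor
  · intro h ε hε
    obtain ⟨δ, hδ, h⟩ := h ε hε
    refine ⟨δ, hδ, fun t s x hx y hy h1 h2 => ?_⟩
    have := h (t, x) ⟨trivial, hx⟩ (s, y) ⟨trivial, hy⟩ (by
      rw [Prod.dist_eq]; simp [dist_eq_norm, h1, h2])
    rw [dist_eq_norm] at this
    exact this.le
  · intro h ε hε
    obtain ⟨δ, hδ, h⟩ := h (ε / 2) (by positivity)
    refine ⟨δ, hδ, fun p hp q hq h1 => ?_⟩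
    rw [Prod.dist_eq, max_lt_iff, Real.dist_eq, dist_eq_norm] at h1
    rw [dist_eq_norm]
    exact (h _ _ _ hp.2 _ hq.2 h1.1 h1.2).trans_lt (by linarith)

theorem acv_ev (P : ℝ → Prop) : (∀ᶠ t in cocompact ℝ, P t) ↔ ∃ L, ∀ t, L ≤ |t| → P t := by
  have h1 : cocompact ℝ = comap (fun t : ℝ => ‖t‖) atTop := by
    rw [comap_norm_atTop, Metric.cobounded_eq_cocompact]
  rw [h1, eventually_comap, eventually_atTop]
  constructor
  · rintro ⟨a, h⟩
    exact ⟨a, fun t ht => h |t| ht t rfl⟩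
  · rintro ⟨a, h⟩
    refine ⟨a, fun b hb t ht => h t ?_⟩
    rw [← Real.norm_eq_abs, ht]; exact hb

theorem acv_tr_dense (f : ℝ → E → F) (S : Set E) (h : RAPUniform f S) (δ : ℝ) (hδ : 0 < δ) :
    RelativelyDense (AcvTr f S δ) := by
  obtain ⟨⟨C, hC⟩, -, h⟩ := h
  obtain ⟨l, hl, h⟩ := h δ hδ
  refine ⟨l, hl, fun a => ?_⟩
  obtain ⟨τ, hτ, h2⟩ := h a
  refine ⟨τ, ?_, h2⟩
  have hb : ∀ t, ∀ x ∈ S, ‖f (t + τ) x - f t x‖ ≤ C + C := fun t x hx =>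
    (norm_sub_le _ _).trans (add_le_add (hC _ _ hx) (hC _ _ hx))
  have hb' : ∀ t x, (⨆ (_ : x ∈ S), ‖f (t + τ) x - f t x‖) ≤ |C + C| := fun t x =>
    Real.iSup_le (fun hx => (hb t x hx).trans (le_abs_self _)) (abs_nonneg _)
  have hu : ∀ t, ∀ x ∈ S, ‖f (t + τ) x - f t x‖ ≤ ⨆ x ∈ S, ‖f (t + τ) x - f t x‖ := by
    intro t x hx
    have hbdd : BddAbove (Set.range fun x => ⨆ (_ : x ∈ S), ‖f (t + τ) x - f t x‖) := by
      refine ⟨|C + C|, ?_⟩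
      rintro _ ⟨y, rfl⟩
      exact hb' t y
    have h5 := le_ciSup hbdd x
    have h6 : (⨆ (_ : x ∈ S), ‖f (t + τ) x - f t x‖) = ‖f (t + τ) x - f t x‖ := ciSup_pos hx
    rw [← h6]
    exact h5
  have hv : ∀ t, (⨆ x ∈ S, ‖f (t + τ) x - f t x‖) ≤ |C + C| := fun t =>
    Real.iSup_le (hb' t) (abs_nonneg _)
  rw [Set.mem_ofPred_eq] at hτ
  generalize hw : (fun t => ⨆ x ∈ S, ‖f (t + τ) x - f t x‖) = w at hτ
  have hw' : ∀ t, (⨆ x ∈ S, ‖f (t + τ) x - f t x‖) = w t := fun t => congrFun hw t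
  have hbd : IsBoundedUnder (· ≤ ·) (cocompact ℝ) w :=
    isBoundedUnder_of ⟨|C + C|, fun t => by rw [← hw' t]; exact hv t⟩
  have h3 := eventually_lt_of_limsup_lt hτ hbd
  rw [acv_ev] at h3
  obtain ⟨L, hL⟩ := h3
  refine ⟨L, fun t ht x hx => ?_⟩
  refine le_trans (hu t x hx) ?_
  rw [hw' t]
  exact (hL t ht).le

theorem AcvGood.rap {f : ℝ → E → F} {S : Set E} (h : AcvGood A f S)
    (hA : ∀ δ > 0, RelativelyDense (A δ)) : RAPUniform f S := by
  refine ⟨h.1, (acv_uc_iff f S).2 h.2.1, fun ε hε => ?_⟩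
  obtain ⟨δ, hδ, h⟩ := h.2.2 (ε / 2) (by positivity)
  obtain ⟨l, hl, h2⟩ := hA δ hδ
  refine ⟨l, hl, fun a => ?_⟩
  obtain ⟨τ, hτ, h3⟩ := h2 a
  refine ⟨τ, ?_, h3⟩
  obtain ⟨L, hL⟩ := h τ hτ
  refine lt_of_le_of_lt (b := ε / 2) ?_ (by linarith)
  refine limsup_le_of_le ?_ ?_
  · refine IsBoundedUnder.isCoboundedUnder_le ⟨0, ?_⟩
    simp only [eventually_map]
    refine Eventually.of_forall fun t => ?_
    exact Real.iSup_nonneg fun x => Real.iSup_nonneg fun _ => norm_nonneg _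
  · rw [acv_ev]
    refine ⟨L, fun t ht => ?_⟩
    exact Real.iSup_le (fun x => Real.iSup_le (fun hx => hL t ht x hx) (by positivity))
      (by positivity)

theorem AcvGood.mono {f : ℝ → E → F} {S S' : Set E} (h : AcvGood A f S) (hS : S' ⊆ S) :
    AcvGood A f S' := by
  obtain ⟨⟨C, hC⟩, h2, h3⟩ := h
  refine ⟨⟨C, fun t x hx => hC t x (hS hx)⟩, fun ε hε => ?_, fun ε hε => ?_⟩
  · obtain ⟨δ, hδ, h⟩ := h2 ε hε
    exact ⟨δ, hδ, fun t s x hx y hy => h t s x (hS hx) y (hS hy)⟩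
  · obtain ⟨δ, hδ, h⟩ := h3 ε hε
    refine ⟨δ, hδ, fun τ hτ => ?_⟩
    obtain ⟨L, hL⟩ := h τ hτ
    exact ⟨L, fun t ht x hx => hL t ht x (hS hx)⟩

theorem AcvGood.congr {f g : ℝ → E → F} {S : Set E} (h : AcvGood A f S)
    (hfg : ∀ t, ∀ x ∈ S, g t x = f t x) : AcvGood A g S := by
  obtain ⟨⟨C, hC⟩, h2, h3⟩ := h
  refine ⟨⟨C, fun t x hx => by rw [hfg t x hx]; exact hC t x hx⟩, fun ε hε => ?_, fun ε hε => ?_⟩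
  · obtain ⟨δ, hδ, h⟩ := h2 ε hε
    exact ⟨δ, hδ, fun t s x hx y hy => by rw [hfg t x hx, hfg s y hy]; exact h t s x hx y hy⟩
  · obtain ⟨δ, hδ, h⟩ := h3 ε hε
    refine ⟨δ, hδ, fun τ hτ => ?_⟩
    obtain ⟨L, hL⟩ := h τ hτ
    exact ⟨L, fun t ht x hx => by rw [hfg _ x hx, hfg _ x hx]; exact hL t ht x hx⟩

theorem AcvGood.prod {f : ℝ → E → F} {g : ℝ → E → G} {S : Set E} (hA : Monotone A)
    (hf : AcvGood A f S) (hg : AcvGood A g S) : AcvGood A (fun t x => (f t x, g t x)) S := by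
  obtain ⟨⟨C, hC⟩, h2, h3⟩ := hf
  obtain ⟨⟨C', hC'⟩, h2', h3'⟩ := hg
  refine ⟨⟨max C C', fun t x hx => ?_⟩, fun ε hε => ?_, fun ε hε => ?_⟩
  · exact max_le_max (hC t x hx) (hC' t x hx)
  · obtain ⟨δ, hδ, h⟩ := h2 ε hε
    obtain ⟨δ', hδ', h'⟩ := h2' ε hε
    refine ⟨min δ δ', lt_min hδ hδ', fun t s x hx y hy h1 h2 => ?_⟩
    rw [lt_min_iff] at h1 h2
    exact max_le (h t s x hx y hy h1.1 h2.1) (h' t s x hx y hy h1.2 h2.2)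
  · obtain ⟨δ, hδ, h⟩ := h3 ε hε
    obtain ⟨δ', hδ', h'⟩ := h3' ε hε
    refine ⟨min δ δ', lt_min hδ hδ', fun τ hτ => ?_⟩
    obtain ⟨L, hL⟩ := h τ (hA (min_le_left _ _) hτ)
    obtain ⟨L', hL'⟩ := h' τ (hA (min_le_right _ _) hτ)
    exact ⟨max L L', fun t ht x hx => max_le (hL t ((le_max_left _ _).trans ht) x hx)
      (hL' t ((le_max_right _ _).trans ht) x hx)⟩

theorem AcvGood.comp {f : ℝ → F → G} {g : ℝ → E → F} {S : Set E} {P : Set F} (hA : Monotone A)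
    (hf : AcvGood A f P) (hg : AcvGood A g S) (hgP : ∀ t, ∀ x ∈ S, g t x ∈ P) :
    AcvGood A (fun t x => f t (g t x)) S := by
  obtain ⟨⟨C, hC⟩, h2, h3⟩ := hf
  obtain ⟨⟨C', hC'⟩, h2', h3'⟩ := hg
  refine ⟨⟨C, fun t x hx => hC t _ (hgP t x hx)⟩, fun ε hε => ?_, fun ε hε => ?_⟩
  · obtain ⟨δ, hδ, h⟩ := h2 ε hε
    obtain ⟨δ', hδ', h'⟩ := h2' (δ / 2) (by positivity)
    refine ⟨min δ δ', lt_min hδ hδ', fun t s x hx y hy h1 h2 => ?_⟩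
    rw [lt_min_iff] at h1 h2
    exact h t s _ (hgP _ _ hx) _ (hgP _ _ hy) h1.1
      ((h' t s x hx y hy h1.2 h2.2).trans_lt (by linarith))
  · obtain ⟨δ, hδ, h⟩ := h3 (ε / 2) (by positivity)
    obtain ⟨δ₁, hδ₁, h₁⟩ := h2 (ε / 2) (by positivity)
    obtain ⟨δ', hδ', h'⟩ := h3' (δ₁ / 2) (by positivity)
    refine ⟨min δ δ', lt_min hδ hδ', fun τ hτ => ?_⟩
    obtain ⟨L, hL⟩ := h τ (hA (min_le_left _ _) hτ)
    obtain ⟨L', hL'⟩ := h' τ (hA (min_le_right _ _) hτ)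
    refine ⟨max L L', fun t ht x hx => ?_⟩
    have e1 := hL t ((le_max_left _ _).trans ht) (g (t + τ) x) (hgP _ _ hx)
    have e2 := h₁ t t (g (t + τ) x) (hgP _ _ hx) (g t x) (hgP _ _ hx) (by simpa using hδ₁)
      ((hL' t ((le_max_right _ _).trans ht) x hx).trans_lt (by linarith))
    calc _ ≤ ‖f (t + τ) (g (t + τ) x) - f t (g (t + τ) x)‖ + ‖f t (g (t + τ) x) - f t (g t x)‖ :=
          norm_sub_le_norm_sub_add_norm_sub _ _ _
      _ ≤ ε := by linarith

theorem acvGood_const {f : E → F} {K : Set E} (hK : IsCompact K) (hf : ContinuousOn f K) : AcvGood A (fun _ x => f x) K := by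
  obtain ⟨C, hC⟩ := hK.exists_bound_of_continuousOn hf
  refine ⟨⟨C, fun _ x hx => hC x hx⟩, fun ε hε => ?_, fun ε hε => ?_⟩
  · have := hK.uniformContinuousOn_of_continuous hf
    rw [Metric.uniformContinuousOn_iff] at this
    obtain ⟨δ, hδ, h⟩ := this ε hε
    refine ⟨δ, hδ, fun _ _ x hx y hy _ h1 => ?_⟩
    have := h x hx y hy (by rwa [dist_eq_norm])
    rw [dist_eq_norm] at this
    exact this.le
  · exact ⟨1, one_pos, fun τ _ => ⟨0, fun t _ x _ => by simpa using hε.le⟩⟩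

theorem AcvGood.cont_comp [ProperSpace F] {Φ : F → G} {g : ℝ → E → F} {S : Set E} {P : Set F}
    (hA : Monotone A) (hP : IsClosed P) (hΦ : ContinuousOn Φ P)
    (hg : AcvGood A g S) (hgP : ∀ t, ∀ x ∈ S, g t x ∈ P) :
    AcvGood A (fun t x => Φ (g t x)) S := by
  obtain ⟨C, hC⟩ := hg.1
  refine AcvGood.comp (P := closedBall 0 C ∩ P) hA (acvGood_const ?_ ?_) hg ?_
  · exact (isCompact_closedBall 0 C).inter_right hP
  · exact hΦ.mono Set.inter_subset_right
  · exact fun t x hx => ⟨by simpa using hC t x hx, hgP t x hx⟩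

end good


section integ

set_option linter.unusedSectionVars false

variable {E F : Type*} [NormedAddCommGroup E] [NormedAddCommGroup F] [NormedSpace ℝ F]
variable {A : ℝ → Set ℝ}

noncomputable def acvJ (w : ℝ → ℝ) (g : ℝ → E → F) (T t : ℝ) (x : E) : F :=
  ∫ v in (0:ℝ)..1, w v • g (t + T * v) x

theorem AcvGood.cont_t {g : ℝ → E → F} {S : Set E} (hg : AcvGood A g S) {x : E} (hx : x ∈ S) :
    Continuous (fun t => g t x) := by
  rw [Metric.continuous_iff]
  intro b ε hε
  obtain ⟨δ, hδ, h⟩ := hg.2.1 (ε / 2) (by positivity)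
  refine ⟨δ, hδ, fun a ha => ?_⟩
  rw [dist_eq_norm]
  exact (h a b x hx x hx ha (by simpa using hδ)).trans_lt (by linarith)

theorem AcvGood.int_cont {g : ℝ → E → F} {S : Set E} (hg : AcvGood A g S) {x : E} (hx : x ∈ S)
    {w : ℝ → ℝ} (hw : Continuous w) (T t : ℝ) :
    Continuous (fun v => w v • g (t + T * v) x) :=
  hw.smul ((hg.cont_t hx).comp (by fun_prop))

theorem AcvGood.J_norm_le {g : ℝ → E → F} {x : E}
    {w : ℝ → ℝ} (hw1 : ∀ v ∈ Set.Icc (0:ℝ) 1, |w v| ≤ 1) (T t : ℝ)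
    {C : ℝ} (hC : ∀ t, ‖g t x‖ ≤ C) : ‖acvJ w g T t x‖ ≤ C := by
  have := intervalIntegral.norm_integral_le_of_norm_le_const (a := (0:ℝ)) (b := 1) (C := C)
    (f := fun v => w v • g (t + T * v) x) (by
      intro v hv
      rw [Set.uIoc_of_le zero_le_one] at hv
      rw [norm_smul]
      calc _ ≤ 1 * C := mul_le_mul (hw1 v ⟨hv.1.le, hv.2⟩) (hC _) (norm_nonneg _) zero_le_one
        _ = C := one_mul C)
  unfold acvJ
  simpa using this

theorem AcvGood.J_sub_le {g : ℝ → E → F} {S : Set E} (hg : AcvGood A g S) {x y : E} (hx : x ∈ S)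
    (hy : y ∈ S) {w : ℝ → ℝ} (hw : Continuous w) (hw1 : ∀ v ∈ Set.Icc (0:ℝ) 1, |w v| ≤ 1)
    {T t T' t' : ℝ} {ε : ℝ}
    (h : ∀ v ∈ Set.Icc (0:ℝ) 1, ‖g (t + T * v) x - g (t' + T' * v) y‖ ≤ ε) :
    ‖acvJ w g T t x - acvJ w g T' t' y‖ ≤ ε := by
  unfold acvJ
  rw [← intervalIntegral.integral_sub ((hg.int_cont hx hw T t).intervalIntegrable _ _)
    ((hg.int_cont hy hw T' t').intervalIntegrable _ _)]
  have := intervalIntegral.norm_integral_le_of_norm_le_const (a := (0:ℝ)) (b := 1) (C := ε)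
    (f := fun v => w v • g (t + T * v) x - w v • g (t' + T' * v) y) (by
      intro v hv
      rw [Set.uIoc_of_le zero_le_one] at hv
      rw [← smul_sub, norm_smul]
      calc _ ≤ 1 * ε := mul_le_mul (hw1 v ⟨hv.1.le, hv.2⟩) (h v ⟨hv.1.le, hv.2⟩)
            (norm_nonneg _) zero_le_one
        _ = ε := one_mul ε)
  simpa using this

theorem AcvGood.J_uc {g : ℝ → E → F} {S : Set E} (hg : AcvGood A g S)
    {w : ℝ → ℝ} (hw : Continuous w) (hw1 : ∀ v ∈ Set.Icc (0:ℝ) 1, |w v| ≤ 1) :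
    ∀ ε > 0, ∃ δ > 0, ∀ T T' t s, ∀ x ∈ S, ∀ y ∈ S, |T - T'| < δ → |t - s| < δ → ‖x - y‖ < δ →
      ‖acvJ w g T t x - acvJ w g T' s y‖ ≤ ε := by
  intro ε hε
  obtain ⟨δ, hδ, h⟩ := hg.2.1 ε hε
  refine ⟨δ / 2, by positivity, fun T T' t s x hx y hy h1 h2 h3 => ?_⟩
  refine hg.J_sub_le hx hy hw hw1 fun v hv => h _ _ _ hx _ hy ?_ (by linarith)
  have e : t + T * v - (s + T' * v) = (t - s) + (T - T') * v := by ring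
  rw [e]
  calc _ ≤ |t - s| + |(T - T') * v| := abs_add_le _ _
    _ = |t - s| + |T - T'| * v := by rw [abs_mul, abs_of_nonneg hv.1]
    _ ≤ |t - s| + |T - T'| * 1 := by gcongr; exact hv.2
    _ < δ := by linarith

theorem AcvGood.J_good {g : ℝ → E → F} {S : Set E} (hg : AcvGood A g S)
    {w : ℝ → ℝ} (hw : Continuous w) (hw1 : ∀ v ∈ Set.Icc (0:ℝ) 1, |w v| ≤ 1) (T : ℝ) :
    AcvGood A (fun t x => acvJ w g T t x) S := by
  refine ⟨?_, ?_, ?_⟩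
  · obtain ⟨C, hC⟩ := hg.1
    exact ⟨C, fun t x hx => AcvGood.J_norm_le hw1 T t (fun t => hC t x hx)⟩
  · intro ε hε
    obtain ⟨δ, hδ, h⟩ := hg.J_uc hw hw1 ε hε
    exact ⟨δ, hδ, fun t s x hx y hy h1 h2 => h T T t s x hx y hy (by simpa using hδ) h1 h2⟩
  · intro ε hε
    obtain ⟨δ, hδ, h⟩ := hg.2.2 ε hε
    refine ⟨δ, hδ, fun τ hτ => ?_⟩
    obtain ⟨L, hL⟩ := h τ hτ
    refine ⟨L + |T|, fun t ht x hx => hg.J_sub_le hx hx hw hw1 fun v hv => ?_⟩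
    have e : t + τ + T * v = (t + T * v) + τ := by ring
    rw [e]
    refine hL _ ?_ x hx
    have h1 : |T * v| ≤ |T| := by
      rw [abs_mul, abs_of_nonneg hv.1]
      exact mul_le_of_le_one_right (abs_nonneg _) hv.2
    have h2 : |t| ≤ |t + T * v| + |T * v| := by
      have := abs_sub (t + T * v) (T * v)
      simpa using this
    linarith

theorem AcvGood.J_contOn {g : ℝ → E → F} {S : Set E} (hg : AcvGood A g S)
    {w : ℝ → ℝ} (hw : Continuous w) (hw1 : ∀ v ∈ Set.Icc (0:ℝ) 1, |w v| ≤ 1) :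
    ContinuousOn (fun p : ℝ × E × ℝ => acvJ w g p.2.2 p.1 p.2.1)
      (Set.univ ×ˢ S ×ˢ Set.univ) := by
  rw [Metric.continuousOn_iff]
  intro b hb ε hε
  obtain ⟨δ, hδ, h⟩ := hg.J_uc hw hw1 (ε / 2) (by positivity)
  refine ⟨δ, hδ, fun a ha hab => ?_⟩
  rw [Prod.dist_eq, max_lt_iff, Prod.dist_eq, max_lt_iff] at hab
  rw [dist_eq_norm]
  refine (h _ _ _ _ _ ha.2.1 _ hb.2.1 hab.2.2 hab.1 ?_).trans_lt (by linarith)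
  rw [← dist_eq_norm]; exact hab.2.1

variable [NormedSpace ℝ E]

theorem AcvGood.J_hasFDerivAt {g : ℝ → E → F} {g' : ℝ → E → E →L[ℝ] F} {S O : Set E}
    (hg : AcvGood A g S) (hg' : AcvGood A g' S) (hO : IsOpen O) (hOS : O ⊆ S)
    (hd : ∀ t, ∀ x ∈ O, HasFDerivAt (g t) (g' t x) x)
    {w : ℝ → ℝ} (hw : Continuous w) (hw1 : ∀ v ∈ Set.Icc (0:ℝ) 1, |w v| ≤ 1) (T t : ℝ)
    {x : E} (hx : x ∈ O) :
    HasFDerivAt (fun x => acvJ w g T t x) (acvJ w g' T t x) x := by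
  obtain ⟨C, hC⟩ := hg'.1
  refine intervalIntegral.hasFDerivAt_integral_of_dominated_of_fderiv_le (hO.mem_nhds hx)
    (bound := fun _ => C) (F := fun x v => w v • g (t + T * v) x)
    (F' := fun x v => w v • g' (t + T * v) x) ?_ ?_ ?_ ?_ ?_ ?_
  · filter_upwards [hO.mem_nhds hx] with y hy
    exact (hg.int_cont (hOS hy) hw T t).aestronglyMeasurable
  · exact (hg.int_cont (hOS hx) hw T t).intervalIntegrable _ _
  · exact (hg'.int_cont (hOS hx) hw T t).aestronglyMeasurable
  · refine Eventually.of_forall fun v hv y hy => ?_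
    rw [Set.uIoc_of_le zero_le_one] at hv
    rw [norm_smul]
    calc _ ≤ 1 * C := mul_le_mul (hw1 v ⟨hv.1.le, hv.2⟩) (hC _ _ (hOS hy)) (norm_nonneg _)
          zero_le_one
      _ = C := one_mul C
  · simp
  · exact Eventually.of_forall fun v _ y hy => (hd _ y hy).const_smul _

theorem acv_landau {φ : E → F} {φ' : E → E →L[ℝ] F} {x : E} {δ m ε : ℝ} (hδ : 0 < δ)
    (hd : ∀ y ∈ closedBall x δ, HasFDerivAt φ (φ' y) y)
    (hm : ∀ y ∈ closedBall x δ, ‖φ y‖ ≤ m)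
    (he : ∀ y ∈ closedBall x δ, ‖φ' y - φ' x‖ ≤ ε) : ‖φ' x‖ ≤ 2 * m / δ + ε := by
  have hx : x ∈ closedBall x δ := mem_closedBall_self hδ.le
  have hm0 : 0 ≤ m := (norm_nonneg _).trans (hm x hx)
  have he0 : 0 ≤ ε := (norm_nonneg _).trans (he x hx)
  refine ContinuousLinearMap.opNorm_le_bound _ (by positivity) fun v => ?_
  rcases eq_or_ne v 0 with rfl | hv
  · simp
  have hv' : 0 < ‖v‖ := norm_pos_iff.2 hv
  set c := δ / ‖v‖ with hc
  have hc0 : 0 < c := by positivity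
  have hcv : ‖c • v‖ = δ := by
    rw [norm_smul, Real.norm_of_nonneg hc0.le, hc]; field_simp
  have hy : x + c • v ∈ closedBall x δ := by
    rw [mem_closedBall, dist_eq_norm]; simp [hcv]
  have h1 := (convex_closedBall x δ).norm_image_sub_le_of_norm_hasFDerivWithin_le'
    (fun y hy => (hd y hy).hasFDerivWithinAt) he hx hy
  rw [add_sub_cancel_left, hcv] at h1
  have h2 : ‖φ' x (c • v)‖ ≤ 2 * m + ε * δ := by
    have e : φ' x (c • v) = (φ (x + c • v) - φ x) - (φ (x + c • v) - φ x - φ' x (c • v)) := by abel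
    rw [e]
    refine (norm_sub_le _ _).trans ?_
    have := norm_sub_le (φ (x + c • v)) (φ x)
    linarith [hm _ hy, hm x hx]
  rw [map_smul, norm_smul, Real.norm_of_nonneg hc0.le] at h2
  have h3 : ‖φ' x v‖ ≤ (2 * m + ε * δ) / c := by rw [le_div_iff₀ hc0]; linarith
  refine h3.trans_eq ?_
  rw [hc]; field_simp

theorem AcvGood.deriv {g : ℝ → E → F} {g' : ℝ → E → E →L[ℝ] F} {R ρ : ℝ} (hρ : ρ < R)
    (hg : AcvGood A g (closedBall 0 R))
    (hd : ∀ t, ∀ x ∈ ball (0:E) R, HasFDerivAt (g t) (g' t x) x)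
    (hc : ∀ ε > 0, ∃ δ > 0, ∀ t, ∀ x ∈ ball (0:E) R, ∀ y ∈ ball (0:E) R, ‖x - y‖ < δ →
      ‖g' t x - g' t y‖ ≤ ε) : AcvGood A g' (closedBall 0 ρ) := by
  have hsub : ∀ x ∈ closedBall (0:E) ρ, ∀ δ < R - ρ, closedBall x δ ⊆ ball 0 R := by
    intro x hx δ hδ y hy
    rw [mem_ball, dist_eq_norm, sub_zero] 
    rw [mem_closedBall, dist_eq_norm] at hx hy
    rw [sub_zero] at hx
    have := norm_add_le (y - x) x
    rw [sub_add_cancel] at this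
    linarith
  have hsub' : closedBall (0:E) ρ ⊆ ball 0 R := closedBall_subset_ball hρ
  have hbc : ball (0:E) R ⊆ closedBall 0 R := ball_subset_closedBall
  have key : ∀ ε > 0, ∃ m > 0, ∀ t s, ∀ x ∈ closedBall (0:E) ρ,
      (∀ y ∈ closedBall (0:E) R, ‖g t y - g s y‖ ≤ m) → ‖g' t x - g' s x‖ ≤ ε := by
    intro ε hε
    obtain ⟨δ, hδ, h⟩ := hc (ε / 4) (by positivity)
    obtain ⟨η, hη0, hη⟩ : ∃ η, 0 < η ∧ η < min δ (R - ρ) := exists_between (lt_min hδ (by linarith))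
    rw [lt_min_iff] at hη
    refine ⟨ε * η / 4, by positivity, fun t s x hx hm => ?_⟩
    have hs := hsub x hx η hη.2
    have := acv_landau (φ := fun y => g t y - g s y) (φ' := fun y => g' t y - g' s y) (x := x)
      (δ := η) (m := ε * η / 4) (ε := ε / 2) hη0
      (fun y hy => (hd t y (hs hy)).sub (hd s y (hs hy)))
      (fun y hy => hm y (hbc (hs hy))) (by
        intro y hy
        have hyx : ‖y - x‖ < δ := by rw [← dist_eq_norm]; exact lt_of_le_of_lt hy hη.1
        have h1 := h t y (hs hy) x (hsub' hx) hyx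
        have h2 := h s y (hs hy) x (hsub' hx) hyx
        have e : g' t y - g' s y - (g' t x - g' s x) = (g' t y - g' t x) - (g' s y - g' s x) := by
          abel
        rw [e]
        refine (norm_sub_le _ _).trans (by linarith))
    refine this.trans_eq ?_
    field_simp; ring
  refine ⟨?_, ?_, ?_⟩
  · obtain ⟨C, hC⟩ := hg.1
    obtain ⟨δ, hδ, h⟩ := hc 1 one_pos
    obtain ⟨η, hη0, hη⟩ : ∃ η, 0 < η ∧ η < min δ (R - ρ) := exists_between (lt_min hδ (by linarith))
    rw [lt_min_iff] at hη
    refine ⟨2 * C / η + 1, fun t x hx => ?_⟩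
    have hs := hsub x hx η hη.2
    refine acv_landau hη0 (fun y hy => hd t y (hs hy)) (fun y hy => hC t y (hbc (hs hy)))
      fun y hy => h t y (hs hy) x (hsub' hx) ?_
    rw [← dist_eq_norm]; exact lt_of_le_of_lt hy hη.1
  · intro ε hε
    obtain ⟨m, hm, h⟩ := key (ε / 2) (by positivity)
    obtain ⟨δ, hδ, h1⟩ := hg.2.1 m hm
    obtain ⟨δ', hδ', h2⟩ := hc (ε / 2) (by positivity)
    refine ⟨min δ δ', lt_min hδ hδ', fun t s x hx y hy h3 h4 => ?_⟩
    rw [lt_min_iff] at h3 h4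
    have e1 := h t s x hx (fun y hy => h1 t s y hy y hy h3.1 (by simpa using hδ))
    have e2 := h2 s x (hsub' hx) y (hsub' hy) h4.2
    calc _ ≤ ‖g' t x - g' s x‖ + ‖g' s x - g' s y‖ := norm_sub_le_norm_sub_add_norm_sub _ _ _
      _ ≤ ε := by linarith
  · intro ε hε
    obtain ⟨m, hm, h⟩ := key ε hε
    obtain ⟨δ, hδ, h1⟩ := hg.2.2 m hm
    refine ⟨δ, hδ, fun τ hτ => ?_⟩
    obtain ⟨L, hL⟩ := h1 τ hτ
    exact ⟨L, fun t ht x hx => h _ _ x hx (hL t ht)⟩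

theorem acv_mean_deriv [CompleteSpace F] {g : ℝ → E → F} {g' : ℝ → E → E →L[ℝ] F} {g₀ : E → F}
    {ρ σ : ℝ} (hσ : σ < ρ)
    (hg : AcvGood A g (closedBall 0 ρ)) (hg' : AcvGood A g' (closedBall 0 ρ))
    (hd : ∀ t, ∀ x ∈ ball (0:E) ρ, HasFDerivAt (g t) (g' t x) x)
    (hmean : ∀ ε > 0, ∃ T₀ > 0, ∀ T ≥ T₀, ∀ t, ∀ x ∈ closedBall (0:E) ρ,
      ‖acvJ (fun _ => 1) g T t x - g₀ x‖ ≤ ε) :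
    ∃ g₀' : E → E →L[ℝ] F, (∀ x ∈ ball (0:E) σ, HasFDerivAt g₀ (g₀' x) x) ∧
      ContinuousOn g₀' (closedBall 0 σ) ∧
      ∀ ε > 0, ∃ T₀ > 0, ∀ T ≥ T₀, ∀ t, ∀ x ∈ closedBall (0:E) σ,
        ‖acvJ (fun _ => 1) g' T t x - g₀' x‖ ≤ ε := by
  have hw : Continuous (fun _ : ℝ => (1:ℝ)) := continuous_const
  have hw1 : ∀ v ∈ Set.Icc (0:ℝ) 1, |(fun _ : ℝ => (1:ℝ)) v| ≤ 1 := by simp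
  have hbc : ball (0:E) ρ ⊆ closedBall 0 ρ := ball_subset_closedBall
  have hσρ : closedBall (0:E) σ ⊆ closedBall 0 ρ := closedBall_subset_closedBall hσ.le
  have hJd : ∀ T t, ∀ x ∈ ball (0:E) ρ, HasFDerivAt (fun x => acvJ (fun _ => 1) g T t x)
      (acvJ (fun _ => 1) g' T t x) x := fun T t x hx =>
    AcvGood.J_hasFDerivAt hg hg' isOpen_ball hbc hd hw hw1 T t hx
  have hcau : ∀ ε > 0, ∃ T₀ > 0, ∀ T ≥ T₀, ∀ T' ≥ T₀, ∀ t t', ∀ x ∈ closedBall (0:E) σ,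
      ‖acvJ (fun _ => 1) g' T t x - acvJ (fun _ => 1) g' T' t' x‖ ≤ ε := by
    intro ε hε
    obtain ⟨δ, hδ, h⟩ := hg'.J_uc hw hw1 (ε / 4) (by positivity)
    obtain ⟨η, hη0, hη⟩ : ∃ η, 0 < η ∧ η < min δ (ρ - σ) := exists_between (lt_min hδ (by linarith))
    rw [lt_min_iff] at hη
    obtain ⟨T₀, hT₀, hT⟩ := hmean (ε * η / 8) (by positivity)
    refine ⟨T₀, hT₀, fun T h1 T' h2 t t' x hx => ?_⟩
    have hs : closedBall x η ⊆ ball 0 ρ := by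
      intro y hy
      rw [mem_ball, dist_eq_norm, sub_zero] 
      rw [mem_closedBall, dist_eq_norm] at hx hy
      rw [sub_zero] at hx
      have := norm_add_le (y - x) x
      rw [sub_add_cancel] at this
      linarith
    have := acv_landau (φ := fun y => acvJ (fun _ => 1) g T t y - acvJ (fun _ => 1) g T' t' y)
      (φ' := fun y => acvJ (fun _ => 1) g' T t y - acvJ (fun _ => 1) g' T' t' y) (x := x)
      (δ := η) (m := ε * η / 4) (ε := ε / 2) hη0
      (fun y hy => (hJd T t y (hs hy)).sub (hJd T' t' y (hs hy)))
      (by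
        intro y hy
        have e1 := hT T h1 t y (hbc (hs hy))
        have e2 := hT T' h2 t' y (hbc (hs hy))
        have e : acvJ (fun _ => 1) g T t y - acvJ (fun _ => 1) g T' t' y =
          (acvJ (fun _ => 1) g T t y - g₀ y) - (acvJ (fun _ => 1) g T' t' y - g₀ y) := by abel
        rw [e]
        refine (norm_sub_le _ _).trans (by linarith)) (by
        intro y hy
        have hyx : ‖y - x‖ < δ := by rw [← dist_eq_norm]; exact lt_of_le_of_lt hy hη.1
        have h1 := h T T t t y (hbc (hs hy)) x (hσρ hx) (by simpa using hδ) (by simpa using hδ) hyx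
        have h2 := h T' T' t' t' y (hbc (hs hy)) x (hσρ hx) (by simpa using hδ)
          (by simpa using hδ) hyx
        rw [sub_sub_sub_comm]
        refine (norm_sub_le _ _).trans (by linarith))
    refine this.trans_eq ?_
    field_simp; ring
  have hlim : ∀ x, ∃ L, x ∈ closedBall (0:E) σ →
      Tendsto (fun k : ℕ => acvJ (fun _ => 1) g' (k:ℝ) 0 x) atTop (nhds L) := by
    intro x
    by_cases hx : x ∈ closedBall (0:E) σ
    · have : CauchySeq (fun k : ℕ => acvJ (fun _ => 1) g' (k:ℝ) 0 x) := by
        rw [Metric.cauchySeq_iff]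
        intro ε hε
        obtain ⟨T₀, hT₀, h⟩ := hcau (ε / 2) (by positivity)
        refine ⟨⌈T₀⌉₊, fun m hm n hn => ?_⟩
        rw [dist_eq_norm]
        exact (h m (Nat.ceil_le.1 hm) n (Nat.ceil_le.1 hn) 0 0 x hx).trans_lt (by linarith)
      obtain ⟨L, hL⟩ := cauchySeq_tendsto_of_complete this
      exact ⟨L, fun _ => hL⟩
    · exact ⟨0, fun h => absurd h hx⟩
  choose g₀' hg₀' using hlim
  have hfin : ∀ ε > 0, ∃ T₀ > 0, ∀ T ≥ T₀, ∀ t, ∀ x ∈ closedBall (0:E) σ,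
        ‖acvJ (fun _ => 1) g' T t x - g₀' x‖ ≤ ε := by
    intro ε hε
    obtain ⟨T₀, hT₀, h⟩ := hcau ε hε
    refine ⟨T₀, hT₀, fun T hT t x hx => ?_⟩
    refine le_of_tendsto ((tendsto_const_nhds.sub (hg₀' x hx)).norm) ?_
    filter_upwards [eventually_ge_atTop ⌈T₀⌉₊] with k hk
    exact h T hT k (Nat.ceil_le.1 hk) t 0 x hx
  have hunif : TendstoUniformlyOn (fun (k : ℕ) x => acvJ (fun _ => 1) g' (k:ℝ) 0 x) g₀' atTop
      (closedBall (0:E) σ) := by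
    rw [Metric.tendstoUniformlyOn_iff]
    intro ε hε
    obtain ⟨T₀, hT₀, h⟩ := hfin (ε / 2) (by positivity)
    filter_upwards [eventually_ge_atTop ⌈T₀⌉₊] with k hk x hx
    rw [dist_comm, dist_eq_norm]
    exact (h k (Nat.ceil_le.1 hk) 0 x hx).trans_lt (by linarith)
  refine ⟨g₀', fun x hx => ?_, ?_, hfin⟩
  · refine hasFDerivAt_of_tendstoUniformlyOn (f := fun (k : ℕ) x => acvJ (fun _ => 1) g (k:ℝ) 0 x)
      (isOpen_ball (x := (0:E)) (ε := σ)) (hunif.mono ball_subset_closedBall)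
      (fun k x hx => hJd _ _ x (ball_subset_ball hσ.le hx)) (fun x hx => ?_) hx
    rw [Metric.tendsto_atTop]
    intro ε hε
    obtain ⟨T₀, hT₀, h⟩ := hmean (ε / 2) (by positivity)
    refine ⟨⌈T₀⌉₊, fun k hk => ?_⟩
    rw [dist_eq_norm]
    exact (h k (Nat.ceil_le.1 hk) 0 x (hσρ (ball_subset_closedBall hx))).trans_lt (by linarith)
  · refine hunif.continuousOn (Frequently.of_forall fun k => ?_)
    intro x hx
    have := (hg'.J_good hw hw1 (k:ℝ))
    have h2 := ((acv_uc_iff _ _).2 this.2.1).continuousOn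
    refine ContinuousOn.comp h2 (f := fun x => ((0:ℝ), x)) (by fun_prop)
      (fun y hy => ⟨trivial, hσρ hy⟩) x hx

end integ


section more

variable {E F : Type*} [NormedAddCommGroup E] [NormedAddCommGroup F] [NormedSpace ℝ F]
  [NormedSpace ℝ E]

theorem acv_U_deriv [CompleteSpace F] {k : ℝ → F} (hk : Continuous k) {T : ℝ} (hT : 0 < T) (t : ℝ) :
    HasDerivAt (fun t => -(T • ∫ v in (0:ℝ)..1, (1 - v) • k (t + T * v)))
      (k t - ∫ v in (0:ℝ)..1, (1:ℝ) • k (t + T * v)) t := by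
  set H : ℝ → F := fun t => ∫ u in (0:ℝ)..t, k u with hH
  set K : ℝ → F := fun t => ∫ u in (0:ℝ)..t, u • k u with hK
  have hk2 : Continuous (fun u : ℝ => u • k u) := continuous_id.smul hk
  have dH : ∀ t, HasDerivAt H (k t) t := fun t => hk.integral_hasStrictDerivAt 0 t |>.hasDerivAt
  have dK : ∀ t, HasDerivAt K (t • k t) t := fun t =>
    hk2.integral_hasStrictDerivAt 0 t |>.hasDerivAt
  have e1 : (fun t => -(T • ∫ v in (0:ℝ)..1, (1 - v) • k (t + T * v))) =
      fun t => -((1 + t / T) • (H (t + T) - H t) - (1 / T) • (K (t + T) - K t)) := by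
    funext t
    congr 1
    have h1 : ∀ v : ℝ, (1 - v) • k (t + T * v) =
        (fun u => (1 + t / T) • k u - (1 / T) • (u • k u)) (t + T * v) := by
      intro v
      simp only [smul_smul, ← sub_smul]
      congr 1
      field_simp; ring
    simp_rw [h1]
    rw [intervalIntegral.smul_integral_comp_add_mul
      (fun u => (1 + t / T) • k u - (1 / T) • (u • k u)), intervalIntegral.integral_sub,
      intervalIntegral.integral_smul, intervalIntegral.integral_smul, hH, hK]
    · simp only
      rw [intervalIntegral.integral_interval_sub_left, intervalIntegral.integral_interval_sub_left]
      · simp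
      all_goals first | exact hk.intervalIntegrable _ _ | exact hk2.intervalIntegrable _ _
    · exact (hk.const_smul _).intervalIntegrable _ _
    · exact (hk2.const_smul _).intervalIntegrable _ _
  have e2 : (∫ v in (0:ℝ)..1, (1:ℝ) • k (t + T * v)) = (1 / T) • (H (t + T) - H t) := by
    simp only [one_smul]
    rw [intervalIntegral.integral_comp_add_mul k hT.ne', hH]
    simp only
    rw [intervalIntegral.integral_interval_sub_left (hk.intervalIntegrable _ _)
      (hk.intervalIntegrable _ _)]
    simp
  rw [e1, e2]
  have dHT : HasDerivAt (fun t => H (t + T)) (k (t + T)) t := (dH (t + T)).comp_add_const t T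
  have dKT : HasDerivAt (fun t => K (t + T)) ((t + T) • k (t + T)) t :=
    (dK (t + T)).comp_add_const t T
  have dl : HasDerivAt (fun t : ℝ => 1 + t / T) (1 / T) t :=
    ((hasDerivAt_id t).div_const T).const_add 1
  have := ((dl.smul (dHT.sub (dH t))).sub ((dKT.sub (dK t)).const_smul (1 / T))).neg
  refine HasDerivAt.congr_deriv this ?_
  have hT' := hT.ne'
  rw [Pi.sub_apply]
  match_scalars <;> simp <;> field_simp <;> ring

theorem acv_mean_U {k : ℝ → F} (hk : Continuous k) (T : ℝ)
    (hm : ∀ ε > 0, ∃ S₀ > 0, ∀ S ≥ S₀, ∀ s : ℝ, ‖(1 / (2 * S)) • ∫ t in -S..S, k (t + s)‖ ≤ ε) :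
    Tendsto (fun S : ℝ => (1 / (2 * S)) • ∫ t in -S..S,
      -(T • ∫ v in (0:ℝ)..1, (1 - v) • k (t + T * v))) atTop (nhds 0) := by
  have key : ∀ S : ℝ, (1 / (2 * S)) • (∫ t in -S..S,
      -(T • ∫ v in (0:ℝ)..1, (1 - v) • k (t + T * v))) =
      -(T • ∫ v in (0:ℝ)..1, (1 - v) • ((1 / (2 * S)) • ∫ t in -S..S, k (t + T * v))) := by
    intro S
    rw [intervalIntegral.integral_neg, intervalIntegral.integral_smul,
      intervalIntegral_intervalIntegral_swap]
    · simp_rw [intervalIntegral.integral_smul]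
      rw [smul_neg, smul_comm, ← intervalIntegral.integral_smul]
      simp_rw [smul_comm (1 / (2 * S))]
    · have hc : Continuous (Function.uncurry fun (t v : ℝ) => (1 - v) • k (t + T * v)) := by
        have : Continuous fun p : ℝ × ℝ => k (p.1 + T * p.2) := hk.comp (by fun_prop)
        exact Continuous.smul (by fun_prop) this
      refine (hc.continuousOn.integrableOn_compact (K := Set.uIcc (-S) S ×ˢ Set.uIcc 0 1)
        (isCompact_uIcc.prod isCompact_uIcc)).mono_set ?_
      exact Set.prod_mono Set.uIoc_subset_uIcc Set.uIoc_subset_uIcc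
  simp_rw [key]
  rw [Metric.tendsto_atTop]
  intro ε hε
  obtain ⟨S₀, hS₀, h⟩ := hm (ε / (2 * (|T| + 1))) (by positivity)
  refine ⟨S₀, fun S hS => ?_⟩
  rw [dist_zero_right, norm_neg, norm_smul]
  have := intervalIntegral.norm_integral_le_of_norm_le_const (a := (0:ℝ)) (b := 1)
    (C := ε / (2 * (|T| + 1)))
    (f := fun v => (1 - v) • ((1 / (2 * S)) • ∫ t in -S..S, k (t + T * v))) (by
      intro v hv
      rw [Set.uIoc_of_le zero_le_one] at hv
      rw [norm_smul]
      have h1 : ‖1 - v‖ ≤ 1 := by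
        rw [Real.norm_eq_abs, abs_le]; constructor <;> linarith [hv.1, hv.2]
      calc _ ≤ 1 * (ε / (2 * (|T| + 1))) :=
            mul_le_mul h1 (h S hS _) (norm_nonneg _) zero_le_one
        _ = _ := one_mul _)
  simp only [sub_zero, abs_one, mul_one] at this
  calc _ ≤ ‖T‖ * (ε / (2 * (|T| + 1))) := by gcongr
    _ ≤ (|T| + 1) * (ε / (2 * (|T| + 1))) := by gcongr; rw [Real.norm_eq_abs]; linarith
    _ = ε / 2 := by field_simp
    _ < ε := by linarith

theorem acv_iff {Φ : ℝ → E → E} {y : ℝ → E} {S : Set E} (hy : ∀ t, y t ∈ S) {t : ℝ} {p : E}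
    {Q : E →L[ℝ] E}
    (hΦ : HasFDerivAt (fun q : ℝ × E => Φ q.1 q.2)
      ((ContinuousLinearMap.toSpanSingleton ℝ p).coprod Q) (t, y t))
    (hΦt : HasDerivAt (fun τ => Φ τ (y t)) p t)
    (hQ : ∀ v, ‖v‖ ≤ 2 * ‖Q v‖)
    (hanti : ∀ τ, ∀ z ∈ S, ∀ z' ∈ S, ‖z - z'‖ ≤ 2 * ‖Φ τ z - Φ τ z'‖)
    {c q : E} (hc : c = p + Q q) :
    HasDerivAt (fun τ => Φ τ (y τ)) c t ↔ HasDerivAt y q t := by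
  constructor
  · intro h
    have hO : (fun τ => y τ - y t) =O[nhds t] (fun τ => τ - t) := by
      have h1 := h.isBigO_sub
      have h2 := hΦt.isBigO_sub
      refine Asymptotics.IsBigO.trans (g := fun τ => (Φ τ (y τ) - Φ t (y t)) -
        (Φ τ (y t) - Φ t (y t))) ?_ (h1.sub h2)
      refine Asymptotics.IsBigO.of_bound 2 (Eventually.of_forall fun τ => ?_)
      rw [sub_sub_sub_cancel_right]
      exact hanti τ _ (hy τ) _ (hy t)
    have hcont : Tendsto y (nhds t) (nhds (y t)) := by
      have h0 : Tendsto (fun τ => y τ - y t) (nhds t) (nhds 0) := by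
        refine hO.trans_tendsto ?_
        have : Continuous fun τ : ℝ => τ - t := by fun_prop
        simpa using this.tendsto t
      simpa using h0.add_const (y t)
    have hpair : Tendsto (fun τ => (τ, y τ)) (nhds t) (nhds (t, y t)) :=
      tendsto_id.prodMk_nhds hcont
    have ho := (hasFDerivAt_iff_isLittleO.1 hΦ).comp_tendsto hpair
    have hO2 : (fun τ => ((τ, y τ) - (t, y t) : ℝ × E)) =O[nhds t] (fun τ => τ - t) := by
      simp only [Prod.mk_sub_mk]
      exact (Asymptotics.isBigO_refl _ _).prod_left hO
    have ho2 := ho.trans_isBigO hO2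
    have ho3 := hasDerivAt_iff_isLittleO.1 h
    have ho4 := ho3.sub ho2
    rw [hasDerivAt_iff_isLittleO]
    refine Asymptotics.IsBigO.trans_isLittleO ?_ ho4
    refine Asymptotics.IsBigO.of_bound 2 (Eventually.of_forall fun τ => ?_)
    refine (hQ _).trans_eq ?_
    congr 2
    simp [hc]
  · intro h
    have h1 : HasDerivAt (fun τ => (τ, y τ)) ((1:ℝ), q) t := (hasDerivAt_id t).prodMk h
    have := HasFDerivAt.comp_hasDerivAt t (f := fun τ => (τ, y τ)) hΦ h1
    have e : c = ((ContinuousLinearMap.toSpanSingleton ℝ p).coprod Q) ((1:ℝ), q) := by simp [hc]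
    rw [e]
    exact this

end more


section core

set_option linter.unusedSectionVars false
set_option linter.unusedVariables false

noncomputable def acvT (ν : ℝ) : ℝ := (Real.sqrt ν)⁻¹

theorem acvT_pos {ν : ℝ} (h : 0 < ν) : 0 < acvT ν := by
  unfold acvT; positivity

theorem acvT_mul {ν : ℝ} (h : 0 < ν) : ν * acvT ν = Real.sqrt ν := by
  unfold acvT
  rw [← div_eq_mul_inv, Real.div_sqrt]

theorem acvT_cont : ContinuousOn acvT (Set.Ioi 0) := by
  unfold acvT
  exact Real.continuous_sqrt.continuousOn.inv₀ fun x hx => (Real.sqrt_pos.2 hx).ne'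

variable {E F : Type*} [NormedAddCommGroup E] [NormedAddCommGroup F] [NormedSpace ℝ F]
  [NormedSpace ℝ E] {A : ℝ → Set ℝ}

noncomputable def acvU (h : ℝ → E → F) (t : ℝ) (x : E) (ν : ℝ) : F :=
  -(acvT ν • acvJ (fun v => 1 - v) h (acvT ν) t x)

noncomputable def acvUt (h : ℝ → E → F) (t : ℝ) (x : E) (ν : ℝ) : F :=
  h t x - acvJ (fun _ => 1) h (acvT ν) t x

theorem acv_w : Continuous (fun v : ℝ => 1 - v) := by fun_prop
theorem acv_w1 : ∀ v ∈ Set.Icc (0:ℝ) 1, |(fun v : ℝ => 1 - v) v| ≤ 1 := by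
  intro v hv
  rw [abs_le]; constructor <;> dsimp only <;> linarith [hv.1, hv.2]
theorem acv_c : Continuous (fun _ : ℝ => (1:ℝ)) := continuous_const
theorem acv_c1 : ∀ v ∈ Set.Icc (0:ℝ) 1, |(fun _ : ℝ => (1:ℝ)) v| ≤ 1 := by simp

theorem acvU_bound {h : ℝ → E → F} {S : Set E} {C : ℝ} (hC : ∀ t, ∀ x ∈ S, ‖h t x‖ ≤ C)
    {ν : ℝ} (hν : 0 < ν) (t : ℝ) {x : E} (hx : x ∈ S) :
    ‖ν • acvU h t x ν‖ ≤ Real.sqrt ν * C := by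
  unfold acvU
  rw [smul_neg, norm_neg, smul_smul, acvT_mul hν, norm_smul, Real.norm_of_nonneg (Real.sqrt_nonneg _)]
  gcongr
  exact AcvGood.J_norm_le acv_w1 _ _ fun t => hC t x hx

theorem acvU_cont {h : ℝ → E → F} {S : Set E} (hh : AcvGood A h S) (ν₀ : ℝ) :
    ContinuousOn (fun p : ℝ × E × ℝ => acvU h p.1 p.2.1 p.2.2) (Set.univ ×ˢ S ×ˢ Set.Ioc 0 ν₀) := by
  unfold acvU
  have hT : ContinuousOn (fun p : ℝ × E × ℝ => acvT p.2.2) (Set.univ ×ˢ S ×ˢ Set.Ioc 0 ν₀) :=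
    acvT_cont.comp (by fun_prop) fun p hp => hp.2.2.1
  refine (hT.smul ?_).neg
  exact (hh.J_contOn acv_w acv_w1).comp (f := fun p : ℝ × E × ℝ => (p.1, p.2.1, acvT p.2.2))
    (continuousOn_fst.prodMk ((continuous_fst.comp continuous_snd).continuousOn.prodMk hT))
    fun p hp => ⟨trivial, hp.2.1, trivial⟩

theorem acvUt_cont {h : ℝ → E → F} {S : Set E} (hh : AcvGood A h S) (ν₀ : ℝ) :
    ContinuousOn (fun p : ℝ × E × ℝ => acvUt h p.1 p.2.1 p.2.2)
      (Set.univ ×ˢ S ×ˢ Set.Ioc 0 ν₀) := by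
  unfold acvUt
  have hT : ContinuousOn (fun p : ℝ × E × ℝ => acvT p.2.2) (Set.univ ×ˢ S ×ˢ Set.Ioc 0 ν₀) :=
    acvT_cont.comp (by fun_prop) fun p hp => hp.2.2.1
  refine ContinuousOn.sub ?_ ?_
  · exact ((acv_uc_iff _ _).2 hh.2.1).continuousOn.comp (f := fun p : ℝ × E × ℝ => (p.1, p.2.1))
      (by fun_prop) fun p hp => ⟨trivial, hp.2.1⟩
  · exact (hh.J_contOn acv_c acv_c1).comp (f := fun p : ℝ × E × ℝ => (p.1, p.2.1, acvT p.2.2))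
      (continuousOn_fst.prodMk ((continuous_fst.comp continuous_snd).continuousOn.prodMk hT))
      fun p hp => ⟨trivial, hp.2.1, trivial⟩

theorem acvU_good [FiniteDimensional ℝ F] {h : ℝ → E → F} {S : Set E} (hA : Monotone A)
    (hh : AcvGood A h S) (ν : ℝ) : AcvGood A (fun t x => acvU h t x ν) S := by
  have := FiniteDimensional.proper_real F
  exact (hh.J_good acv_w acv_w1 (acvT ν)).cont_comp (Φ := fun z => -(acvT ν • z)) hA isClosed_univ
    (by fun_prop) fun _ _ _ => trivial

theorem acvUt_good [FiniteDimensional ℝ F] {h : ℝ → E → F} {S : Set E} (hA : Monotone A)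
    (hh : AcvGood A h S) (ν : ℝ) : AcvGood A (fun t x => acvUt h t x ν) S := by
  have := FiniteDimensional.proper_real F
  exact (hh.prod hA (hh.J_good acv_c acv_c1 (acvT ν))).cont_comp (Φ := fun z => z.1 - z.2) hA
    isClosed_univ (by fun_prop) fun _ _ _ => trivial

theorem acvU_t [CompleteSpace F] {h : ℝ → E → F} {S : Set E} (hh : AcvGood A h S) {x : E}
    (hx : x ∈ S) {ν : ℝ} (hν : 0 < ν) (t : ℝ) :
    HasDerivAt (fun τ => acvU h τ x ν) (acvUt h t x ν) t :=
  acv_U_deriv (hh.cont_t hx) (acvT_pos hν) t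

theorem acvU_x {h : ℝ → E → F} {h' : ℝ → E → E →L[ℝ] F} {S O : Set E}
    (hh : AcvGood A h S) (hh' : AcvGood A h' S) (hO : IsOpen O) (hOS : O ⊆ S)
    (hd : ∀ t, ∀ x ∈ O, HasFDerivAt (h t) (h' t x) x) (ν t : ℝ) {x : E} (hx : x ∈ O) :
    HasFDerivAt (fun x => acvU h t x ν) (acvU h' t x ν) x :=
  ((hh.J_hasFDerivAt hh' hO hOS hd acv_w acv_w1 (acvT ν) t hx).const_smul (acvT ν)).neg

theorem acvU_mean {h : ℝ → E → F} {S : Set E} (hh : AcvGood A h S) {x : E}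
    (hx : x ∈ S) (ν : ℝ)
    (hm : ∀ ε > 0, ∃ S₀ > 0, ∀ S ≥ S₀, ∀ s : ℝ, ‖(1 / (2 * S)) • ∫ t in -S..S, h (t + s) x‖ ≤ ε) :
    Tendsto (fun T : ℝ => (1 / (2 * T)) • ∫ t in -T..T, acvU h t x ν) atTop (nhds 0) :=
  acv_mean_U (hh.cont_t hx) (acvT ν) hm

theorem acvUt_mean [CompleteSpace F] [FiniteDimensional ℝ F] {h : ℝ → E → F} {S : Set E}
    (hA : Monotone A)
    (hh : AcvGood A h S) {x : E} (hx : x ∈ S) {ν : ℝ} (hν : 0 < ν) :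
    Tendsto (fun T : ℝ => (1 / (2 * T)) • ∫ t in -T..T, acvUt h t x ν) atTop (nhds 0) := by
  obtain ⟨C, hC⟩ := (acvU_good hA hh ν).1
  have e : ∀ T : ℝ, (∫ t in -T..T, acvUt h t x ν) = acvU h T x ν - acvU h (-T) x ν := by
    intro T
    refine intervalIntegral.integral_eq_sub_of_hasDerivAt (fun t _ => acvU_t hh hx hν t) ?_
    exact ((acvUt_good hA hh ν).cont_t hx).intervalIntegrable _ _
  simp_rw [e]
  have h1 : Tendsto (fun T : ℝ => (1 / (2 * T)) * (C + C)) atTop (nhds 0) := by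
    have : Tendsto (fun T : ℝ => 2 * T) atTop atTop := tendsto_id.const_mul_atTop two_pos
    have := (this.inv_tendsto_atTop).mul_const (C + C)
    simpa using this
  refine squeeze_zero_norm' ?_ h1
  filter_upwards [eventually_gt_atTop 0] with T hT
  rw [norm_smul, Real.norm_of_nonneg (by positivity)]
  gcongr
  exact (norm_sub_le _ _).trans (add_le_add (hC _ x hx) (hC _ x hx))

theorem acv_unit [CompleteSpace E] {B : E →L[ℝ] E} (hB : ‖B‖ ≤ 1 / 2) : IsUnit (1 + B) := by
  have := isUnit_one_sub_of_norm_lt_one (x := -B) (by rw [norm_neg]; linarith)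
  simpa using this

theorem acv_inv_cont [CompleteSpace E] :
    ContinuousOn (fun q : (E →L[ℝ] E) × E => Ring.inverse (1 + q.1) q.2) {q | ‖q.1‖ ≤ 1 / 2} := by
  intro q hq
  refine ContinuousAt.continuousWithinAt ?_
  obtain ⟨u, hu⟩ := acv_unit (B := q.1) hq
  have h1 : ContinuousAt (fun q : (E →L[ℝ] E) × E => Ring.inverse (1 + q.1)) q := by
    have h2 := NormedRing.inverse_continuousAt u
    rw [hu] at h2
    refine ContinuousAt.comp (g := Ring.inverse) (f := fun q : (E →L[ℝ] E) × E => 1 + q.1) h2 ?_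
    fun_prop
  exact h1.clm_apply continuousAt_snd

theorem acv_inv_apply [CompleteSpace E] {B : E →L[ℝ] E} (hB : ‖B‖ ≤ 1 / 2) (b : E) :
    (1 + B) (Ring.inverse (1 + B) b) = b := by
  have := Ring.mul_inverse_cancel _ (acv_unit hB)
  have := congrArg (fun L : E →L[ℝ] E => L b) this
  simpa using this

theorem acv_low {B : E →L[ℝ] E} (hB : ‖B‖ ≤ 1 / 2) (v : E) : ‖v‖ ≤ 2 * ‖(1 + B) v‖ := by
  have h1 : ‖B v‖ ≤ 1 / 2 * ‖v‖ := B.le_of_opNorm_le hB v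
  have h2 : v = (1 + B) v - B v := by simp
  have h3 := norm_sub_le ((1 + B) v) (B v)
  rw [← h2] at h3
  linarith

theorem acv_anti {r : ℝ} {u : E → E} {u' : E → E →L[ℝ] E}
    (hd : ∀ x ∈ closedBall (0:E) r, HasFDerivAt u (u' x) x)
    (hb : ∀ x ∈ closedBall (0:E) r, ‖u' x‖ ≤ 1 / 2) :
    ∀ z ∈ closedBall (0:E) r, ∀ z' ∈ closedBall (0:E) r,
      ‖z - z'‖ ≤ 2 * ‖(z + u z) - (z' + u z')‖ := by
  intro z hz z' hz'
  have h1 := (convex_closedBall (0:E) r).norm_image_sub_le_of_norm_hasFDerivWithin_le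
    (fun y hy => (hd y hy).hasFDerivWithinAt) hb hz' hz
  have h2 : z - z' = ((z + u z) - (z' + u z')) - (u z - u z') := by abel
  have h3 := norm_sub_le ((z + u z) - (z' + u z')) (u z - u z')
  rw [← h2] at h3
  linarith

theorem acv_hcomp {G : Type*} [NormedAddCommGroup G] {S O : Set E} (hO : IsOpen O) (hOS : O ⊆ S)
    {ν : ℝ} (hν : 0 < ν) (t : ℝ) {x : E} (hx : x ∈ O) (k : ℝ × E × ℝ → G)
    (hk : ContinuousOn k (Set.univ ×ˢ S ×ˢ Set.Ioc 0 ν)) :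
    ContinuousAt (fun v : ℝ × E => k (v.1, v.2, ν)) (t, x) := by
  have : ContinuousOn (fun v : ℝ × E => k (v.1, v.2, ν)) (Set.univ ×ˢ O) :=
    hk.comp (f := fun v : ℝ × E => (v.1, v.2, ν)) (by fun_prop)
      fun v hv => ⟨trivial, hOS hv.2, hν, le_rfl⟩
  exact this.continuousAt ((isOpen_univ.prod hO).mem_nhds ⟨trivial, hx⟩)

theorem acvU_joint [CompleteSpace F] {h : ℝ → E → F} {h' : ℝ → E → E →L[ℝ] F} {S O : Set E}
    (hh : AcvGood A h S) (hh' : AcvGood A h' S) (hO : IsOpen O) (hOS : O ⊆ S)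
    (hd : ∀ t, ∀ x ∈ O, HasFDerivAt (h t) (h' t x) x) {ν : ℝ} (hν : 0 < ν) (t : ℝ) {x : E}
    (hx : x ∈ O) :
    HasFDerivAt (fun q : ℝ × E => acvU h q.1 q.2 ν)
      ((ContinuousLinearMap.toSpanSingleton ℝ (acvUt h t x ν)).coprod (acvU h' t x ν)) (t, x) := by
  have hn : ∀ᶠ v in nhds ((t, x) : ℝ × E), v.2 ∈ O :=
    continuousAt_snd.eventually (hO.mem_nhds hx)
  have := hasStrictFDerivAt_uncurry_coprod (𝕜 := ℝ) (u := (t, x)) (f := fun τ z => acvU h τ z ν)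
    (f₁ := fun τ z => ContinuousLinearMap.toSpanSingleton ℝ (acvUt h τ z ν))
    (f₂ := fun τ z => acvU h' τ z ν) ?_ ?_ ?_ ?_
  · exact this.hasFDerivAt
  · filter_upwards [hn] with v hv
    exact (acvU_t hh (hOS hv) hν v.1).hasFDerivAt
  · filter_upwards [hn] with v hv
    exact acvU_x hh hh' hO hOS hd ν v.1 hv
  · have h1 := acv_hcomp hO hOS hν t hx _ (acvUt_cont hh ν)
    exact (ContinuousLinearMap.toSpanSingletonCLE (𝕜 := ℝ) (E := F)).continuous.continuousAt.comp h1
  · exact acv_hcomp hO hOS hν t hx _ (acvU_cont hh' ν)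

end core


theorem acv_small {C ε ν : ℝ} (hC : 0 ≤ C) (hε : 0 < ε) (hν : ν ≤ (ε / (C + 1)) ^ 2) :
    Real.sqrt ν * C ≤ ε := by
  have h1 : Real.sqrt ν ≤ ε / (C + 1) := Real.sqrt_le_left (by positivity) |>.2 hν
  calc _ ≤ ε / (C + 1) * (C + 1) := by gcongr; linarith
    _ = ε := by field_simp

theorem acvT_large {T₀ ν : ℝ} (hT : 0 < T₀) (hν0 : 0 < ν) (hν : ν ≤ (1 / T₀) ^ 2) :
    T₀ ≤ acvT ν := by
  have h1 : Real.sqrt ν ≤ 1 / T₀ := Real.sqrt_le_left (by positivity) |>.2 hν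
  unfold acvT
  rw [le_inv_comm₀ hT (Real.sqrt_pos.2 hν0)]
  simpa using h1

theorem acv_exists_A {E F : Type*} [NormedAddCommGroup E] [NormedAddCommGroup F]
    (f : ℝ → E → F) (S : Set E) (h : RAPUniform f S) :
    ∃ A : ℝ → Set ℝ, Monotone A ∧ (∀ δ > 0, RelativelyDense (A δ)) ∧ AcvGood A f S :=
  ⟨AcvTr f S, acvTr_mono f S, fun δ hδ => acv_tr_dense f S h δ hδ,
    ⟨h.1, (acv_uc_iff f S).1 h.2.1, fun ε hε => ⟨ε, hε, fun τ h => h⟩⟩⟩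

theorem acvGood_inv {E D : Type*} [NormedAddCommGroup E] [NormedSpace ℝ E] [NormedAddCommGroup D]
    [FiniteDimensional ℝ E] {A : ℝ → Set ℝ} (hA : Monotone A) {S : Set D}
    {B : ℝ → D → E →L[ℝ] E} {w g : ℝ → D → E} (hB : AcvGood A B S) (hw : AcvGood A w S)
    (hg : AcvGood A g S) (hb : ∀ t, ∀ x ∈ S, ‖B t x‖ ≤ 1 / 2) :
    AcvGood A (fun t x => Ring.inverse (1 + B t x) (w t x) - g t x) S := by
  have : CompleteSpace E := FiniteDimensional.complete ℝ E
  have : ProperSpace E := FiniteDimensional.proper_real _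
  have : ProperSpace (E →L[ℝ] E) := FiniteDimensional.proper_real _
  have hcl : IsClosed {q : (E →L[ℝ] E) × E | ‖q.1‖ ≤ 1 / 2} :=
    isClosed_le (by fun_prop) continuous_const
  have g8 : AcvGood A (fun t x => Ring.inverse (1 + B t x) (w t x)) S :=
    AcvGood.cont_comp (Φ := fun q : (E →L[ℝ] E) × E => Ring.inverse (1 + q.1) q.2)
      (g := fun t x => (B t x, w t x)) (P := {q | ‖q.1‖ ≤ 1 / 2}) hA hcl
      acv_inv_cont (hB.prod hA hw) hb
  exact AcvGood.cont_comp (Φ := fun z : E × E => z.1 - z.2)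
      (g := fun t x => (Ring.inverse (1 + B t x) (w t x), g t x)) (P := Set.univ) hA
      isClosed_univ (by fun_prop) (g8.prod hA hg) fun _ _ _ => trivial


set_option maxHeartbeats 1000000 in
/-- Lemma 3.4: the averaging change of variables
`x = y + ν·U(t,y,ν)` for `x' = ν f_ν(t,x)`. -/
theorem averaging_change_of_variables {n : ℕ} (r₀ νbar : ℝ)
    (hr₀ : 0 < r₀) (hνbar : 0 < νbar)
    (f : ℝ → EuclideanSpace ℝ (Fin n) → ℝ → EuclideanSpace ℝ (Fin n))
    (f₀ : EuclideanSpace ℝ (Fin n) → EuclideanSpace ℝ (Fin n))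
    (hcont : ContinuousOn
      (fun p : ℝ × EuclideanSpace ℝ (Fin n) × ℝ => f p.1 p.2.1 p.2.2)
      (Set.univ ×ˢ Metric.closedBall 0 r₀ ×ˢ Set.Icc 0 νbar))
    (hRAP : RAPUniform (fun t (p : EuclideanSpace ℝ (Fin n) × ℝ) => f t p.1 p.2)
      (Metric.closedBall 0 r₀ ×ˢ Set.Icc 0 νbar))
    (hdiff : ∀ t : ℝ, ∀ ν ∈ Set.Icc (0:ℝ) νbar,
      ∀ x ∈ Metric.ball (0 : EuclideanSpace ℝ (Fin n)) r₀,
      DifferentiableAt ℝ (fun y => f t y ν) x)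
    (hdcont : ∀ ε > 0, ∃ δ > 0, ∀ t : ℝ, ∀ ν ∈ Set.Icc (0:ℝ) νbar,
      ∀ x ∈ Metric.ball (0 : EuclideanSpace ℝ (Fin n)) r₀,
      ∀ y ∈ Metric.ball (0 : EuclideanSpace ℝ (Fin n)) r₀, ‖x - y‖ < δ →
      ‖fderiv ℝ (fun z => f t z ν) x - fderiv ℝ (fun z => f t z ν) y‖ ≤ ε)
    (havg : ∀ ε > 0, ∃ T₀ > 0, ∀ T ≥ T₀, ∀ s : ℝ,
      ∀ x ∈ Metric.closedBall (0 : EuclideanSpace ℝ (Fin n)) r₀,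
      ‖(1 / (2 * T)) • (∫ t in -T..T, f (t + s) x 0) - f₀ x‖ ≤ ε) :
    ∀ r, 0 < r → r < r₀ → ∃ ν₀ > 0, ν₀ ≤ νbar ∧
      ∃ (U Ut F : ℝ → EuclideanSpace ℝ (Fin n) → ℝ → EuclideanSpace ℝ (Fin n))
        (Ux Gx : ℝ → EuclideanSpace ℝ (Fin n) → ℝ →
          (EuclideanSpace ℝ (Fin n) →L[ℝ] EuclideanSpace ℝ (Fin n))),
        -- U is continuous on ℝ × B[0,r] × (0,ν₀]
        ContinuousOn (fun p : ℝ × EuclideanSpace ℝ (Fin n) × ℝ => U p.1 p.2.1 p.2.2)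
          (Set.univ ×ˢ Metric.closedBall 0 r ×ˢ Set.Ioc 0 ν₀) ∧
        -- (1) for each ν, U(·,·,ν) is RAP in t uniformly in x and has a mean value
        (∀ ν ∈ Set.Ioc (0:ℝ) ν₀,
          RAPUniform (fun t x => U t x ν) (Metric.closedBall 0 r) ∧
          ∀ x ∈ Metric.closedBall (0 : EuclideanSpace ℝ (Fin n)) r,
            ∃ m : EuclideanSpace ℝ (Fin n),
              Filter.Tendsto (fun T : ℝ => (1 / (2 * T)) • ∫ t in -T..T, U t x ν)
                Filter.atTop (nhds m)) ∧
        -- (2) ∂U/∂t and ∂U/∂x exist, are continuous, RAP in t, and have mean values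
        (∀ ν ∈ Set.Ioc (0:ℝ) ν₀,
          ∀ x ∈ Metric.closedBall (0 : EuclideanSpace ℝ (Fin n)) r, ∀ t : ℝ,
          HasDerivAt (fun τ => U τ x ν) (Ut t x ν) t ∧
          HasFDerivAt (fun y => U t y ν) (Ux t x ν) x) ∧
        ContinuousOn (fun p : ℝ × EuclideanSpace ℝ (Fin n) × ℝ => Ut p.1 p.2.1 p.2.2)
          (Set.univ ×ˢ Metric.closedBall 0 r ×ˢ Set.Ioc 0 ν₀) ∧
        ContinuousOn (fun p : ℝ × EuclideanSpace ℝ (Fin n) × ℝ => Ux p.1 p.2.1 p.2.2)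
          (Set.univ ×ˢ Metric.closedBall 0 r ×ˢ Set.Ioc 0 ν₀) ∧
        (∀ ν ∈ Set.Ioc (0:ℝ) ν₀,
          RAPUniform (fun t x => Ut t x ν) (Metric.closedBall 0 r) ∧
          RAPUniform (fun t x => Ux t x ν) (Metric.closedBall 0 r) ∧
          ∀ x ∈ Metric.closedBall (0 : EuclideanSpace ℝ (Fin n)) r,
            ∃ m : EuclideanSpace ℝ (Fin n),
              Filter.Tendsto (fun T : ℝ => (1 / (2 * T)) • ∫ t in -T..T, Ut t x ν)
                Filter.atTop (nhds m)) ∧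
        -- (3) G := ∂U/∂t − f(·,·,0) + f₀ has x-derivative Gx, and
        -- ν·U, ν·∂U/∂x, G, ∂G/∂x all tend to 0 as ν → 0⁺, uniformly
        (∀ ν ∈ Set.Ioc (0:ℝ) ν₀,
          ∀ x ∈ Metric.closedBall (0 : EuclideanSpace ℝ (Fin n)) r, ∀ t : ℝ,
          HasFDerivAt (fun y => Ut t y ν - f t y 0 + f₀ y) (Gx t x ν) x) ∧
        (∀ ε > 0, ∃ ν₁ > 0, ∀ ν ∈ Set.Ioc (0:ℝ) ν₀, ν ≤ ν₁ → ∀ t : ℝ,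
          ∀ x ∈ Metric.closedBall (0 : EuclideanSpace ℝ (Fin n)) r,
          ‖ν • U t x ν‖ ≤ ε ∧ ‖ν • Ux t x ν‖ ≤ ε ∧
          ‖Ut t x ν - f t x 0 + f₀ x‖ ≤ ε ∧ ‖Gx t x ν‖ ≤ ε) ∧
        -- (4) the change of variables x = y + ν U(t,y,ν) is invertible and
        -- transforms x' = ν f_ν(t,x) into y' = ν f₀(y) + ν F_ν(t,y)
        (∀ ν ∈ Set.Ioc (0:ℝ) ν₀,
          (∀ t : ℝ, Set.InjOn (fun y => y + ν • U t y ν) (Metric.closedBall 0 r)) ∧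
          RAPUniform (fun t x => F t x ν) (Metric.closedBall 0 r) ∧
          (∀ y : ℝ → EuclideanSpace ℝ (Fin n),
            (∀ t, y t ∈ Metric.closedBall (0 : EuclideanSpace ℝ (Fin n)) r) →
            ∀ t : ℝ,
              HasDerivAt (fun τ => y τ + ν • U τ (y τ) ν)
                (ν • f t (y t + ν • U t (y t) ν) ν) t ↔
              HasDerivAt y (ν • f₀ (y t) + ν • F t (y t) ν) t)) ∧
        (∀ ε > 0, ∃ ν₂ > 0, ∀ ν ∈ Set.Ioc (0:ℝ) ν₀, ν ≤ ν₂ → ∀ t : ℝ,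
          ∀ x ∈ Metric.closedBall (0 : EuclideanSpace ℝ (Fin n)) r,
          ‖F t x ν‖ ≤ ε) := by
  intro r hr hrr
  obtain ⟨A, hA, hAd, hfG⟩ := acv_exists_A
    (fun t (p : EuclideanSpace ℝ (Fin n) × ℝ) => f t p.1 p.2)
    (closedBall 0 r₀ ×ˢ Set.Icc 0 νbar) hRAP
  have hgG : AcvGood A (fun t x => f t x 0) (closedBall 0 r₀) :=
    AcvGood.comp (f := fun t (p : EuclideanSpace ℝ (Fin n) × ℝ) => f t p.1 p.2)
      (g := fun _ x => (x, (0:ℝ))) hA hfG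
      (acvGood_const (f := fun x : EuclideanSpace ℝ (Fin n) => (x, (0:ℝ)))
      (isCompact_closedBall 0 r₀) (by fun_prop)) fun t x hx => ⟨hx, le_rfl, hνbar.le⟩
  obtain ⟨ρ, hρ1, hρ⟩ := exists_between hrr
  obtain ⟨σ, hσ1, hσ⟩ := exists_between hρ1
  obtain ⟨r₁, hr₁, hr₁σ⟩ := exists_between hσ1
  have h00 : (0:ℝ) ∈ Set.Icc 0 νbar := ⟨le_rfl, hνbar.le⟩
  have hgd : ∀ t, ∀ x ∈ ball (0 : EuclideanSpace ℝ (Fin n)) r₀,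
      HasFDerivAt (fun y => f t y 0) (fderiv ℝ (fun y => f t y 0) x) x :=
    fun t x hx => (hdiff t 0 h00 x hx).hasFDerivAt
  have hgG' : AcvGood A (fun t x => fderiv ℝ (fun y => f t y 0) x) (closedBall 0 ρ) := by
    refine AcvGood.deriv hρ hgG hgd ?_
    intro ε hε
    obtain ⟨δ, hδ, h⟩ := hdcont ε hε
    exact ⟨δ, hδ, fun t x hx y hy => h t 0 h00 x hx y hy⟩
  have hmean : ∀ ε > 0, ∃ T₀ > 0, ∀ T ≥ T₀, ∀ t,
      ∀ x ∈ closedBall (0 : EuclideanSpace ℝ (Fin n)) r₀,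
      ‖acvJ (fun _ => 1) (fun t x => f t x 0) T t x - f₀ x‖ ≤ ε := by
    intro ε hε
    obtain ⟨T₀, hT₀, h⟩ := havg ε hε
    refine ⟨2 * T₀, by positivity, fun T hT t x hx => ?_⟩
    have hTp : 0 < T := by linarith
    have := h (T / 2) (by linarith) (t + T / 2) x hx
    convert this using 3
    unfold acvJ
    simp only [one_smul]
    rw [intervalIntegral.integral_comp_add_mul (fun s => f s x 0) hTp.ne',
      intervalIntegral.integral_comp_add_right (fun s => f s x 0)]
    congr 1
    · field_simp
    · congr 1 <;> ring
  obtain ⟨f₀', hf₀d, hf₀c, hmean'⟩ := acv_mean_deriv (g₀ := f₀) hσ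
    (hgG.mono (closedBall_subset_closedBall hρ.le)) hgG'
    (fun t x hx => hgd t x (ball_subset_ball hρ.le hx))
    (fun ε hε => by
      obtain ⟨T₀, hT₀, h⟩ := hmean ε hε
      exact ⟨T₀, hT₀, fun T hT t x hx => h T hT t x (closedBall_subset_closedBall hρ.le hx)⟩)
  have s1 : closedBall (0 : EuclideanSpace ℝ (Fin n)) r₁ ⊆ ball 0 σ := closedBall_subset_ball hr₁σ
  have s1' : closedBall (0 : EuclideanSpace ℝ (Fin n)) r₁ ⊆ closedBall 0 σ :=
    s1.trans ball_subset_closedBall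
  have s2 : closedBall (0 : EuclideanSpace ℝ (Fin n)) r₁ ⊆ closedBall 0 ρ :=
    closedBall_subset_closedBall (by linarith)
  have s3 : closedBall (0 : EuclideanSpace ℝ (Fin n)) r₁ ⊆ closedBall 0 r₀ :=
    closedBall_subset_closedBall (by linarith)
  have s4 : closedBall (0 : EuclideanSpace ℝ (Fin n)) r₁ ⊆ ball 0 r₀ :=
    closedBall_subset_ball (by linarith)
  have s5 : closedBall (0 : EuclideanSpace ℝ (Fin n)) r ⊆ ball 0 r₁ := closedBall_subset_ball hr₁
  have s6 : ball (0 : EuclideanSpace ℝ (Fin n)) r₁ ⊆ closedBall 0 r₁ := ball_subset_closedBall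
  have s7 : closedBall (0 : EuclideanSpace ℝ (Fin n)) r ⊆ closedBall 0 r₁ := s5.trans s6
  have hf₀C : ContinuousOn f₀ (closedBall 0 r₁) := fun x hx =>
    (hf₀d x (s1 hx)).continuousAt.continuousWithinAt
  have hf₀G : AcvGood A (fun _ x => f₀ x) (closedBall 0 r₁) :=
    acvGood_const (isCompact_closedBall 0 r₁) hf₀C
  have hf₀G' : AcvGood A (fun _ x => f₀' x) (closedBall 0 r₁) :=
    acvGood_const (isCompact_closedBall 0 r₁) (hf₀c.mono s1')
  obtain ⟨h, hh⟩ : ∃ h : ℝ → EuclideanSpace ℝ (Fin n) → EuclideanSpace ℝ (Fin n),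
    h = fun t x => f t x 0 - f₀ x := ⟨_, rfl⟩
  obtain ⟨h', hh'⟩ : ∃ h' : ℝ → EuclideanSpace ℝ (Fin n) →
      EuclideanSpace ℝ (Fin n) →L[ℝ] EuclideanSpace ℝ (Fin n),
    h' = fun t x => fderiv ℝ (fun y => f t y 0) x - f₀' x := ⟨_, rfl⟩
  have hpr : ProperSpace (EuclideanSpace ℝ (Fin n) →L[ℝ] EuclideanSpace ℝ (Fin n)) :=
    FiniteDimensional.proper_real _
  have hG : AcvGood A h (closedBall 0 r₁) := by
    rw [hh]
    exact ((hgG.mono s3).prod hA hf₀G).cont_comp (Φ := fun z => z.1 - z.2) hA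
      isClosed_univ (by fun_prop) fun _ _ _ => trivial
  have hG' : AcvGood A h' (closedBall 0 r₁) := by
    rw [hh']
    exact ((hgG'.mono s2).prod hA hf₀G').cont_comp (Φ := fun z => z.1 - z.2) hA
      isClosed_univ (by fun_prop) fun _ _ _ => trivial
  have hd : ∀ t, ∀ x ∈ ball (0 : EuclideanSpace ℝ (Fin n)) r₁, HasFDerivAt (h t) (h' t x) x := by
    intro t x hx
    rw [hh, hh']
    exact (hgd t x (s4 (s6 hx))).sub (hf₀d x (s1 (s6 hx)))
  -- means
  have hJ : ∀ ε > 0, ∃ T₀ > 0, ∀ T ≥ T₀, ∀ t,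
      ∀ x ∈ closedBall (0 : EuclideanSpace ℝ (Fin n)) r₁, ‖acvJ (fun _ => 1) h T t x‖ ≤ ε := by
    intro ε hε
    obtain ⟨T₀, hT₀, hm⟩ := hmean ε hε
    refine ⟨T₀, hT₀, fun T hT t x hx => ?_⟩
    have := hm T hT t x (s3 hx)
    convert this using 2
    unfold acvJ
    simp only [hh, one_smul]
    have hc : Continuous fun v : ℝ => f (t + T * v) x 0 :=
      (hgG.cont_t (s3 hx)).comp (g := fun t => f t x 0) (by fun_prop)
    rw [intervalIntegral.integral_sub (hc.intervalIntegrable _ _) (by simp)]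
    simp
  have hJ' : ∀ ε > 0, ∃ T₀ > 0, ∀ T ≥ T₀, ∀ t,
      ∀ x ∈ closedBall (0 : EuclideanSpace ℝ (Fin n)) r₁, ‖acvJ (fun _ => 1) h' T t x‖ ≤ ε := by
    intro ε hε
    obtain ⟨T₀, hT₀, hm⟩ := hmean' ε hε
    refine ⟨T₀, hT₀, fun T hT t x hx => ?_⟩
    have := hm T hT t x (s1' hx)
    convert this using 2
    unfold acvJ
    simp only [hh', one_smul]
    have hc : Continuous fun v : ℝ => fderiv ℝ (fun y => f (t + T * v) y 0) x :=
      (hgG'.cont_t (s2 hx)).comp (g := fun t => fderiv ℝ (fun y => f t y 0) x) (by fun_prop)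
    rw [intervalIntegral.integral_sub (hc.intervalIntegrable _ _) (by simp)]
    simp
  have hM : ∀ x ∈ closedBall (0 : EuclideanSpace ℝ (Fin n)) r₁, ∀ ε > 0, ∃ S₀ > 0, ∀ S ≥ S₀,
      ∀ s : ℝ, ‖(1 / (2 * S)) • ∫ t in -S..S, h (t + s) x‖ ≤ ε := by
    intro x hx ε hε
    obtain ⟨T₀, hT₀, hm⟩ := havg ε hε
    refine ⟨T₀, hT₀, fun T hT s => ?_⟩
    have hTp : T ≠ 0 := by linarith [hT₀] |> fun (h : 0 < T) => h.ne'
    have := hm T hT s x (s3 hx)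
    convert this using 2
    simp only [hh]
    have hc : Continuous fun v : ℝ => f (v + s) x 0 :=
      (hgG.cont_t (s3 hx)).comp (g := fun t => f t x 0) (by fun_prop)
    rw [intervalIntegral.integral_sub (hc.intervalIntegrable _ _) (by simp), smul_sub]
    congr 1
    rw [intervalIntegral.integral_const, smul_smul]
    have : 1 / (2 * T) * (T - -T) = 1 := by field_simp; ring
    rw [this, one_smul]
  -- bounds
  obtain ⟨C, hC0, hC⟩ : ∃ C, 0 ≤ C ∧ ∀ t, ∀ x ∈ closedBall (0 : EuclideanSpace ℝ (Fin n)) r₁,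
      ‖h t x‖ ≤ C := by
    obtain ⟨C, hC⟩ := hG.1
    exact ⟨max C 0, le_max_right _ _, fun t x hx => (hC t x hx).trans (le_max_left _ _)⟩
  obtain ⟨C', hC0', hC'⟩ : ∃ C, 0 ≤ C ∧ ∀ t, ∀ x ∈ closedBall (0 : EuclideanSpace ℝ (Fin n)) r₁,
      ‖h' t x‖ ≤ C := by
    obtain ⟨C, hC⟩ := hG'.1
    exact ⟨max C 0, le_max_right _ _, fun t x hx => (hC t x hx).trans (le_max_left _ _)⟩
  have hd0 : 0 < r₀ - r := by linarith
  obtain ⟨ν₀, hν₀⟩ : ∃ ν₀, ν₀ = min νbar (min (((r₀ - r) / (C + 1)) ^ 2) (((1 / 2) / (C' + 1)) ^ 2)) :=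
    ⟨_, rfl⟩
  have hν₀p : 0 < ν₀ := by rw [hν₀]; positivity
  have hν₀b : ν₀ ≤ νbar := by rw [hν₀]; exact min_le_left _ _
  have hb1 : ∀ ν ∈ Set.Ioc (0:ℝ) ν₀, ∀ t, ∀ x ∈ closedBall (0 : EuclideanSpace ℝ (Fin n)) r,
      ‖ν • acvU h t x ν‖ ≤ r₀ - r := fun ν hν t x hx =>
    (acvU_bound hC hν.1 t (s7 hx)).trans (acv_small hC0 hd0 (hν.2.trans (by
      rw [hν₀]; exact (min_le_right _ _).trans (min_le_left _ _))))
  have hb2 : ∀ ν ∈ Set.Ioc (0:ℝ) ν₀, ∀ t, ∀ x ∈ closedBall (0 : EuclideanSpace ℝ (Fin n)) r,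
      ‖ν • acvU h' t x ν‖ ≤ 1 / 2 := fun ν hν t x hx =>
    (acvU_bound hC' hν.1 t (s7 hx)).trans (acv_small hC0' (by norm_num) (hν.2.trans (by
      rw [hν₀]; exact (min_le_right _ _).trans (min_le_right _ _))))
  have hin : ∀ ν ∈ Set.Ioc (0:ℝ) ν₀, ∀ t, ∀ x ∈ closedBall (0 : EuclideanSpace ℝ (Fin n)) r,
      (x + ν • acvU h t x ν, ν) ∈ (closedBall (0 : EuclideanSpace ℝ (Fin n)) r₀ ×ˢ Set.Icc 0 νbar) := by
    intro ν hν t x hx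
    refine ⟨?_, hν.1.le, hν.2.trans hν₀b⟩
    have h1 := hb1 ν hν t x hx
    rw [mem_closedBall, dist_zero_right] at hx ⊢
    exact (norm_add_le _ _).trans (by linarith)
  have hUx : ∀ ν t, ∀ x ∈ closedBall (0 : EuclideanSpace ℝ (Fin n)) r,
      HasFDerivAt (fun y => acvU h t y ν) (acvU h' t x ν) x := fun ν t x hx =>
    acvU_x hG hG' isOpen_ball s6 hd ν t (s5 hx)
  have hanti : ∀ ν ∈ Set.Ioc (0:ℝ) ν₀, ∀ t, ∀ z ∈ closedBall (0 : EuclideanSpace ℝ (Fin n)) r,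
      ∀ z' ∈ closedBall (0 : EuclideanSpace ℝ (Fin n)) r,
      ‖z - z'‖ ≤ 2 * ‖(z + ν • acvU h t z ν) - (z' + ν • acvU h t z' ν)‖ := fun ν hν t =>
    acv_anti (u := fun z => ν • acvU h t z ν) (u' := fun z => ν • acvU h' t z ν)
      (fun x hx => (hUx ν t x hx).const_smul ν) (hb2 ν hν t)
  have hGe : ∀ t x ν, acvUt h t x ν - f t x 0 + f₀ x = -acvJ (fun _ => 1) h (acvT ν) t x := by
    intro t x ν
    have e : h t x = f t x 0 - f₀ x := by rw [hh]
    unfold acvUt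
    rw [e]; abel
  have hsm : ∀ ε > 0, ∃ ν₁ > 0, ∀ ν ∈ Set.Ioc (0:ℝ) ν₀, ν ≤ ν₁ → ∀ t : ℝ,
      ∀ x ∈ Metric.closedBall (0 : EuclideanSpace ℝ (Fin n)) r,
      ‖ν • acvU h t x ν‖ ≤ ε ∧ ‖ν • acvU h' t x ν‖ ≤ ε ∧
      ‖acvUt h t x ν - f t x 0 + f₀ x‖ ≤ ε ∧ ‖-acvJ (fun _ => 1) h' (acvT ν) t x‖ ≤ ε := by
    intro ε hε
    obtain ⟨T₁, hT₁, h1⟩ := hJ ε hε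
    obtain ⟨T₂, hT₂, h2⟩ := hJ' ε hε
    refine ⟨min (min ((ε / (C + 1)) ^ 2) ((ε / (C' + 1)) ^ 2)) (min ((1 / T₁) ^ 2) ((1 / T₂) ^ 2)),
      by positivity, fun ν hν hν1 t x hx => ?_⟩
    simp only [le_min_iff] at hν1
    refine ⟨(acvU_bound hC hν.1 t (s7 hx)).trans (acv_small hC0 hε hν1.1.1),
      (acvU_bound hC' hν.1 t (s7 hx)).trans (acv_small hC0' hε hν1.1.2), ?_, ?_⟩
    · rw [hGe, norm_neg]
      exact h1 _ (acvT_large hT₁ hν.1 hν1.2.1) t x (s7 hx)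
    · rw [norm_neg]
      exact h2 _ (acvT_large hT₂ hν.1 hν1.2.2) t x (s7 hx)
  refine ⟨ν₀, hν₀p, hν₀b, acvU h, acvUt h, fun t x ν => Ring.inverse (1 + ν • acvU h' t x ν)
    (f t (x + ν • acvU h t x ν) ν - acvUt h t x ν) - f₀ x, acvU h',
    fun t x ν => -acvJ (fun _ => 1) h' (acvT ν) t x, acvU_cont (hG.mono s7) ν₀, ?_, ?_,
    acvUt_cont (hG.mono s7) ν₀, acvU_cont (hG'.mono s7) ν₀, ?_, ?_, hsm, ?_, ?_⟩
  · exact fun ν hν => ⟨(acvU_good hA (hG.mono s7) ν).rap hAd, fun x hx =>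
      ⟨0, acvU_mean hG (s7 hx) ν (hM x (s7 hx))⟩⟩
  · exact fun ν hν x hx t => ⟨acvU_t hG (s7 hx) hν.1 t, hUx ν t x hx⟩
  · exact fun ν hν => ⟨(acvUt_good hA (hG.mono s7) ν).rap hAd,
      (acvU_good hA (hG'.mono s7) ν).rap hAd, fun x hx => ⟨0, acvUt_mean hA hG (s7 hx) hν.1⟩⟩
  · intro ν hν x hx t
    simp_rw [hGe]
    exact (hG.J_hasFDerivAt hG' isOpen_ball s6 hd acv_c acv_c1 (acvT ν) t (s5 hx)).neg
  · intro ν hν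
    refine ⟨fun t z hz z' hz' he => ?_, ?_, ?_⟩
    · have h1 := hanti ν hν t z hz z' hz'
      dsimp only at he
      rw [he, sub_self, norm_zero, mul_zero] at h1
      exact sub_eq_zero.1 (norm_le_zero_iff.1 h1)
    · refine AcvGood.rap (A := A) ?_ hAd
      have g1 := acvU_good hA (hG.mono s7) ν
      have g2 := acvU_good hA (hG'.mono s7) ν
      have g3 := acvUt_good hA (hG.mono s7) ν
      have gid : AcvGood A (fun _ x => x) (closedBall (0 : EuclideanSpace ℝ (Fin n)) r) :=
        acvGood_const (isCompact_closedBall 0 r) continuousOn_id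
      have g4 : AcvGood A (fun t x => (x + ν • acvU h t x ν, ν))
          (closedBall (0 : EuclideanSpace ℝ (Fin n)) r) :=
        (gid.prod hA g1).cont_comp (Φ := fun z => (z.1 + ν • z.2, ν)) hA isClosed_univ
          (by fun_prop) fun _ _ _ => trivial
      have g5 := hfG.comp hA g4 (hin ν hν)
      have g6 : AcvGood A (fun t x => f t (x + ν • acvU h t x ν) ν - acvUt h t x ν)
          (closedBall (0 : EuclideanSpace ℝ (Fin n)) r) :=
        (g5.prod hA g3).cont_comp (Φ := fun z => z.1 - z.2) hA
          isClosed_univ (by fun_prop) fun _ _ _ => trivial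
      have g7 : AcvGood A (fun t x => ν • acvU h' t x ν)
          (closedBall (0 : EuclideanSpace ℝ (Fin n)) r) :=
        g2.cont_comp (Φ := fun z => ν • z) hA isClosed_univ (by fun_prop) fun _ _ _ => trivial
      exact acvGood_inv (B := fun t x => ν • acvU h' t x ν)
        (w := fun t x => f t (x + ν • acvU h t x ν) ν - acvUt h t x ν) (g := fun _ x => f₀ x)
        hA g7 g6 (hf₀G.mono s7) (hb2 ν hν)
    · intro y hy t
      refine acv_iff (Φ := fun τ z => z + ν • acvU h τ z ν) (p := ν • acvUt h t (y t) ν)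
        (Q := 1 + ν • acvU h' t (y t) ν) hy ?_ ?_ (acv_low (hb2 ν hν t _ (hy t)))
        (hanti ν hν) ?_
      · have h1 := (acvU_joint hG hG' isOpen_ball s6 hd hν.1 t (s5 (hy t))).const_smul ν
        have h2 := (hasFDerivAt_snd (𝕜 := ℝ) (p := (t, y t))).add h1
        refine HasFDerivAt.congr_fderiv h2 ?_
        ext q <;> simp
      · exact ((acvU_t hG (s7 (hy t)) hν.1 t).const_smul ν).const_add _
      · rw [← smul_add, add_sub_cancel, map_smul, acv_inv_apply (hb2 ν hν t _ (hy t)), ← smul_add,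
          add_sub_cancel]
  · intro ε hε
    obtain ⟨C₀, hC₀0, hC₀⟩ : ∃ C, 0 ≤ C ∧ ∀ x ∈ closedBall (0 : EuclideanSpace ℝ (Fin n)) r₁,
        ‖f₀ x‖ ≤ C := by
      obtain ⟨C, hC⟩ := hf₀G.1
      exact ⟨max C 0, le_max_right _ _, fun x hx => (hC 0 x hx).trans (le_max_left _ _)⟩
    obtain ⟨δ, hδ, hfδ⟩ := hfG.2.1 (ε / 6) (by positivity)
    obtain ⟨ν₁, hν₁, h1⟩ := hsm (min (δ / 2) (min (ε / 6) (ε / (6 * (C₀ + 1))))) (by positivity)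
    refine ⟨min ν₁ (δ / 2), by positivity, fun ν hν hνle t x hx => ?_⟩
    obtain ⟨e1, e2, e3, -⟩ := h1 ν hν (hνle.trans (min_le_left _ _)) t x hx
    simp only [le_min_iff] at e1 e2 e3
    refine (acv_low (hb2 ν hν t x hx) _).trans ?_
    rw [map_sub, acv_inv_apply (hb2 ν hν t x hx)]
    have i1 : ‖f t (x + ν • acvU h t x ν) ν - f t x 0‖ ≤ ε / 6 := by
      refine hfδ t t (x + ν • acvU h t x ν, ν) (hin ν hν t x hx) (x, 0) ⟨s3 (s7 hx), h00⟩
        (by simpa using hδ) ?_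
      rw [Prod.mk_sub_mk, add_sub_cancel_left, sub_zero]
      refine max_lt (by linarith [e1.1]) ?_
      rw [Real.norm_of_nonneg hν.1.le]
      linarith [hνle.trans (min_le_right _ _)]
    have i2 : ‖(ν • acvU h' t x ν) (f₀ x)‖ ≤ ε / 6 := by
      refine (ContinuousLinearMap.le_opNorm _ _).trans ?_
      calc _ ≤ ε / (6 * (C₀ + 1)) * (C₀ + 1) :=
            mul_le_mul e2.2.2 ((hC₀ x (s7 hx)).trans (by linarith)) (norm_nonneg _) (by positivity)
        _ = ε / 6 := by field_simp
    have e : f t (x + ν • acvU h t x ν) ν - acvUt h t x ν - (1 + ν • acvU h' t x ν) (f₀ x) =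
        (f t (x + ν • acvU h t x ν) ν - f t x 0) - (acvUt h t x ν - f t x 0 + f₀ x)
          - (ν • acvU h' t x ν) (f₀ x) := by
      rw [ContinuousLinearMap.add_apply, ContinuousLinearMap.one_apply]
      abel
    rw [e]
    have j1 := norm_sub_le ((f t (x + ν • acvU h t x ν) ν - f t x 0) -
      (acvUt h t x ν - f t x 0 + f₀ x)) ((ν • acvU h' t x ν) (f₀ x))
    have j2 := norm_sub_le (f t (x + ν • acvU h t x ν) ν - f t x 0)
      (acvUt h t x ν - f t x 0 + f₀ x)
    linarith [e3.2.1]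
end

section
/- Let r₁ > 0, ν̄ > 0, and let f : ℝ × B[0,r₁] × [0,ν̄] → ℝⁿ be continuous, with f_ν := f(·,·,ν) RAP in t uniformly with respect to (x,ν), continuously differentiable in x with ∂f_ν/∂x continuous in x uniformly in t. Suppose the averaged function f₀(x) := lim_{T→∞} (1/(2T)) ∫_{−T}^{T} f(t,x,0) dt exists uniformly in x and under all translations in t. Assume there exists x₀ in the open ball B(0,r₁) with f₀(x₀) = 0 and such that every eigenvalue of the Jacobian matrix (∂f₀/∂x)(x₀) has nonzero real part. Then there exist r₀ > 0 and ν₀ > 0 such that for each ν ∈ (0,ν₀] the equation x' = ν·f_ν(t,x) has a unique RAP solution φ_ν satisfying sup_{t∈ℝ} ‖φ_ν(t) − x₀‖ ≤ r₀, and (t,ν) ↦ φ_ν(t) is continuous on ℝ × (0,ν₀]. -/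
open MeasureTheory Filter Metric

def RAP {E : Type*} [NormedAddCommGroup E] (f : ℝ → E) : Prop :=
  (∃ C, ∀ t, ‖f t‖ ≤ C) ∧ UniformContinuous f ∧
  ∀ ε > 0, RelativelyDense
    {τ | Filter.limsup (fun t => ‖f (t + τ) - f t‖) (Filter.cocompact ℝ) < ε}

noncomputable def clmToMatrix {n : ℕ}
    (L : EuclideanSpace ℝ (Fin n) →L[ℝ] EuclideanSpace ℝ (Fin n)) :
    Matrix (Fin n) (Fin n) ℝ :=
  Matrix.toEuclideanLin.symm (L : EuclideanSpace ℝ (Fin n) →ₗ[ℝ] EuclideanSpace ℝ (Fin n))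
section Scalar

set_option linter.unusedSectionVars false


variable {V : Type*} [NormedAddCommGroup V] [NormedSpace ℂ V] [CompleteSpace V]

lemma cocompact_cg : (cocompact ℝ).IsCountablyGenerated := by
  rw [cocompact_eq_atBot_atTop]; infer_instance

lemma scalar_neg (lam : ℂ) (hl : lam.re < 0) (h : ℝ → V) (hc : Continuous h) (c : ℝ)
    (hb : ∀ t, ‖h t‖ ≤ c) :
    ∃ u : ℝ → V, (∀ t, HasDerivAt u (lam • u t + h t) t) ∧ (∀ t, ‖u t‖ ≤ |lam.re|⁻¹ * c) ∧
      (Tendsto h (cocompact ℝ) (nhds 0) → Tendsto u (cocompact ℝ) (nhds 0)) := by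
  have hint : ∀ t, IntegrableOn (fun s : ℝ => Complex.exp (-lam * s) • h s) (Set.Iic t) := by
    intro t
    have h1 := integrableOn_exp_mul_Iic (a := -lam.re) (by linarith) t
    refine Integrable.mono' (h1.mul_const c) ?_ ?_
    · exact (Continuous.aestronglyMeasurable (by fun_prop))
    · refine Eventually.of_forall fun s => ?_
      rw [norm_smul, Complex.norm_exp]
      simp only [Complex.mul_re, Complex.neg_re, Complex.ofReal_re, Complex.neg_im, Complex.ofReal_im, mul_zero, sub_zero]
      exact mul_le_mul_of_nonneg_left (hb s) (Real.exp_pos _).le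
  let u : ℝ → V := fun t => Complex.exp (lam * t) • ∫ s in Set.Iic t, Complex.exp (-lam * s) • h s
  have hu : ∀ t, u t = ∫ s in Set.Ioi (0:ℝ), Complex.exp (lam * s) • h (t - s) := by
    intro t
    have h1 := (Measure.measurePreserving_sub_left (volume : Measure ℝ) t).setIntegral_preimage_emb
      (Homeomorph.subLeft t).measurableEmbedding
      (fun s : ℝ => Complex.exp (lam * (t - s)) • h s) (Set.Iic t)
    have h2 : (fun x => t - x) ⁻¹' Set.Iic t = Set.Ici (0:ℝ) := by
      ext x; simp
    rw [h2, integral_Ici_eq_integral_Ioi] at h1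
    simp only [u]
    rw [← integral_smul]
    have h3 : ∀ s : ℝ, Complex.exp (lam * t) • Complex.exp (-lam * s) • h s = Complex.exp (lam * (t - s)) • h s := by
      intro s
      rw [smul_smul, ← Complex.exp_add]; ring_nf
    simp_rw [h3]
    rw [← h1]
    simp
  have hdom := integrableOn_exp_mul_Ioi (a := lam.re) hl 0
  have hn : ∀ s : ℝ, ∀ t, ‖Complex.exp (lam * s) • h (t - s)‖ ≤ Real.exp (lam.re * s) * c := by
    intro s t
    rw [norm_smul, Complex.norm_exp]
    simp only [Complex.mul_re, Complex.ofReal_re, Complex.ofReal_im, mul_zero, sub_zero]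
    exact mul_le_mul_of_nonneg_left (hb _) (Real.exp_pos _).le
  refine ⟨u, ?_, ?_, ?_⟩
  · intro t
    have e1 : ∀ t : ℝ, ∫ s in Set.Iic t, Complex.exp (-lam * s) • h s
        = (∫ s in Set.Iic (0:ℝ), Complex.exp (-lam * s) • h s) + ∫ s in (0:ℝ)..t, Complex.exp (-lam * s) • h s := by
      intro t
      rw [← intervalIntegral.integral_Iic_sub_Iic (hint 0) (hint t)]; abel
    have hcc : Continuous (fun s : ℝ => Complex.exp (-lam * s) • h s) := by fun_prop
    have d1 : HasDerivAt (fun t : ℝ => ∫ s in Set.Iic t, Complex.exp (-lam * s) • h s)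
        (Complex.exp (-lam * t) • h t) t := by
      rw [funext e1]
      exact (intervalIntegral.integral_hasDerivAt_right (hcc.intervalIntegrable _ _)
        (hcc.stronglyMeasurableAtFilter _ _) hcc.continuousAt).const_add _
    have d2 : HasDerivAt (fun t : ℝ => Complex.exp (lam * t)) (lam * Complex.exp (lam * t)) t := by
      have := ((hasDerivAt_id t).ofReal_comp.const_mul lam).cexp
      simpa [mul_comm] using this
    have d3 := d2.smul d1
    refine d3.congr_deriv ?_
    rw [smul_smul, ← Complex.exp_add]
    simp only [u, smul_smul]
    rw [add_comm]
    simp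
  · intro t
    rw [hu]
    refine (norm_integral_le_of_norm_le (hdom.mul_const c) (Eventually.of_forall fun s => hn s t)).trans ?_
    rw [integral_mul_const, integral_exp_mul_Ioi hl]
    rw [abs_of_neg hl]
    simp [neg_div, inv_neg]
  · intro ht
    have := cocompact_cg
    have h0 : (∫ s in Set.Ioi (0:ℝ), (0 : V)) = 0 := by simp
    rw [← h0]
    rw [show u = fun t => ∫ s in Set.Ioi (0:ℝ), Complex.exp (lam * s) • h (t - s) from funext hu]
    refine tendsto_integral_filter_of_dominated_convergence (fun s => Real.exp (lam.re * s) * c) ?_ ?_ (hdom.mul_const c) ?_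
    · exact Eventually.of_forall fun t => (Continuous.aestronglyMeasurable (by fun_prop))
    · exact Eventually.of_forall fun t => Eventually.of_forall fun s => hn s t
    · refine Eventually.of_forall fun s => ?_
      have : Tendsto (fun t : ℝ => t - s) (cocompact ℝ) (cocompact ℝ) :=
        (Homeomorph.subRight s).isClosedEmbedding.tendsto_cocompact
      have := (ht.comp this).const_smul (Complex.exp (lam * s))
      simpa using this

lemma scalar_ex (lam : ℂ) (hl : lam.re ≠ 0) (h : ℝ → V) (hc : Continuous h) (c : ℝ)
    (hb : ∀ t, ‖h t‖ ≤ c) :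
    ∃ u : ℝ → V, (∀ t, HasDerivAt u (lam • u t + h t) t) ∧ (∀ t, ‖u t‖ ≤ |lam.re|⁻¹ * c) ∧
      (Tendsto h (cocompact ℝ) (nhds 0) → Tendsto u (cocompact ℝ) (nhds 0)) := by
  rcases lt_or_gt_of_ne hl with hl | hl
  · exact scalar_neg lam hl h hc c hb
  · obtain ⟨w, h1, h2, h3⟩ := scalar_neg (-lam) (by simpa using hl) (fun t => - h (-t)) (by fun_prop) c
      (by simpa using fun t => hb (-t))
    have hneg : Tendsto (fun t : ℝ => -t) (cocompact ℝ) (cocompact ℝ) :=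
        (Homeomorph.neg ℝ).isClosedEmbedding.tendsto_cocompact
    refine ⟨fun t => w (-t), ?_, ?_, ?_⟩
    · intro t
      have := (h1 (-t)).scomp t (hasDerivAt_neg t)
      refine HasDerivAt.congr_deriv (f := fun t => w (-t)) this ?_
      simp only [neg_neg]
      rw [smul_add, neg_smul, one_smul, neg_smul, neg_smul, one_smul, neg_neg, neg_neg]
    · intro t
      simpa using h2 (-t)
    · intro ht
      have := h3 (by simpa using (ht.comp hneg).neg)
      exact this.comp hneg

lemma scalar_uniq (lam : ℂ) (hl : lam.re ≠ 0) (w : ℝ → V) (hw : ∀ t, HasDerivAt w (lam • w t) t)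
    (C : ℝ) (hb : ∀ t, ‖w t‖ ≤ C) : ∀ t, w t = 0 := by
  have hd : ∀ t : ℝ, HasDerivAt (fun t : ℝ => Complex.exp (-lam * t) • w t) 0 t := by
    intro t
    have d2 : HasDerivAt (fun t : ℝ => Complex.exp (-lam * t)) (-lam * Complex.exp (-lam * t)) t := by
      have := ((hasDerivAt_id t).ofReal_comp.const_mul (-lam)).cexp
      simpa [mul_comm] using this
    refine (d2.smul (hw t)).congr_deriv ?_
    rw [smul_smul, ← add_smul]
    ring_nf; simp
  have hconst := is_const_of_deriv_eq_zero (fun t => (hd t).differentiableAt) (fun t => (hd t).deriv)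
  intro t
  have key : ∀ s : ℝ, ‖w t‖ ≤ Real.exp (lam.re * (t - s)) * C := by
    intro s
    have h1 := congrArg norm (hconst t s)
    simp only [norm_smul, Complex.norm_exp, Complex.mul_re, Complex.neg_re, Complex.ofReal_re, Complex.neg_im, Complex.ofReal_im, mul_zero, sub_zero] at h1
    have h2 : ‖w t‖ = Real.exp (lam.re * t) * (Real.exp (-lam.re * t) * ‖w t‖) := by
      rw [← mul_assoc, ← Real.exp_add]; ring_nf; simp
    rw [h2, h1, ← mul_assoc, ← Real.exp_add]
    have : lam.re * t + -lam.re * s = lam.re * (t - s) := by ring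
    rw [this]
    exact mul_le_mul_of_nonneg_left (hb s) (Real.exp_pos _).le
  have key2 : ∀ x : ℝ, ‖w t‖ ≤ Real.exp (-x) * C := by
    intro x
    have := key (t + x / lam.re)
    rwa [show lam.re * (t - (t + x / lam.re)) = -x by field_simp; ring] at this
  have : Tendsto (fun x : ℝ => Real.exp (-x) * C) atTop (nhds (0 * C)) :=
    (Real.tendsto_exp_neg_atTop_nhds_zero).mul_const C
  rw [zero_mul] at this
  have := ge_of_tendsto' this key2
  exact norm_le_zero_iff.mp this

open Polynomial in
lemma poly_ex [FiniteDimensional ℂ V] (A : V →L[ℂ] V) (s : Multiset ℂ) (hs : ∀ a ∈ s, a.re ≠ 0) :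
    ∃ M : ℝ, 0 ≤ M ∧ ∀ (h : ℝ → V) (c : ℝ), Continuous h → (∀ t, ‖h t‖ ≤ c) →
      (∀ t, aeval A (s.map (fun a => X - C a)).prod (h t) = 0) →
      ∃ u : ℝ → V, (∀ t, HasDerivAt u (A (u t) + h t) t) ∧ (∀ t, ‖u t‖ ≤ M * c) ∧
      (Tendsto h (cocompact ℝ) (nhds 0) → Tendsto u (cocompact ℝ) (nhds 0)) := by
  induction s using Multiset.induction_on with
  | empty =>
    refine ⟨0, le_rfl, fun h c hc hb h0 => ⟨fun _ => 0, ?_, ?_, ?_⟩⟩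
    · intro t
      have := h0 t
      simp at this
      simpa [this] using hasDerivAt_const t (0:V)
    · simp
    · intro _; exact tendsto_const_nhds
  | cons a s ih =>
    obtain ⟨M, hM, ih⟩ := ih (fun b hb => hs b (Multiset.mem_cons_of_mem hb))
    have ha := hs a (Multiset.mem_cons_self a s)
    refine ⟨|a.re|⁻¹ + M * (‖A - a • ContinuousLinearMap.id ℂ V‖ * |a.re|⁻¹), by positivity, fun h c hc hb h0 => ?_⟩
    obtain ⟨u, u1, u2, u3⟩ := scalar_ex a ha h hc c hb
    have uc : Continuous u := continuous_iff_continuousAt.mpr fun t => (u1 t).continuousAt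
    have hP : ∀ v : V, aeval A ((a ::ₘ s).map (fun a => X - C a)).prod v
        = aeval A (s.map (fun a => X - C a)).prod ((A - a • ContinuousLinearMap.id ℂ V) v) := by
      intro v
      rw [Multiset.map_cons, Multiset.prod_cons, mul_comm, map_mul]
      simp only [map_sub, aeval_X, aeval_C]
      rfl
    have hz : ∀ t, aeval A ((a ::ₘ s).map (fun a => X - C a)).prod (u t) = 0 := by
      set P := aeval A ((a ::ₘ s).map (fun a => X - C a)).prod
      refine scalar_uniq a ha (fun t => P (u t)) ?_ (‖P‖ * (|a.re|⁻¹ * c)) ?_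
      · intro t
        have := (P.restrictScalars ℝ).hasFDerivAt.comp_hasDerivAt t (u1 t)
        simpa [h0 t, Function.comp_def] using this
      · intro t
        exact P.le_opNorm_of_le (u2 t)
    obtain ⟨y, y1, y2, y3⟩ := ih (fun t => (A - a • ContinuousLinearMap.id ℂ V) (u t))
      (‖A - a • ContinuousLinearMap.id ℂ V‖ * (|a.re|⁻¹ * c)) (by fun_prop)
      (fun t => ContinuousLinearMap.le_opNorm_of_le _ (u2 t))
      (fun t => by rw [← hP]; exact hz t)
    refine ⟨fun t => u t + y t, ?_, ?_, ?_⟩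
    · intro t
      refine ((u1 t).add (y1 t)).congr_deriv ?_
      simp; abel
    · intro t
      refine (norm_add_le _ _).trans ?_
      have := u2 t; have := y2 t
      linarith
    · intro ht
      have hu := u3 ht
      have := y3 (by
        have := ((A - a • ContinuousLinearMap.id ℂ V).continuous.tendsto 0).comp hu
        rw [map_zero] at this
        exact this)
      simpa using hu.add this

open Polynomial in
lemma poly_uniq [FiniteDimensional ℂ V] (A : V →L[ℂ] V) (s : Multiset ℂ) (hs : ∀ a ∈ s, a.re ≠ 0)
    (y : ℝ → V) (hy : ∀ t, HasDerivAt y (A (y t)) t) (K : ℝ) (hb : ∀ t, ‖y t‖ ≤ K)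
    (h0 : ∀ t, aeval A (s.map (fun a => X - C a)).prod (y t) = 0) : ∀ t, y t = 0 := by
  induction s using Multiset.induction_on with
  | empty => intro t; simpa using h0 t
  | cons a s ih =>
    have ha := hs a (Multiset.mem_cons_self a s)
    refine ih (fun b hb => hs b (Multiset.mem_cons_of_mem hb)) ?_
    set P := aeval A (s.map (fun a => X - C a)).prod with hP
    have hcomm : ∀ v, P (A v) = A (P v) := by
      intro v
      have : P * A = A * P := by
        have h1 : A = aeval A (X : ℂ[X]) := by simp
        rw [hP]
        conv_lhs => rhs; rw [h1]
        conv_rhs => lhs; rw [h1]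
        rw [← map_mul, ← map_mul, mul_comm]
      exact congrArg (fun L => L v) this
    have hPv : ∀ t, A (P (y t)) = a • P (y t) := by
      intro t
      have := h0 t
      rw [Multiset.map_cons, Multiset.prod_cons, map_mul] at this
      simp only [map_sub, aeval_X, aeval_C] at this
      exact sub_eq_zero.mp this
    refine scalar_uniq a ha (fun t => P (y t)) ?_ (‖P‖ * K) ?_
    · intro t
      have := (P.restrictScalars ℝ).hasFDerivAt.comp_hasDerivAt t (hy t)
      rw [← hPv, ← hcomm]
      simpa [Function.comp_def] using this
    · intro t
      exact P.le_opNorm_of_le (hb t)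

end Scalar

/-- `y' = ν (A y + h)` -/
def Sol {E : Type*} [NormedAddCommGroup E] [NormedSpace ℝ E] (A : E →L[ℝ] E) (ν : ℝ)
    (y h : ℝ → E) : Prop := ∀ t, HasDerivAt y (ν • (A (y t) + h t)) t

structure Green {E : Type*} [NormedAddCommGroup E] [NormedSpace ℝ E] (A : E →L[ℝ] E) (M : ℝ) :
    Prop where
  pos : 0 < M
  ex : ∀ ν > 0, ∀ (h : ℝ → E) (c : ℝ), Continuous h → (∀ t, ‖h t‖ ≤ c) →
    ∃ y, Sol A ν y h ∧ (∀ t, ‖y t‖ ≤ M * c) ∧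
      (Tendsto h (cocompact ℝ) (nhds 0) → Tendsto y (cocompact ℝ) (nhds 0))
  uniq : ∀ ν > 0, ∀ (y : ℝ → E) (K : ℝ), Sol A ν y (fun _ => 0) → (∀ t, ‖y t‖ ≤ K) → ∀ t, y t = 0

lemma cocompact_mul {ν : ℝ} (hν : ν ≠ 0) : Tendsto (fun t : ℝ => ν * t) (cocompact ℝ) (cocompact ℝ) :=
  (Homeomorph.mulLeft₀ ν hν).isClosedEmbedding.tendsto_cocompact

lemma green_of_one {E : Type*} [NormedAddCommGroup E] [NormedSpace ℝ E] (A : E →L[ℝ] E) (M : ℝ)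
    (hM : 0 < M)
    (hex : ∀ (h : ℝ → E) (c : ℝ), Continuous h → (∀ t, ‖h t‖ ≤ c) →
    ∃ y : ℝ → E, (∀ t, HasDerivAt y (A (y t) + h t) t) ∧ (∀ t, ‖y t‖ ≤ M * c) ∧
      (Tendsto h (cocompact ℝ) (nhds 0) → Tendsto y (cocompact ℝ) (nhds 0)))
    (huniq : ∀ (y : ℝ → E) (K : ℝ), (∀ t, HasDerivAt y (A (y t)) t) → (∀ t, ‖y t‖ ≤ K) → ∀ t, y t = 0) :
    Green A M where
  pos := hM
  ex := by
    intro ν hν h c hc hb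
    obtain ⟨y, y1, y2, y3⟩ := hex (fun t => h (ν⁻¹ * t)) c (by fun_prop) (fun t => hb _)
    refine ⟨fun t => y (ν * t), ?_, fun t => y2 _, fun ht => ?_⟩
    · intro t
      have := (y1 (ν * t)).scomp t ((hasDerivAt_id t).const_mul ν)
      refine HasDerivAt.congr_deriv (f := fun t => y (ν * t)) this ?_
      simp [← mul_assoc, inv_mul_cancel₀ hν.ne']
    · exact (y3 (ht.comp (cocompact_mul (inv_ne_zero hν.ne')))).comp (cocompact_mul hν.ne')
  uniq := by
    intro ν hν y K hy hb t
    have := huniq (fun t => y (ν⁻¹ * t)) K (fun t => ?_) (fun t => hb _) (ν * t)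
    · simpa [← mul_assoc, inv_mul_cancel₀ hν.ne'] using this
    · have := (hy (ν⁻¹ * t)).scomp t ((hasDerivAt_id t).const_mul ν⁻¹)
      refine HasDerivAt.congr_deriv (f := fun t => y (ν⁻¹ * t)) this ?_
      simp [smul_smul, inv_mul_cancel₀ hν.ne']

open Polynomial in
lemma green_exists {n : ℕ} (A : EuclideanSpace ℝ (Fin n) →L[ℝ] EuclideanSpace ℝ (Fin n))
    (heig : ∀ μ : ℂ,
      (((clmToMatrix A).map (Complex.ofReal)).charpoly).IsRoot μ → μ.re ≠ 0) :
    ∃ M, Green A M := by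
  set B := clmToMatrix A with hB
  set BC := B.map Complex.ofReal with hBC
  let AC : (Fin n → ℂ) →L[ℂ] (Fin n → ℂ) := LinearMap.toContinuousLinearMap (Matrix.toLin' BC)
  let ι : EuclideanSpace ℝ (Fin n) →L[ℝ] (Fin n → ℂ) :=
    ContinuousLinearMap.pi fun i => Complex.ofRealCLM.comp (EuclideanSpace.proj i)
  let ρ : (Fin n → ℂ) →L[ℝ] EuclideanSpace ℝ (Fin n) :=
    ((EuclideanSpace.equiv (Fin n) ℝ).symm : (Fin n → ℝ) →L[ℝ] EuclideanSpace ℝ (Fin n)).comp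
      (ContinuousLinearMap.pi fun i => Complex.reCLM.comp (ContinuousLinearMap.proj i))
  have hι : ∀ x i, ι x i = (x i : ℂ) := fun x i => rfl
  have hρ : ∀ v i, ρ v i = (v i).re := fun x i => rfl
  have hρι : ∀ x, ρ (ι x) = x := by
    intro x; ext i; simp [hρ, hι]
  have hA : ∀ x i, A x i = ∑ j, B i j * x j := by
    intro x i
    have : Matrix.toEuclideanLin B = (A : EuclideanSpace ℝ (Fin n) →ₗ[ℝ] EuclideanSpace ℝ (Fin n)) := by
      rw [hB, clmToMatrix, LinearEquiv.apply_symm_apply]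
    have h2 : A x = Matrix.toEuclideanLin B x := by rw [this]; rfl
    rw [h2]
    rfl
  have hAC : ∀ v i, AC v i = ∑ j, (B i j : ℂ) * v j := by
    intro v i
    rfl
  have hAι : ∀ x, ι (A x) = AC (ι x) := by
    intro x; ext i; rw [hι, hA, hAC]; push_cast; rfl
  have hAρ : ∀ v, ρ (AC v) = A (ρ v) := by
    intro v; ext i; rw [hρ, hA, hAC, Complex.re_sum]; simp [hρ]
  have hzero : ∀ v, aeval AC (BC.charpoly.roots.map (fun a => X - C a)).prod v = 0 := by
    intro v
    rw [← Polynomial.Splits.eq_prod_roots_of_monic (IsAlgClosed.splits _) (Matrix.charpoly_monic _)]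
    have h1 := Matrix.aeval_self_charpoly BC
    let Φ : Matrix (Fin n) (Fin n) ℂ →ₐ[ℂ] ((Fin n → ℂ) →L[ℂ] (Fin n → ℂ)) :=
      ((Module.End.toContinuousLinearMap (𝕜 := ℂ) (Fin n → ℂ)).toAlgHom).comp
        (Matrix.toLinAlgEquiv' : Matrix (Fin n) (Fin n) ℂ ≃ₐ[ℂ] _).toAlgHom
    have h2 : AC = Φ BC := rfl
    rw [h2, Polynomial.aeval_algHom_apply, h1]
    simp
  have hre : ∀ a ∈ BC.charpoly.roots, a.re ≠ 0 := fun a ha =>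
    heig a (Polynomial.isRoot_of_mem_roots ha)
  obtain ⟨M, hM, hex⟩ := poly_ex AC _ hre
  refine ⟨‖ρ‖ * (M * ‖ι‖) + 1, green_of_one A _ (by positivity) ?_ ?_⟩
  · intro h c hc hb
    have hc0 : 0 ≤ c := (norm_nonneg _).trans (hb 0)
    obtain ⟨y, y1, y2, y3⟩ := hex (fun t => ι (h t)) (‖ι‖ * c) (by fun_prop)
      (fun t => ι.le_opNorm_of_le (hb t)) (fun t => hzero _)
    refine ⟨fun t => ρ (y t), ?_, ?_, ?_⟩
    · intro t
      have := ρ.hasFDerivAt.comp_hasDerivAt t (y1 t)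
      refine HasDerivAt.congr_deriv (f := fun t => ρ (y t)) this ?_
      simp [hAρ, hρι]
    · intro t
      refine (ρ.le_opNorm_of_le (y2 t)).trans ?_
      nlinarith
    · intro ht
      have h1 := (ι.continuous.tendsto 0).comp ht
      rw [map_zero] at h1
      have h2 := (ρ.continuous.tendsto 0).comp (y3 h1)
      rw [map_zero] at h2
      exact h2
  · intro y K hy hb t
    have := poly_uniq AC _ hre (fun t => ι (y t)) (fun t => ?_) (‖ι‖ * K)
      (fun t => ι.le_opNorm_of_le (hb t)) (fun t => hzero _) t
    · rw [← hρι (y t), this, map_zero]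
    · have := ι.hasFDerivAt.comp_hasDerivAt t (hy t)
      refine HasDerivAt.congr_deriv (f := fun t => ι (y t)) this ?_
      simp [hAι]

section NLin

variable {E : Type*} [NormedAddCommGroup E] [NormedSpace ℝ E]

structure GoodF (A : E →L[ℝ] E) (M : ℝ) (F : Filter ℝ) : Prop where
  win : ∀ (T : ℝ) (P : ℝ → Prop), (∀ᶠ t in F, P t) → ∀ᶠ t in F, ∀ s ∈ Set.Icc t (t + T), P s
  ap : ∀ ν > 0, ∀ (y h : ℝ → E) (c : ℝ), Continuous h → (∃ K, ∀ t, ‖h t‖ ≤ K) →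
    (∃ K, ∀ t, ‖y t‖ ≤ K) → Sol A ν y h → 0 ≤ c → (∀ᶠ t in F, ‖h t‖ ≤ c) →
    ∀ δ > 0, ∀ᶠ t in F, ‖y t‖ ≤ M * c + δ

lemma Sol.sub {A : E →L[ℝ] E} {ν : ℝ} {y1 y2 h1 h2 : ℝ → E} (s1 : Sol A ν y1 h1) (s2 : Sol A ν y2 h2) :
    Sol A ν (fun t => y1 t - y2 t) (fun t => h1 t - h2 t) := by
  intro t
  refine ((s1 t).sub (s2 t)).congr_deriv ?_
  rw [← smul_sub, map_sub, add_sub_add_comm]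

lemma Sol.cont {A : E →L[ℝ] E} {ν : ℝ} {y h : ℝ → E} (s : Sol A ν y h) : Continuous y :=
  continuous_iff_continuousAt.mpr fun t => (s t).continuousAt

lemma Green.eq {A : E →L[ℝ] E} {M : ℝ} (hG : Green A M) {ν : ℝ} (hν : 0 < ν) {y1 y2 h : ℝ → E}
    (s1 : Sol A ν y1 h) (s2 : Sol A ν y2 h) (b1 : ∃ K, ∀ t, ‖y1 t‖ ≤ K) (b2 : ∃ K, ∀ t, ‖y2 t‖ ≤ K)
    (t : ℝ) : y1 t = y2 t := by
  obtain ⟨K1, b1⟩ := b1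
  obtain ⟨K2, b2⟩ := b2
  have := hG.uniq ν hν (fun t => y1 t - y2 t) (K1 + K2) (by simpa using s1.sub s2)
    (fun t => (norm_sub_le _ _).trans (add_le_add (b1 t) (b2 t))) t
  exact sub_eq_zero.mp this

lemma Green.top {A : E →L[ℝ] E} {M : ℝ} (hG : Green A M) : GoodF A M ⊤ where
  win := by
    intro T P h
    simp only [eventually_top] at h ⊢
    exact fun t s _ => h s
  ap := by
    intro ν hν y h c hc hb yb hs hc0 hh δ hδ
    simp only [eventually_top] at hh ⊢
    obtain ⟨z, z1, z2, -⟩ := hG.ex ν hν h c hc hh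
    intro t
    rw [hG.eq hν hs z1 yb ⟨_, z2⟩ t]
    linarith [z2 t]

lemma Green.cocompact {A : E →L[ℝ] E} {M : ℝ} (hG : Green A M) : GoodF A M (cocompact ℝ) where
  win := by
    intro T P h
    rw [cocompact_eq_atBot_atTop, eventually_sup, eventually_atBot, eventually_atTop] at h ⊢
    obtain ⟨⟨a, ha⟩, ⟨b, hb⟩⟩ := h
    refine ⟨⟨a - T, fun t ht s hs => ha s ?_⟩, ⟨b, fun t ht s hs => hb s ?_⟩⟩
    · linarith [hs.2]
    · linarith [hs.1]
  ap := by
    intro ν hν y h c hc hb yb hs hc0 hh δ hδ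
    have hM := hG.pos
    set c' := c + δ / (2 * M) with hc'
    have hcpos : 0 < c' := by positivity
    obtain ⟨K, hK⟩ := hb
    let h1 : ℝ → E := fun t => (c' / max c' ‖h t‖) • h t
    have hmax : ∀ t, 0 < max c' ‖h t‖ := fun t => lt_max_of_lt_left hcpos
    have h1c : Continuous h1 := by
      refine Continuous.smul ?_ hc
      exact continuous_const.div (continuous_const.max hc.norm) (fun t => (hmax t).ne')
    have h1b : ∀ t, ‖h1 t‖ ≤ c' := by
      intro t
      simp only [h1]
      rw [norm_smul, Real.norm_eq_abs, abs_of_pos (div_pos hcpos (hmax t)), div_mul_eq_mul_div,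
        div_le_iff₀ (hmax t)]
      exact mul_le_mul_of_nonneg_left (le_max_right _ _) hcpos.le
    obtain ⟨y1, s1, b1, -⟩ := hG.ex ν hν h1 c' h1c h1b
    obtain ⟨y2, s2, b2, t2⟩ := hG.ex ν hν (fun t => h t - h1 t) (K + c') (hc.sub h1c)
      (fun t => (norm_sub_le _ _).trans (add_le_add (hK t) (h1b t)))
    have s3 := hs.sub s1
    have e : ∀ t, y t - y1 t = y2 t := by
      obtain ⟨Ky, hKy⟩ := yb
      exact fun t => hG.eq hν s3 s2 ⟨Ky + M * c', fun t => (norm_sub_le _ _).trans (add_le_add (hKy t) (b1 t))⟩ ⟨_, b2⟩ t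
    have hz : Tendsto (fun t => h t - h1 t) (Filter.cocompact ℝ) (nhds 0) := by
      refine tendsto_const_nhds.congr' ?_
      filter_upwards [hh] with t ht
      have : ‖h t‖ ≤ c' := ht.trans (by rw [hc']; have : 0 < δ / (2 * M) := by positivity
                                        linarith)
      simp only [h1]
      rw [max_eq_left this, div_self hcpos.ne', one_smul, sub_self]
    have := (t2 hz).norm
    rw [norm_zero] at this
    filter_upwards [this.eventually (gt_mem_nhds (half_pos hδ))] with t ht
    have h3 : y t = y1 t + y2 t := by rw [← e]; abel
    rw [h3]
    have h4 : M * c' = M * c + δ / 2 := by rw [hc']; field_simp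
    linarith [norm_add_le (y1 t) (y2 t), b1 t]

variable [CompleteSpace E]

lemma avg_bound {A : E →L[ℝ] E} {M : ℝ} {F : Filter ℝ} (hF : GoodF A M F) (hM : 0 < M)
    {ν : ℝ} (hν : 0 < ν) {T : ℝ} (hT : 0 < T) {y h : ℝ → E} (hc : Continuous h)
    (hb : ∃ K, ∀ t, ‖h t‖ ≤ K) (yb : ∃ K, ∀ t, ‖y t‖ ≤ K) (hs : Sol A ν y h)
    {c d : ℝ} (hc0 : 0 ≤ c) (hd0 : 0 ≤ d) (h1 : ∀ᶠ t in F, ‖h t‖ ≤ c)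
    (h2 : ∀ᶠ t in F, ‖∫ s in t..t + T, h s‖ ≤ T * d) {δ : ℝ} (hδ : 0 < δ) :
    ∀ᶠ t in F, ‖y t‖ ≤ M * d + ν * T * (‖A‖ * M + 1) * c + δ := by
  have hyc := hs.cont
  let w : ℝ → E := fun t => T⁻¹ • ∫ s in t..t + T, y s
  let k : ℝ → E := fun t => T⁻¹ • ∫ s in t..t + T, h s
  have win_cont : ∀ z : ℝ → E, Continuous z → Continuous (fun t => T⁻¹ • ∫ s in t..t + T, z s) := by
    intro z hz
    have e : ∀ t, ∫ s in t..t + T, z s = (∫ s in (0:ℝ)..t + T, z s) - ∫ s in (0:ℝ)..t, z s := by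
      intro t
      rw [intervalIntegral.integral_interval_sub_left (hz.intervalIntegrable _ _) (hz.intervalIntegrable _ _)]
    rw [show (fun t => T⁻¹ • ∫ s in t..t + T, z s) = fun t => T⁻¹ • ((∫ s in (0:ℝ)..t + T, z s) - ∫ s in (0:ℝ)..t, z s) from funext fun t => by rw [e]]
    have := intervalIntegral.continuous_primitive (μ := volume) (fun a b => hz.intervalIntegrable a b) 0
    exact (((this.comp (continuous_id.add continuous_const)).sub this).const_smul _)
  have win_bdd : ∀ z : ℝ → E, (∃ K, ∀ t, ‖z t‖ ≤ K) → ∃ K, ∀ t, ‖T⁻¹ • ∫ s in t..t + T, z s‖ ≤ K := by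
    rintro z ⟨K, hK⟩
    refine ⟨K, fun t => ?_⟩
    rw [norm_smul, norm_inv, Real.norm_eq_abs, abs_of_pos hT, inv_mul_le_iff₀ hT]
    have := intervalIntegral.norm_integral_le_of_norm_le_const (a := t) (b := t + T) (f := z) (C := K) (fun s _ => hK s)
    simpa [abs_of_pos hT, mul_comm] using this
  have hw : Sol A ν w k := by
    intro t
    have e : ∀ t, ∫ s in t..t + T, y s = (∫ s in (0:ℝ)..t + T, y s) - ∫ s in (0:ℝ)..t, y s := by
      intro t
      rw [intervalIntegral.integral_interval_sub_left (hyc.intervalIntegrable _ _) (hyc.intervalIntegrable _ _)]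
    have d1 : ∀ t, HasDerivAt (fun t => ∫ s in (0:ℝ)..t, y s) (y t) t := fun t =>
      intervalIntegral.integral_hasDerivAt_right (hyc.intervalIntegrable _ _)
        (hyc.stronglyMeasurableAtFilter _ _) hyc.continuousAt
    have d2 : HasDerivAt (fun t => ∫ s in (0:ℝ)..t + T, y s) (y (t + T)) t := by
      simpa using (d1 (t + T)).comp_add_const t T
    have d3 : HasDerivAt w (T⁻¹ • (y (t + T) - y t)) t := by
      have := (d2.sub (d1 t)).const_smul T⁻¹
      rw [show w = fun t => T⁻¹ • ((∫ s in (0:ℝ)..t + T, y s) - ∫ s in (0:ℝ)..t, y s) from funext fun t => by simp only [w]; rw [e]]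
      exact this
    refine d3.congr_deriv ?_
    have hAy : Continuous fun s => A (y s) := by fun_prop
    have ftc : ∫ s in t..t + T, ν • (A (y s) + h s) = y (t + T) - y t :=
      intervalIntegral.integral_eq_sub_of_hasDerivAt (fun s _ => hs s)
        ((Continuous.intervalIntegrable (by fun_prop)) _ _)
    rw [← ftc, intervalIntegral.integral_smul, intervalIntegral.integral_add (hAy.intervalIntegrable _ _) (hc.intervalIntegrable _ _),
      A.intervalIntegral_comp_comm (hyc.intervalIntegrable _ _)]
    simp only [w, k, map_smul]
    rw [smul_comm, smul_add]
  have hk : ∀ᶠ t in F, ‖k t‖ ≤ d := by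
    filter_upwards [h2] with t ht
    simp only [k]
    rw [norm_smul, norm_inv, Real.norm_eq_abs, abs_of_pos hT, inv_mul_le_iff₀ hT]
    exact ht
  have hAn : 0 ≤ ‖A‖ := norm_nonneg _
  set δ' := δ / (2 * (ν * T * ‖A‖ + 1)) with hδ'
  have hpos : 0 < δ' := by positivity
  have hle : ν * T * ‖A‖ * δ' + δ' = δ / 2 := by rw [hδ']; field_simp
  have hw2 := hF.ap ν hν w k d (win_cont h hc) (win_bdd h hb) (win_bdd y yb) hw hd0 hk δ' hpos
  have hy2 := hF.ap ν hν y h c hc hb yb hs hc0 h1 δ' hpos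
  have hy3 := hF.win T _ (hy2.and h1)
  filter_upwards [hw2, hy3] with t ht1 ht2
  set B := ν * (‖A‖ * (M * c + δ') + c) with hB
  have hlip : ∀ s ∈ Set.Icc t (t + T), ‖y s - y t‖ ≤ B * T := by
    intro s hsI
    have := Convex.norm_image_sub_le_of_norm_hasDerivWithin_le (f := y) (C := B) (s := Set.Icc t (t + T)) (x := t) (y := s)
      (fun x _ => (hs x).hasDerivWithinAt) (fun x hx => by
        obtain ⟨q1, q2⟩ := ht2 x hx
        rw [norm_smul, Real.norm_eq_abs, abs_of_pos hν, hB]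
        refine mul_le_mul_of_nonneg_left ?_ hν.le
        refine (norm_add_le _ _).trans (add_le_add (A.le_opNorm_of_le q1) q2)) (convex_Icc _ _) ⟨le_rfl, by linarith⟩ hsI
    refine this.trans ?_
    have hB0 : 0 ≤ B := by positivity
    refine mul_le_mul_of_nonneg_left ?_ hB0
    rw [Real.norm_eq_abs, abs_of_nonneg (by linarith [hsI.1])]
    linarith [hsI.2]
  have hdiff : w t - y t = T⁻¹ • ∫ s in t..t + T, (y s - y t) := by
    rw [intervalIntegral.integral_sub (hyc.intervalIntegrable _ _) (by simp)]
    simp only [w, intervalIntegral.integral_const, smul_sub]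
    simp [smul_smul, inv_mul_cancel₀ hT.ne']
  have hd2 : ‖w t - y t‖ ≤ B * T := by
    rw [hdiff, norm_smul, norm_inv, Real.norm_eq_abs, abs_of_pos hT, inv_mul_le_iff₀ hT]
    have := intervalIntegral.norm_integral_le_of_norm_le_const (a := t) (b := t + T) (f := fun s => y s - y t) (C := B * T)
      (fun s hsI => hlip s (by rw [Set.uIoc_of_le (by linarith)] at hsI; exact ⟨hsI.1.le, hsI.2⟩))
    simpa [abs_of_pos hT, mul_comm] using this
  have h5 : ‖y t‖ ≤ ‖w t‖ + ‖w t - y t‖ := by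
    have := norm_sub_le (w t) (w t - y t)
    simpa using this
  have : B * T = ν * T * (‖A‖ * M + 1) * c + ν * T * ‖A‖ * δ' := by rw [hB]; ring
  linarith

end NLin

section NLin2

set_option linter.unusedSectionVars false

variable {E : Type*} [NormedAddCommGroup E] [NormedSpace ℝ E]

structure NL (r ε L T Cg : ℝ) (g : ℝ → E → E) : Prop where
  cont : ContinuousOn (fun p : ℝ × E => g p.1 p.2) (Set.univ ×ˢ closedBall 0 r)
  g1 : ∀ t a b, ‖a‖ ≤ r → ‖b‖ ≤ r → ‖∫ s in t..t + T, (g s a - g s b)‖ ≤ T * (ε * ‖a - b‖)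
  g2 : ∀ t, ‖∫ s in t..t + T, g s 0‖ ≤ T * (ε * r)
  g3 : ∀ t a b, ‖a‖ ≤ r → ‖b‖ ≤ r → ‖g t a - g t b‖ ≤ L * ‖a - b‖
  g4 : ∀ t a, ‖a‖ ≤ r → ‖g t a‖ ≤ Cg
  g5 : ∀ t a b a' b', ‖a‖ ≤ r → ‖b‖ ≤ r → ‖a'‖ ≤ r → ‖b'‖ ≤ r →
    ‖(g t a - g t b) - (g t a' - g t b')‖ ≤ L * ‖(a - b) - (a' - b')‖ + ε * (‖a - b‖ + ‖a' - b'‖)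

lemma NL.comp_cont {r ε L T Cg : ℝ} {g : ℝ → E → E} (hg : NL r ε L T Cg g) {y : ℝ → E}
    (hy : Continuous y) (hb : ∀ t, ‖y t‖ ≤ r) : Continuous fun t => g t (y t) :=
  hg.cont.comp_continuous (continuous_id.prodMk hy) (fun t => ⟨trivial, by simpa using hb t⟩)

variable [CompleteSpace E]

lemma lemmaN {A : E →L[ℝ] E} {M : ℝ} {F : Filter ℝ} (hF : GoodF A M F) (hM : 0 < M)
    {r ε L T Cg : ℝ} {g : ℝ → E → E} (hg : NL r ε L T Cg g) (hT : 0 < T) (hL : 0 ≤ L) (hε : 0 ≤ ε)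
    {ν : ℝ} (hν : 0 < ν) {y1 y2 w e : ℝ → E} (c1 : Continuous y1) (c2 : Continuous y2)
    (b1 : ∀ t, ‖y1 t‖ ≤ r) (b2 : ∀ t, ‖y2 t‖ ≤ r) (wb : ∃ K, ∀ t, ‖w t‖ ≤ K)
    (ec : Continuous e) (eb : ∃ K, ∀ t, ‖e t‖ ≤ K)
    (hs : Sol A ν w (fun s => g s (y1 s) - g s (y2 s) + e s))
    {d l η₁ η₂ : ℝ} (hd : 0 ≤ d) (hl : 0 ≤ l) (hη₁ : 0 ≤ η₁) (hη₂ : 0 ≤ η₂)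
    (h1 : ∀ᶠ t in F, ‖y1 t - y2 t‖ ≤ d)
    (h2 : ∀ᶠ t in F, ∀ s ∈ Set.Icc t (t + T), ‖(y1 s - y2 s) - (y1 t - y2 t)‖ ≤ ν * l)
    (h3 : ∀ᶠ t in F, ‖e t‖ ≤ η₁)
    (h4 : ∀ᶠ t in F, ‖∫ s in t..t + T, e s‖ ≤ T * η₂) {δ : ℝ} (hδ : 0 < δ) :
    ∀ᶠ t in F, ‖w t‖ ≤ M * (3 * ε * d + L * (ν * l) + η₂) + ν * T * (‖A‖ * M + 1) * (L * d + η₁) + δ := by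
  have k1 := hg.comp_cont c1 b1
  have k2 := hg.comp_cont c2 b2
  have hr : 0 ≤ r := (norm_nonneg _).trans (b1 0)
  obtain ⟨K, eb⟩ := eb
  refine avg_bound hF hM hν hT ((k1.sub k2).add ec)
    ⟨Cg + Cg + K, fun t => (norm_add_le _ _).trans (add_le_add ((norm_sub_le _ _).trans
      (add_le_add (hg.g4 _ _ (b1 t)) (hg.g4 _ _ (b2 t)))) (eb t))⟩ wb hs (by positivity) (by positivity) ?_ ?_ hδ
  · filter_upwards [h1, h3] with t q1 q3
    refine (norm_add_le _ _).trans (add_le_add ((hg.g3 _ _ _ (b1 t) (b2 t)).trans ?_) q3)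
    exact mul_le_mul_of_nonneg_left q1 hL
  · filter_upwards [hF.win T _ h1, h2, h4] with t q1 q2 q4
    have gc : ∀ a, ‖a‖ ≤ r → Continuous fun s => g s a := fun a ha =>
      hg.comp_cont continuous_const (fun _ => ha)
    have i1 : Continuous fun s => (g s (y1 s) - g s (y2 s)) - (g s (y1 t) - g s (y2 t)) :=
      (k1.sub k2).sub ((gc _ (b1 t)).sub (gc _ (b2 t)))
    have i2 : Continuous fun s => g s (y1 t) - g s (y2 t) := (gc _ (b1 t)).sub (gc _ (b2 t))
    have dec : ∫ s in t..t + T, (g s (y1 s) - g s (y2 s) + e s)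
        = (∫ s in t..t + T, ((g s (y1 s) - g s (y2 s)) - (g s (y1 t) - g s (y2 t))))
          + (∫ s in t..t + T, (g s (y1 t) - g s (y2 t))) + ∫ s in t..t + T, e s := by
      have i3 : Continuous fun s => (g s (y1 s) - g s (y2 s)) - (g s (y1 t) - g s (y2 t)) + (g s (y1 t) - g s (y2 t)) :=
        i1.add i2
      rw [← intervalIntegral.integral_add (i1.intervalIntegrable _ _) (i2.intervalIntegrable _ _),
        ← intervalIntegral.integral_add (i3.intervalIntegrable _ _) (ec.intervalIntegrable _ _)]
      congr 1; ext s; abel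
    change ‖∫ s in t..t + T, (g s (y1 s) - g s (y2 s) + e s)‖ ≤ _
    rw [dec]
    have qt := q1 t ⟨le_rfl, by linarith⟩
    have n1 : ‖∫ s in t..t + T, ((g s (y1 s) - g s (y2 s)) - (g s (y1 t) - g s (y2 t)))‖
        ≤ T * (L * (ν * l) + 2 * ε * d) := by
      have := intervalIntegral.norm_integral_le_of_norm_le_const (a := t) (b := t + T)
        (f := fun s => (g s (y1 s) - g s (y2 s)) - (g s (y1 t) - g s (y2 t))) (C := L * (ν * l) + 2 * ε * d)
        (fun s hsI => by
          have hsI' : s ∈ Set.Icc t (t + T) := by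
            rw [Set.uIoc_of_le (by linarith)] at hsI; exact ⟨hsI.1.le, hsI.2⟩
          refine (hg.g5 s _ _ _ _ (b1 s) (b2 s) (b1 t) (b2 t)).trans ?_
          have a1 := mul_le_mul_of_nonneg_left (q2 s hsI') hL
          have a2 := mul_le_mul_of_nonneg_left (add_le_add (q1 s hsI') qt) hε
          linarith)
      simpa [abs_of_pos hT, mul_comm] using this
    have n2 := hg.g1 t _ _ (b1 t) (b2 t)
    have n2' : T * (ε * ‖y1 t - y2 t‖) ≤ T * (ε * d) := by gcongr
    have n3 := norm_add₃_le (a := ∫ s in t..t + T, ((g s (y1 s) - g s (y2 s)) - (g s (y1 t) - g s (y2 t))))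
      (b := ∫ s in t..t + T, (g s (y1 t) - g s (y2 t))) (c := ∫ s in t..t + T, e s)
    linarith

/-- Lipschitz estimate from ODE on windows. -/
lemma win_lip {A : E →L[ℝ] E} {F : Filter ℝ} {M : ℝ} (hF : GoodF A M F)
    {T : ℝ} (hT : 0 < T) {ν : ℝ} (hν : 0 < ν) {w h : ℝ → E} (hs : Sol A ν w h) {a b : ℝ}
    (h1 : ∀ᶠ t in F, ‖w t‖ ≤ a) (h2 : ∀ᶠ t in F, ‖h t‖ ≤ b) (ha : 0 ≤ a) (hb : 0 ≤ b) :
    ∀ᶠ t in F, ∀ s ∈ Set.Icc t (t + T), ‖w s - w t‖ ≤ ν * ((‖A‖ * a + b) * T) := by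
  filter_upwards [hF.win T _ (h1.and h2)] with t ht s hsI
  have := Convex.norm_image_sub_le_of_norm_hasDerivWithin_le (f := w) (C := ν * (‖A‖ * a + b)) (s := Set.Icc t (t + T)) (x := t) (y := s)
      (fun x _ => (hs x).hasDerivWithinAt) (fun x hx => by
        obtain ⟨q1, q2⟩ := ht x hx
        rw [norm_smul, Real.norm_eq_abs, abs_of_pos hν]
        refine mul_le_mul_of_nonneg_left ?_ hν.le
        exact (norm_add_le _ _).trans (add_le_add (A.le_opNorm_of_le q1) q2)) (convex_Icc _ _) ⟨le_rfl, by linarith⟩ hsI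
  refine this.trans ?_
  rw [← mul_assoc]
  refine mul_le_mul_of_nonneg_left ?_ (by positivity)
  rw [Real.norm_eq_abs, abs_of_nonneg (by linarith [hsI.1])]
  linarith [hsI.2]

lemma glob_lip {A : E →L[ℝ] E} {ν : ℝ} (hν : 0 < ν) {w h : ℝ → E} (hs : Sol A ν w h) {a b : ℝ}
    (h1 : ∀ t, ‖w t‖ ≤ a) (h2 : ∀ t, ‖h t‖ ≤ b) (s t : ℝ) :
    ‖w s - w t‖ ≤ ν * (‖A‖ * a + b) * |s - t| := by
  exact Convex.norm_image_sub_le_of_norm_hasDerivWithin_le (f := w) (C := ν * (‖A‖ * a + b)) (s := Set.univ) (x := t) (y := s)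
      (fun x _ => (hs x).hasDerivWithinAt) (fun x hx => by
        rw [norm_smul, Real.norm_eq_abs, abs_of_pos hν]
        refine mul_le_mul_of_nonneg_left ?_ hν.le
        exact (norm_add_le _ _).trans (add_le_add (A.le_opNorm_of_le (h1 x)) (h2 x))) convex_univ trivial trivial

lemma stability {A : E →L[ℝ] E} {M : ℝ} {F : Filter ℝ} [F.NeBot] (hF : GoodF A M F) (hM : 0 < M)
    {r ε L T Cg : ℝ} {g : ℝ → E → E} (hg : NL r ε L T Cg g) (hT : 0 < T) (hL : 0 ≤ L) (hε : 0 ≤ ε)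
    {ν : ℝ} (hν : 0 < ν) {y1 y2 e : ℝ → E}
    (b1 : ∀ t, ‖y1 t‖ ≤ r) (b2 : ∀ t, ‖y2 t‖ ≤ r) (ec : Continuous e) (eb : ∃ K, ∀ t, ‖e t‖ ≤ K)
    (s1 : Sol A ν y1 (fun t => g t (y1 t) + e t)) (s2 : Sol A ν y2 (fun t => g t (y2 t)))
    (small : M * (3 * ε + L * (ν * ((‖A‖ + L) * T))) + ν * T * (‖A‖ * M + 1) * L ≤ 1 / 2)
    {η : ℝ} (hη : 0 ≤ η) (he : ∀ᶠ t in F, ‖e t‖ ≤ η) {δ : ℝ} (hδ : 0 < δ) :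
    ∀ᶠ t in F, ‖y1 t - y2 t‖ ≤ 2 * (M * (L * (ν * T) + 1) + ν * T * (‖A‖ * M + 1)) * η + δ := by
  have c1 := s1.cont
  have c2 := s2.cont
  have hs : Sol A ν (fun t => y1 t - y2 t) (fun s => g s (y1 s) - g s (y2 s) + e s) := by
    have := s1.sub s2
    convert this using 2
    abel
  set C1 := M * (L * (ν * T) + 1) + ν * T * (‖A‖ * M + 1) with hC1
  have he4 : ∀ᶠ t in F, ‖∫ s in t..t + T, e s‖ ≤ T * η := by
    filter_upwards [hF.win T _ he] with t ht
    have := intervalIntegral.norm_integral_le_of_norm_le_const (a := t) (b := t + T)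
        (f := e) (C := η) (fun s hsI => by
          rw [Set.uIoc_of_le (by linarith)] at hsI; exact ht s ⟨hsI.1.le, hsI.2⟩)
    simpa [abs_of_pos hT, mul_comm] using this
  have step : ∀ d, 0 ≤ d → (∀ᶠ t in F, ‖y1 t - y2 t‖ ≤ d) → ∀ δ > 0,
      ∀ᶠ t in F, ‖y1 t - y2 t‖ ≤ d / 2 + C1 * η + δ := by
    intro d hd h1 δ hδ
    have hh : ∀ᶠ t in F, ‖g t (y1 t) - g t (y2 t) + e t‖ ≤ L * d + η := by
      filter_upwards [h1, he] with t q1 q3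
      refine (norm_add_le _ _).trans (add_le_add ((hg.g3 _ _ _ (b1 t) (b2 t)).trans ?_) q3)
      exact mul_le_mul_of_nonneg_left q1 hL
    have hl := win_lip hF hT hν hs h1 hh hd (by positivity)
    have := lemmaN hF hM hg hT hL hε hν c1 c2 b1 b2
      ⟨r + r, fun t => (norm_sub_le _ _).trans (add_le_add (b1 t) (b2 t))⟩ ec eb hs hd
      (by positivity) hη hη h1 hl he he4 hδ
    filter_upwards [this] with t ht
    refine ht.trans ?_
    have := mul_le_mul_of_nonneg_right small hd
    rw [hC1]
    nlinarith
  let S : Set ℝ := {d | 0 ≤ d ∧ ∀ᶠ t in F, ‖y1 t - y2 t‖ ≤ d}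
  have hr : 0 ≤ r := (norm_nonneg _).trans (b1 0)
  have hSne : S.Nonempty := ⟨r + r, by positivity, Eventually.of_forall fun t =>
    (norm_sub_le _ _).trans (add_le_add (b1 t) (b2 t))⟩
  have hSb : BddBelow S := ⟨0, fun d hd => hd.1⟩
  have hC10 : 0 ≤ C1 := by positivity
  have hD : sInf S ≤ 2 * C1 * η := by
    refine le_of_forall_pos_le_add fun δ hδ => ?_
    obtain ⟨d, hdS, hdl⟩ := exists_lt_of_csInf_lt hSne (lt_add_of_pos_right (sInf S) (half_pos hδ))
    have hd0 := hdS.1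
    have := csInf_le hSb (show d / 2 + C1 * η + δ / 4 ∈ S from
      ⟨by positivity, step d hdS.1 hdS.2 (δ / 4) (by positivity)⟩)
    linarith
  obtain ⟨d, hdS, hdl⟩ := exists_lt_of_csInf_lt hSne (lt_of_le_of_lt hD (lt_add_of_pos_right _ hδ))
  filter_upwards [hdS.2] with t ht
  linarith

lemma existence {A : E →L[ℝ] E} {M : ℝ} (hG : Green A M)
    {r ε L T Cg : ℝ} {g : ℝ → E → E} (hg : NL r ε L T Cg g) (hT : 0 < T) (hL : 0 ≤ L) (hε : 0 ≤ ε)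
    (hr : 0 < r) (hCg : 0 ≤ Cg) {ν : ℝ} (hν : 0 < ν)
    (small1 : M * (3 * ε * r + L * (ν * ((‖A‖ * r + Cg) * T)) + ε * r)
      + ν * T * (‖A‖ * M + 1) * (L * r + Cg) < r)
    (small2 : M * (3 * ε * (M * L + 1) + L * (ν * ((‖A‖ * (M * L + 1) + L) * T)))
      + ν * T * (‖A‖ * M + 1) * (L * (M * L + 1)) ≤ 1 / 4) :
    ∃ y : ℝ → E, (∀ t, ‖y t‖ ≤ r) ∧ Sol A ν y (fun t => g t (y t)) := by
  have hM := hG.pos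
  have hF := hG.top
  let X : Set (BoundedContinuousFunction ℝ E) := {y | (∀ t, ‖y t‖ ≤ r) ∧ ∀ s t, ‖y s - y t‖ ≤ ν * (‖A‖ * r + Cg) * |s - t|}
  have hXc : IsClosed X := by
    have : X = (⋂ t, {y : BoundedContinuousFunction ℝ E | ‖y t‖ ≤ r}) ∩ ⋂ s, ⋂ t, {y : BoundedContinuousFunction ℝ E | ‖y s - y t‖ ≤ ν * (‖A‖ * r + Cg) * |s - t|} := by
      ext y; simp [X]
    rw [this]
    have ev : ∀ t, Continuous fun y : BoundedContinuousFunction ℝ E => y t := fun t => by fun_prop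
    refine IsClosed.inter (isClosed_iInter fun t => ?_) (isClosed_iInter fun s => isClosed_iInter fun t => ?_)
    · exact isClosed_le (ev t).norm continuous_const
    · exact isClosed_le ((ev s).sub (ev t)).norm continuous_const
  have : CompleteSpace X := hXc.completeSpace_coe
  have hX0 : (0 : BoundedContinuousFunction ℝ E) ∈ X := by
    refine ⟨fun t => by simpa using hr.le, fun s t => ?_⟩
    simp
    positivity
  have : Nonempty X := ⟨⟨0, hX0⟩⟩
  have main : ∀ y : X, ∃ z : X, Sol A ν z.1 (fun t => g t (y.1 t)) := by
    rintro ⟨y, yb, yl⟩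
    have yc : Continuous y := y.continuous
    have gy := hg.comp_cont yc yb
    have g0 : Continuous fun t => g t 0 := hg.comp_cont continuous_const (fun _ => by simpa using hr.le)
    obtain ⟨z, z1, z2, -⟩ := hG.ex ν hν _ Cg gy (fun t => hg.g4 _ _ (yb t))
    obtain ⟨δ, hδ, hδr⟩ : ∃ δ > 0, M * (3 * ε * r + L * (ν * ((‖A‖ * r + Cg) * T)) + ε * r)
      + ν * T * (‖A‖ * M + 1) * (L * r + Cg) + δ ≤ r := ⟨_, sub_pos.mpr small1, by linarith⟩
    have zb : ∀ t, ‖z t‖ ≤ r := by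
      have := lemmaN (y2 := fun _ => 0) (e := fun t => g t 0) (w := z) (d := r) (l := (‖A‖ * r + Cg) * T) (η₁ := Cg) (η₂ := ε * r) (δ := δ)
        hF hM hg hT hL hε hν yc continuous_const yb (fun _ => by simpa using hr.le)
        ⟨_, z2⟩ g0 ⟨Cg, fun t => hg.g4 _ _ (by simpa using hr.le)⟩ (by simpa using z1) hr.le (by positivity)
        hCg (by positivity) (by simpa using yb)
        (by
          simp only [eventually_top, sub_zero]
          intro t s hs
          refine (yl s t).trans ?_
          rw [← mul_assoc]
          refine mul_le_mul_of_nonneg_left ?_ (by positivity)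
          rw [abs_of_nonneg (by linarith [hs.1])]
          linarith [hs.2])
        (Eventually.of_forall fun t => hg.g4 _ _ (by simpa using hr.le)) (Eventually.of_forall hg.g2) hδ
      simp only [eventually_top] at this
      intro t
      exact (this t).trans hδr
    refine ⟨⟨BoundedContinuousFunction.ofNormedAddCommGroup z z1.cont r zb, zb, ?_⟩, z1⟩
    exact glob_lip hν z1 zb (fun t => hg.g4 _ _ (yb t))
  choose Φ hΦ using main
  have gdiff : ∀ (y1 y2 : X) (d : ℝ), (∀ t, ‖y1.1 t - y2.1 t‖ ≤ d) → ∀ t, ‖g t (y1.1 t) - g t (y2.1 t)‖ ≤ L * d :=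
    fun y1 y2 d h t => (hg.g3 _ _ _ (y1.2.1 t) (y2.2.1 t)).trans (mul_le_mul_of_nonneg_left (h t) hL)
  have bd : ∀ y1 y2 : X, ∃ K, ∀ t, ‖y1.1 t - y2.1 t‖ ≤ K := fun y1 y2 =>
    ⟨r + r, fun t => (norm_sub_le _ _).trans (add_le_add (y1.2.1 t) (y2.2.1 t))⟩
  have contr : ContractingWith (1 / 2 : NNReal) (Φ^[2]) := by
    refine ⟨by rw [← NNReal.coe_lt_coe]; norm_num, LipschitzWith.of_dist_le_mul fun y1 y2 => ?_⟩
    simp only [Function.iterate_succ, Function.iterate_zero, Function.comp_apply, id]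
    by_cases hd0 : dist y1 y2 = 0
    · rw [dist_eq_zero.mp hd0]; simp
    have hd : 0 < dist y1 y2 := lt_of_le_of_ne dist_nonneg (Ne.symm hd0)
    set d := dist y1 y2 with hdd
    have p0 : ∀ t, ‖y1.1 t - y2.1 t‖ ≤ d := fun t => by
      rw [← dist_eq_norm]; exact BoundedContinuousFunction.dist_coe_le_dist t
    have q1 := (hΦ y1).sub (hΦ y2)
    have cc : ∀ y : X, Continuous fun t => g t (y.1 t) := fun y => hg.comp_cont y.1.continuous y.2.1
    have p1 : ∀ t, ‖(Φ y1).1 t - (Φ y2).1 t‖ ≤ (M * L + 1) * d := by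
      have := hF.ap ν hν _ _ (L * d) ((cc y1).sub (cc y2)) ⟨_, gdiff y1 y2 d p0⟩ (bd _ _) q1 (by positivity)
        (Eventually.of_forall (gdiff y1 y2 d p0)) d hd
      simp only [eventually_top] at this
      intro t
      refine (this t).trans (le_of_eq ?_)
      ring
    have hl := win_lip (a := (M * L + 1) * d) (b := L * d) hF hT hν q1 (Eventually.of_forall p1) (Eventually.of_forall (gdiff y1 y2 d p0)) (by positivity) (by positivity)
    have q2 := (hΦ (Φ y1)).sub (hΦ (Φ y2))
    have fin := lemmaN (e := fun _ => 0) (d := (M * L + 1) * d) (η₁ := 0) (η₂ := 0) (δ := d / 4) hF hM hg hT hL hε hν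
      (Φ y1).1.continuous (Φ y2).1.continuous (Φ y1).2.1 (Φ y2).2.1 (bd (Φ (Φ y1)) (Φ (Φ y2)))
      continuous_const ⟨0, by simp⟩ (by simpa using q2) (by positivity) (by positivity) le_rfl le_rfl
      (Eventually.of_forall p1) hl (by simp) (by simp) (by positivity)
    simp only [eventually_top] at fin
    have : dist (Φ (Φ y1)) (Φ (Φ y2)) ≤ d / 2 := by
      rw [Subtype.dist_eq, BoundedContinuousFunction.dist_le (by positivity)]
      intro t
      rw [dist_eq_norm]
      refine (fin t).trans ?_
      have := mul_le_mul_of_nonneg_right small2 hd.le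
      nlinarith
    refine this.trans (le_of_eq ?_)
    push_cast; ring
  have fp := contr.isFixedPt_fixedPoint_iterate
  set y := ContractingWith.fixedPoint (Φ^[2]) contr
  refine ⟨y.1, y.2.1, ?_⟩
  have := hΦ y
  rw [fp.eq] at this
  exact this

end NLin2

section KL

set_option linter.unusedSectionVars false

variable {E : Type*} [NormedAddCommGroup E] [NormedSpace ℝ E] [CompleteSpace E]

lemma KL_deriv (r₁ νbar : ℝ) (f : ℝ → E → ℝ → E)
    (hdiff : ∀ t : ℝ, ∀ ν ∈ Set.Icc (0:ℝ) νbar, ∀ x ∈ Metric.ball (0 : E) r₁,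
      DifferentiableAt ℝ (fun y => f t y ν) x)
    (hdcont : ∀ ε > 0, ∃ δ > 0, ∀ t : ℝ, ∀ ν ∈ Set.Icc (0:ℝ) νbar,
      ∀ x ∈ Metric.ball (0 : E) r₁, ∀ y ∈ Metric.ball (0 : E) r₁, ‖x - y‖ < δ →
      ‖fderiv ℝ (fun z => f t z ν) x - fderiv ℝ (fun z => f t z ν) y‖ ≤ ε)
    (x₀ : E) (hx₀ : x₀ ∈ Metric.ball (0 : E) r₁) (κ : ℝ) (hκ : 0 < κ) :
    ∃ ρ > 0, ‖x₀‖ + ρ < r₁ ∧ ∀ t : ℝ, ∀ ν ∈ Set.Icc (0:ℝ) νbar, ∀ a b : E, ‖a‖ ≤ ρ → ‖b‖ ≤ ρ →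
      ‖f t (x₀ + a) ν - f t (x₀ + b) ν - fderiv ℝ (fun z => f t z ν) x₀ (a - b)‖ ≤ κ * ‖a - b‖ := by
  obtain ⟨δ, hδ, h⟩ := hdcont κ hκ
  have hx : ‖x₀‖ < r₁ := by simpa using hx₀
  refine ⟨min (δ / 2) ((r₁ - ‖x₀‖) / 2), lt_min (by positivity) (by linarith), ?_, ?_⟩
  · linarith [min_le_right (δ / 2) ((r₁ - ‖x₀‖) / 2)]
  · intro t ν hν a b ha hb
    set ρ := min (δ / 2) ((r₁ - ‖x₀‖) / 2)
    have hρ1 : ρ ≤ δ / 2 := min_le_left _ _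
    have hρ2 : ρ ≤ (r₁ - ‖x₀‖) / 2 := min_le_right _ _
    have hin : ∀ x ∈ closedBall x₀ ρ, x ∈ Metric.ball (0 : E) r₁ := by
      intro x hx
      rw [mem_closedBall, dist_eq_norm] at hx
      rw [mem_ball_zero_iff]
      have := norm_add_le (x - x₀) x₀
      rw [sub_add_cancel] at this
      linarith
    have := Convex.norm_image_sub_le_of_norm_fderiv_le' (f := fun z => f t z ν) (s := closedBall x₀ ρ)
      (φ := fderiv ℝ (fun z => f t z ν) x₀) (C := κ) (x := x₀ + b) (y := x₀ + a)
      (fun x hx => hdiff t ν hν x (hin x hx))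
      (fun x hx => h t ν hν x (hin x hx) x₀ hx₀ (by
        rw [mem_closedBall, dist_eq_norm] at hx; linarith)) (convex_closedBall _ _)
      (by simpa [dist_eq_norm] using hb) (by simpa [dist_eq_norm] using ha)
    simpa using this

lemma KL_avg (r₁ νbar : ℝ) (hνbar : 0 < νbar) (f : ℝ → E → ℝ → E) (f₀ : E → E)
    (hcont : ContinuousOn (fun p : ℝ × E × ℝ => f p.1 p.2.1 p.2.2)
      (Set.univ ×ˢ Metric.closedBall 0 r₁ ×ˢ Set.Icc 0 νbar))
    (huc : UniformContinuousOn (fun p : ℝ × (E × ℝ) => f p.1 p.2.1 p.2.2)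
      (Set.univ ×ˢ (Metric.closedBall 0 r₁ ×ˢ Set.Icc 0 νbar)))
    (havg : ∀ ε > 0, ∃ T₀ > 0, ∀ T ≥ T₀, ∀ s : ℝ,
      ∀ x ∈ Metric.closedBall (0 : E) r₁,
      ‖(1 / (2 * T)) • (∫ t in -T..T, f (t + s) x 0) - f₀ x‖ ≤ ε) (κ : ℝ) (hκ : 0 < κ) :
    ∃ T > 0, ∃ ν₁ > 0, ν₁ ≤ νbar ∧ ∀ ν ∈ Set.Icc (0:ℝ) ν₁, ∀ t, ∀ x ∈ Metric.closedBall (0 : E) r₁,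
      ‖(∫ s in t..t + T, f s x ν) - T • f₀ x‖ ≤ T * κ := by
  obtain ⟨T₀, hT₀, h⟩ := havg (κ / 2) (by positivity)
  rw [Metric.uniformContinuousOn_iff] at huc
  obtain ⟨δ, hδ, hu⟩ := huc (κ / 2) (by positivity)
  refine ⟨2 * T₀, by positivity, min (δ / 2) νbar, lt_min (by positivity) hνbar, min_le_right _ _, ?_⟩
  intro ν hν t x hx
  have hν' : ν ∈ Set.Icc 0 νbar := ⟨hν.1, hν.2.trans (min_le_right _ _)⟩
  have h0' : (0:ℝ) ∈ Set.Icc 0 νbar := ⟨le_rfl, hνbar.le⟩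
  have fc : ∀ ν ∈ Set.Icc 0 νbar, Continuous fun s => f s x ν := fun ν hν =>
    hcont.comp_continuous (f := fun s : ℝ => (s, x, ν)) (by fun_prop) (fun s => ⟨trivial, hx, hν⟩)
  have e1 : ∫ s in t..t + 2 * T₀, f s x 0 = ∫ u in -T₀..T₀, f (u + (t + T₀)) x 0 := by
    rw [intervalIntegral.integral_comp_add_right (fun s => f s x 0)]
    congr 1 <;> ring
  have h1 := h T₀ le_rfl (t + T₀) x hx
  rw [← e1] at h1
  have h2 : ‖(∫ s in t..t + 2 * T₀, f s x 0) - (2 * T₀) • f₀ x‖ ≤ (2 * T₀) * (κ / 2) := by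
    have : (∫ s in t..t + 2 * T₀, f s x 0) - (2 * T₀) • f₀ x
        = (2 * T₀) • ((1 / (2 * T₀)) • (∫ s in t..t + 2 * T₀, f s x 0) - f₀ x) := by
      rw [smul_sub, smul_smul, mul_one_div_cancel (by positivity), one_smul]
    rw [this, norm_smul, Real.norm_eq_abs, abs_of_pos (by positivity)]
    exact mul_le_mul_of_nonneg_left h1 (by positivity)
  have h3 : ‖(∫ s in t..t + 2 * T₀, f s x ν) - ∫ s in t..t + 2 * T₀, f s x 0‖ ≤ (2 * T₀) * (κ / 2) := by
    rw [← intervalIntegral.integral_sub ((fc ν hν').intervalIntegrable _ _) ((fc 0 h0').intervalIntegrable _ _)]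
    have := intervalIntegral.norm_integral_le_of_norm_le_const (a := t) (b := t + 2 * T₀)
      (f := fun s => f s x ν - f s x 0) (C := κ / 2) (fun s _ => by
        have := hu (s, (x, ν)) ⟨trivial, hx, hν'⟩ (s, (x, 0)) ⟨trivial, hx, h0'⟩ (by
          simp only [Prod.dist_eq, dist_self, Real.dist_eq, sub_zero, abs_of_nonneg hν.1]
          have : ν ≤ δ / 2 := hν.2.trans (min_le_left _ _)
          simp only [max_lt_iff]
          exact ⟨hδ, hδ, by linarith⟩)
        rw [dist_eq_norm] at this
        exact this.le)
    have e : t + 2 * T₀ - t = 2 * T₀ := by ring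
    rw [e, abs_of_pos (by positivity : 0 < 2 * T₀)] at this
    linarith
  have := norm_add_le ((∫ s in t..t + 2 * T₀, f s x ν) - ∫ s in t..t + 2 * T₀, f s x 0)
    ((∫ s in t..t + 2 * T₀, f s x 0) - (2 * T₀) • f₀ x)
  rw [sub_add_sub_cancel] at this
  linarith

lemma KL_main (r₁ νbar : ℝ) (hr₁ : 0 < r₁) (hνbar : 0 < νbar) (f : ℝ → E → ℝ → E) (f₀ : E → E)
    (hcont : ContinuousOn (fun p : ℝ × E × ℝ => f p.1 p.2.1 p.2.2)
      (Set.univ ×ˢ Metric.closedBall 0 r₁ ×ˢ Set.Icc 0 νbar))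
    (C : ℝ) (hC : ∀ t, ∀ x ∈ Metric.closedBall (0 : E) r₁, ∀ ν ∈ Set.Icc (0:ℝ) νbar, ‖f t x ν‖ ≤ C)
    (huc : UniformContinuousOn (fun p : ℝ × (E × ℝ) => f p.1 p.2.1 p.2.2)
      (Set.univ ×ˢ (Metric.closedBall 0 r₁ ×ˢ Set.Icc 0 νbar)))
    (hdiff : ∀ t : ℝ, ∀ ν ∈ Set.Icc (0:ℝ) νbar, ∀ x ∈ Metric.ball (0 : E) r₁,
      DifferentiableAt ℝ (fun y => f t y ν) x)
    (hdcont : ∀ ε > 0, ∃ δ > 0, ∀ t : ℝ, ∀ ν ∈ Set.Icc (0:ℝ) νbar,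
      ∀ x ∈ Metric.ball (0 : E) r₁, ∀ y ∈ Metric.ball (0 : E) r₁, ‖x - y‖ < δ →
      ‖fderiv ℝ (fun z => f t z ν) x - fderiv ℝ (fun z => f t z ν) y‖ ≤ ε)
    (havg : ∀ ε > 0, ∃ T₀ > 0, ∀ T ≥ T₀, ∀ s : ℝ,
      ∀ x ∈ Metric.closedBall (0 : E) r₁,
      ‖(1 / (2 * T)) • (∫ t in -T..T, f (t + s) x 0) - f₀ x‖ ≤ ε)
    (x₀ : E) (hx₀ : x₀ ∈ Metric.ball (0 : E) r₁) (hzero : f₀ x₀ = 0) (A : E →L[ℝ] E)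
    (hA : HasFDerivAt f₀ A x₀) :
    ∃ L ≥ 0, ∃ Cg ≥ 0, ∀ ε > 0, ε ≤ 1 → ∃ r > 0, ‖x₀‖ + r < r₁ ∧ ∃ T > 0, ∃ ν₁ > 0, ν₁ ≤ νbar ∧
      ∀ ν ∈ Set.Icc (0:ℝ) ν₁, NL r ε L T Cg (fun t a => f t (x₀ + a) ν - A a) := by
  have hder := KL_deriv r₁ νbar f hdiff hdcont x₀ hx₀
  have h0' : (0:ℝ) ∈ Set.Icc 0 νbar := ⟨le_rfl, hνbar.le⟩
  have hC0 : 0 ≤ C := (norm_nonneg _).trans (hC 0 0 (by simpa using hr₁.le) 0 h0')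
  obtain ⟨ρ₁, hρ₁, hρ₁', hd1⟩ := hder 1 one_pos
  set LD := 2 * C / ρ₁ + 1 with hLD
  have hLD0 : 0 ≤ LD := by positivity
  have hinr : ∀ ρ, ‖x₀‖ + ρ < r₁ → ∀ a : E, ‖a‖ ≤ ρ → x₀ + a ∈ Metric.closedBall (0 : E) r₁ := by
    intro ρ hρ a ha
    rw [mem_closedBall_zero_iff]
    linarith [norm_add_le x₀ a]
  have hD : ∀ t : ℝ, ∀ ν ∈ Set.Icc (0:ℝ) νbar, ∀ v : E, ‖fderiv ℝ (fun z => f t z ν) x₀ v‖ ≤ LD * ‖v‖ := by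
    intro t ν hν v
    by_cases hv : v = 0
    · simp [hv]
    have hvp : 0 < ‖v‖ := norm_pos_iff.mpr hv
    set D := fderiv ℝ (fun z => f t z ν) x₀
    set w := (ρ₁ / ‖v‖) • v with hw
    have hwn : ‖w‖ = ρ₁ := by
      rw [hw, norm_smul, Real.norm_eq_abs, abs_of_pos (by positivity), div_mul_cancel₀ _ hvp.ne']
    have q1 := hd1 t ν hν w 0 hwn.le (by simpa using hρ₁.le)
    rw [sub_zero, hwn, add_zero] at q1
    have q2 := hC t _ (hinr ρ₁ hρ₁' w hwn.le) ν hν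
    have q3 := hC t x₀ (ball_subset_closedBall hx₀) ν hν
    have q4 : ‖D w‖ ≤ 2 * C + ρ₁ := by
      have e : D w = (f t (x₀ + w) ν - f t x₀ ν) - (f t (x₀ + w) ν - f t x₀ ν - D w) := by abel
      rw [e]
      have := norm_sub_le (f t (x₀ + w) ν - f t x₀ ν) (f t (x₀ + w) ν - f t x₀ ν - D w)
      have := norm_sub_le (f t (x₀ + w) ν) (f t x₀ ν)
      linarith
    rw [hw, map_smul, norm_smul, Real.norm_eq_abs, abs_of_pos (by positivity)] at q4
    rw [div_mul_eq_mul_div, div_le_iff₀ hvp] at q4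
    have : LD * ‖v‖ = (2 * C + ρ₁) * ‖v‖ / ρ₁ := by rw [hLD]; field_simp
    rw [this, le_div_iff₀ hρ₁]
    linarith
  refine ⟨LD + 1 + ‖A‖, by positivity, C + ‖A‖ * r₁, by positivity, fun ε hε hε1 => ?_⟩
  obtain ⟨ρ, hρ, hρ', hd⟩ := hder (ε / 5) (by positivity)
  have hlo := hA.isLittleO.def (show 0 < ε / 5 by positivity)
  obtain ⟨ρ₂, hρ₂, hlo⟩ := Metric.eventually_nhds_iff.mp hlo
  set r := min ρ (ρ₂ / 2) with hr
  have hr0 : 0 < r := lt_min hρ (by positivity)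
  have hrρ : r ≤ ρ := min_le_left _ _
  have hrρ₂ : r ≤ ρ₂ / 2 := min_le_right _ _
  have hrr : ‖x₀‖ + r < r₁ := by linarith
  obtain ⟨T, hT, ν₁, hν₁, hν₁', hav⟩ := KL_avg r₁ νbar hνbar f f₀ hcont huc havg (ε / 5 * r) (by positivity)
  refine ⟨r, hr0, hrr, T, hT, ν₁, hν₁, hν₁', fun ν hν => ?_⟩
  have hνb : ν ∈ Set.Icc 0 νbar := ⟨hν.1, hν.2.trans hν₁'⟩
  have hin := hinr r hrr
  have fc : ∀ x ∈ Metric.closedBall (0 : E) r₁, Continuous fun s => f s x ν := fun x hx =>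
    hcont.comp_continuous (f := fun s : ℝ => (s, x, ν)) (by fun_prop) (fun s => ⟨trivial, hx, hνb⟩)
  have hr' : ∀ t a b, ‖a‖ ≤ r → ‖b‖ ≤ r → ‖f t (x₀ + a) ν - f t (x₀ + b) ν - fderiv ℝ (fun z => f t z ν) x₀ (a - b)‖ ≤ ε / 5 * ‖a - b‖ :=
    fun t a b ha hb => hd t ν hνb a b (ha.trans hrρ) (hb.trans hrρ)
  have h00 : ‖(0:E)‖ ≤ r := by simpa using hr0.le
  refine ⟨?_, ?_, ?_, ?_, ?_, ?_⟩
  · refine ContinuousOn.sub ?_ (by fun_prop)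
    exact hcont.comp (f := fun p : ℝ × E => (p.1, x₀ + p.2, ν)) (by fun_prop)
      (fun p hp => ⟨trivial, hin _ (by simpa using hp.2), hνb⟩)
  · intro t a b ha hb
    by_cases hab : a - b = 0
    · have : a = b := sub_eq_zero.mp hab
      simp [this]
    have hp : 0 < ‖a - b‖ := norm_pos_iff.mpr hab
    set v := a - b with hv
    set θ := ‖v‖ / r with hθ
    have hθ0 : 0 < θ := by positivity
    set u := θ⁻¹ • v with hu
    have hvu : v = θ • u := by rw [hu, smul_smul, mul_inv_cancel₀ hθ0.ne', one_smul]
    have hun : ‖u‖ = r := by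
      rw [hu, norm_smul, norm_inv, Real.norm_eq_abs, abs_of_pos hθ0, hθ]; field_simp
    have hθr : θ * r = ‖v‖ := by rw [hθ]; field_simp
    have hAv : A v = θ • A u := (congrArg A hvu).trans (map_smul A θ u)
    have ca := fc _ (hin a ha)
    have cb := fc _ (hin b hb)
    have cu := fc _ (hin u hun.le)
    have c0 := fc x₀ (ball_subset_closedBall hx₀)
    have i1 : Continuous fun s => (f s (x₀ + a) ν - f s (x₀ + b) ν) - θ • (f s (x₀ + u) ν - f s x₀ ν) :=
      (ca.sub cb).sub ((cu.sub c0).const_smul θ)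
    have i2 : Continuous fun s => θ • (f s (x₀ + u) ν - f s x₀ ν) := (cu.sub c0).const_smul θ
    have i3 : Continuous fun s => θ • (f s (x₀ + u) ν - f s x₀ ν) - A v := i2.sub continuous_const
    have dec : ∫ s in t..t + T, ((f s (x₀ + a) ν - A a) - (f s (x₀ + b) ν - A b))
        = (∫ s in t..t + T, ((f s (x₀ + a) ν - f s (x₀ + b) ν) - θ • (f s (x₀ + u) ν - f s x₀ ν)))
        + θ • (((∫ s in t..t + T, f s (x₀ + u) ν) - T • f₀ (x₀ + u))
          - ((∫ s in t..t + T, f s x₀ ν) - T • f₀ x₀) + T • (f₀ (x₀ + u) - f₀ x₀ - A u)) := by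
      have e1 : θ • (((∫ s in t..t + T, f s (x₀ + u) ν) - T • f₀ (x₀ + u))
          - ((∫ s in t..t + T, f s x₀ ν) - T • f₀ x₀) + T • (f₀ (x₀ + u) - f₀ x₀ - A u))
          = (∫ s in t..t + T, θ • (f s (x₀ + u) ν - f s x₀ ν)) - T • A v := by
        rw [intervalIntegral.integral_smul, intervalIntegral.integral_sub (cu.intervalIntegrable _ _) (c0.intervalIntegrable _ _),
          hAv]
        clear_value θ u
        module
      have e2 : T • A v = ∫ s in t..t + T, A v := by simp
      rw [e1, e2, ← intervalIntegral.integral_sub (i2.intervalIntegrable _ _) (by simp),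
        ← intervalIntegral.integral_add (i1.intervalIntegrable _ _) (i3.intervalIntegrable _ _)]
      congr 1; ext s
      rw [hv, map_sub]; abel
    rw [dec]
    have n1 : ‖∫ s in t..t + T, ((f s (x₀ + a) ν - f s (x₀ + b) ν) - θ • (f s (x₀ + u) ν - f s x₀ ν))‖ ≤ T * (2 * (ε / 5) * ‖v‖) := by
      have := intervalIntegral.norm_integral_le_of_norm_le_const (a := t) (b := t + T)
        (f := fun s => (f s (x₀ + a) ν - f s (x₀ + b) ν) - θ • (f s (x₀ + u) ν - f s x₀ ν)) (C := 2 * (ε / 5) * ‖v‖)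
        (fun s _ => by
          have p1 := hr' s a b ha hb
          have p2 := hr' s u 0 hun.le h00
          rw [add_zero, sub_zero, hun] at p2
          have e : (f s (x₀ + a) ν - f s (x₀ + b) ν) - θ • (f s (x₀ + u) ν - f s x₀ ν)
            = (f s (x₀ + a) ν - f s (x₀ + b) ν - fderiv ℝ (fun z => f s z ν) x₀ (a - b))
              - θ • (f s (x₀ + u) ν - f s x₀ ν - fderiv ℝ (fun z => f s z ν) x₀ u) := by
            rw [← hv, hvu, map_smul]; module
          rw [e]
          refine (norm_sub_le _ _).trans ?_
          rw [norm_smul, Real.norm_eq_abs, abs_of_pos hθ0]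
          have p3 := mul_le_mul_of_nonneg_left p2 hθ0.le
          have p4 : θ * (ε / 5 * r) = ε / 5 * ‖v‖ := by rw [← hθr]; ring
          rw [← hv] at p1 ⊢
          linarith)
      simpa [abs_of_pos hT, mul_comm] using this
    have m1 := hav ν hν t _ (hin u hun.le)
    have m2 := hav ν hν t x₀ (ball_subset_closedBall hx₀)
    have m3 : ‖T • (f₀ (x₀ + u) - f₀ x₀ - A u)‖ ≤ T * (ε / 5 * r) := by
      rw [norm_smul, Real.norm_eq_abs, abs_of_pos hT]
      refine mul_le_mul_of_nonneg_left ?_ hT.le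
      have := hlo (y := x₀ + u) (by rw [dist_eq_norm, add_sub_cancel_left, hun]; linarith)
      rwa [add_sub_cancel_left, hun] at this
    have m4 : ‖((∫ s in t..t + T, f s (x₀ + u) ν) - T • f₀ (x₀ + u))
          - ((∫ s in t..t + T, f s x₀ ν) - T • f₀ x₀) + T • (f₀ (x₀ + u) - f₀ x₀ - A u)‖ ≤ 3 * (T * (ε / 5 * r)) := by
      refine (norm_add_le _ _).trans ?_
      have := norm_sub_le ((∫ s in t..t + T, f s (x₀ + u) ν) - T • f₀ (x₀ + u)) ((∫ s in t..t + T, f s x₀ ν) - T • f₀ x₀)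
      linarith
    refine (norm_add_le _ _).trans ?_
    rw [norm_smul, Real.norm_eq_abs, abs_of_pos hθ0]
    have m5 := mul_le_mul_of_nonneg_left m4 hθ0.le
    have m6 : θ * (3 * (T * (ε / 5 * r))) = 3 * (T * (ε / 5 * ‖v‖)) := by rw [← hθr]; ring
    linarith
  · intro t
    have := hav ν hν t x₀ (ball_subset_closedBall hx₀)
    rw [hzero, smul_zero, sub_zero] at this
    simp only [add_zero, map_zero, sub_zero]
    refine this.trans ?_
    have : 0 < T * (ε * r) := by positivity
    linarith
  · intro t a b ha hb
    have p1 := hr' t a b ha hb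
    have p2 := hD t ν hνb (a - b)
    have p3 := A.le_opNorm (a - b)
    have e : (f t (x₀ + a) ν - A a) - (f t (x₀ + b) ν - A b)
      = (f t (x₀ + a) ν - f t (x₀ + b) ν - fderiv ℝ (fun z => f t z ν) x₀ (a - b))
        + fderiv ℝ (fun z => f t z ν) x₀ (a - b) - A (a - b) := by
      rw [map_sub A]; abel
    rw [e]
    refine (norm_sub_le _ _).trans ?_
    have := norm_add_le (f t (x₀ + a) ν - f t (x₀ + b) ν - fderiv ℝ (fun z => f t z ν) x₀ (a - b)) (fderiv ℝ (fun z => f t z ν) x₀ (a - b))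
    have : ε / 5 * ‖a - b‖ ≤ 1 * ‖a - b‖ := by gcongr; linarith
    linarith
  · intro t a ha
    refine (norm_sub_le _ _).trans (add_le_add (hC t _ (hin a ha) ν hνb) (A.le_opNorm_of_le (ha.trans ?_)))
    linarith [norm_nonneg x₀]
  · intro t a b a' b' ha hb ha' hb'
    have p1 := hr' t a b ha hb
    have p1' := hr' t a' b' ha' hb'
    set D := fderiv ℝ (fun z => f t z ν) x₀ with hDd
    have p2 := hD t ν hνb ((a - b) - (a' - b'))
    have p3 := A.le_opNorm ((a - b) - (a' - b'))
    rw [← hDd] at p2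
    have e : ((f t (x₀ + a) ν - A a) - (f t (x₀ + b) ν - A b)) - ((f t (x₀ + a') ν - A a') - (f t (x₀ + b') ν - A b'))
      = (f t (x₀ + a) ν - f t (x₀ + b) ν - D (a - b)) - (f t (x₀ + a') ν - f t (x₀ + b') ν - D (a' - b'))
        + (D ((a - b) - (a' - b')) - A ((a - b) - (a' - b'))) := by
      simp only [map_sub]; abel
    rw [e]
    refine (norm_add_le _ _).trans ?_
    have k1 := norm_sub_le (f t (x₀ + a) ν - f t (x₀ + b) ν - D (a - b)) (f t (x₀ + a') ν - f t (x₀ + b') ν - D (a' - b'))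
    have k2 := norm_sub_le (D ((a - b) - (a' - b'))) (A ((a - b) - (a' - b')))
    have k3 : ε / 5 * ‖a - b‖ ≤ ε * ‖a - b‖ := by gcongr; linarith
    have k4 : ε / 5 * ‖a' - b'‖ ≤ ε * ‖a' - b'‖ := by gcongr; linarith
    have k5 := norm_nonneg ((a - b) - (a' - b'))
    linarith

end KL

lemma rap_event {E F : Type*} [NormedAddCommGroup E] [NormedAddCommGroup F]
    (f : ℝ → E → F) (S : Set E) (C : ℝ) (hC : ∀ t, ∀ x ∈ S, ‖f t x‖ ≤ C) (τ η : ℝ) (hC0 : 0 ≤ C)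
    (h : Filter.limsup (fun t => ⨆ x ∈ S, ‖f (t + τ) x - f t x‖) (Filter.cocompact ℝ) < η) :
    ∀ᶠ t in Filter.cocompact ℝ, ∀ x ∈ S, ‖f (t + τ) x - f t x‖ ≤ η := by
  have hb : ∀ t x, (⨆ (_ : x ∈ S), ‖f (t + τ) x - f t x‖) ≤ 2 * C := by
    intro t x
    refine Real.iSup_le (fun hx => ?_) (by positivity)
    have := norm_sub_le (f (t + τ) x) (f t x)
    linarith [hC (t + τ) x hx, hC t x hx]
  have hev := Filter.eventually_lt_of_limsup_lt h
    (Filter.isBoundedUnder_of ⟨2 * C, fun t => Real.iSup_le (hb t) (by positivity)⟩)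
  filter_upwards [hev] with t ht x hx
  have h1 : (⨆ (_ : x ∈ S), ‖f (t + τ) x - f t x‖) ≤ ⨆ x ∈ S, ‖f (t + τ) x - f t x‖ :=
    le_ciSup (f := fun x => ⨆ (_ : x ∈ S), ‖f (t + τ) x - f t x‖) ⟨2 * C, by rintro _ ⟨y, rfl⟩; exact hb t y⟩ x
  rw [ciSup_pos hx] at h1
  linarith

lemma RelativelyDense.mono' {S S' : Set ℝ} (h : RelativelyDense S) (hs : S ⊆ S') : RelativelyDense S' := by
  obtain ⟨l, hl, h⟩ := h
  refine ⟨l, hl, fun a => ?_⟩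
  obtain ⟨τ, h1, h2⟩ := h a
  exact ⟨τ, hs h1, h2⟩

lemma limsup_lt_helper (w : ℝ → ℝ) (hw : ∀ t, 0 ≤ w t) (ε : ℝ) (hε : 0 < ε)
    (h : ∀ᶠ t in Filter.cocompact ℝ, w t ≤ ε / 2) : Filter.limsup w (Filter.cocompact ℝ) < ε := by
  have : Filter.limsup w (Filter.cocompact ℝ) ≤ ε / 2 := by
    refine Filter.limsup_le_of_le ?_ h
    exact Filter.IsCoboundedUnder.of_frequently_ge (a := 0) (Filter.Frequently.of_forall hw)
  linarith

lemma params (M L a T r Cg : ℝ) (hM : 0 < M) (hL : 0 ≤ L) (ha : 0 ≤ a) (hT : 0 < T) (hr : 0 < r) (hCg : 0 ≤ Cg)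
    (ε : ℝ) (hε0 : 0 < ε) (hε : ε * (24 * M * (M * L + 1)) ≤ 1) :
    ∃ ν₂ > 0, ∀ ν, 0 < ν → ν ≤ ν₂ →
      (M*(3*ε*r + L*(ν*((a*r+Cg)*T)) + ε*r) + ν*T*(a*M+1)*(L*r+Cg) < r) ∧
      (M*(3*ε*(M*L+1) + L*(ν*((a*(M*L+1)+L)*T))) + ν*T*(a*M+1)*(L*(M*L+1)) ≤ 1/4) ∧
      (M*(3*ε + L*(ν*((a+L)*T))) + ν*T*(a*M+1)*L ≤ 1/2) := by
  set b := M * L + 1 with hb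
  have hML : 0 ≤ M * L := by positivity
  have hb1 : 1 ≤ b := by linarith
  set P1 := T * (M * L * (a * r + Cg) + (a * M + 1) * (L * r + Cg)) with hP1
  set P2 := T * (M * L * (a * b + L) + (a * M + 1) * (L * b)) with hP2
  have hP10 : 0 ≤ P1 := by positivity
  have hP20 : 0 ≤ P2 := by positivity
  have hMε : ε * (24 * M) ≤ 1 := by
    have : ε * (24 * M) * 1 ≤ ε * (24 * M) * b := by gcongr
    linarith
  refine ⟨min (r / (4 * (P1 + 1))) (1 / (8 * (P2 + 1))), by positivity, fun ν hν hν2 => ?_⟩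
  have h1 : ν * (4 * (P1 + 1)) ≤ r := by
    rw [← le_div_iff₀ (by positivity)]; exact hν2.trans (min_le_left _ _)
  have h2 : ν * (8 * (P2 + 1)) ≤ 1 := by
    rw [← le_div_iff₀ (by positivity)]; exact hν2.trans (min_le_right _ _)
  have q1 : ε * (24 * M) * r ≤ 1 * r := by gcongr
  have s2 : M*(3*ε*b + L*(ν*((a*b+L)*T))) + ν*T*(a*M+1)*(L*b) ≤ 1/4 := by
    have : M*(3*ε*b + L*(ν*((a*b+L)*T))) + ν*T*(a*M+1)*(L*b) = ε * (24 * M * b) / 8 + ν * P2 := by rw [hP2]; ring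
    rw [this]; linarith
  refine ⟨?_, s2, ?_⟩
  · have : M*(3*ε*r + L*(ν*((a*r+Cg)*T)) + ε*r) + ν*T*(a*M+1)*(L*r+Cg) = ε * (24 * M) * r / 6 + ν * P1 := by rw [hP1]; ring
    rw [this]; linarith
  · have : M*(3*ε + L*(ν*((a+L)*T))) + ν*T*(a*M+1)*L ≤ M*(3*ε*b + L*(ν*((a*b+L)*T))) + ν*T*(a*M+1)*(L*b) := by
      have z1 : 3 * ε ≤ 3 * ε * b := le_mul_of_one_le_right (by positivity) hb1
      have z2 : a ≤ a * b := le_mul_of_one_le_right ha hb1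
      have z3 : L ≤ L * b := le_mul_of_one_le_right hL hb1
      gcongr
    linarith

/-- Theorem 3.5: averaging principle — unique RAP solution of
`x' = ν f_ν(t,x)` near a hyperbolic zero `x₀` of the averaged field `f₀`. -/
theorem averaging_principle_RAP {n : ℕ} (r₁ νbar : ℝ)
    (hr₁ : 0 < r₁) (hνbar : 0 < νbar)
    (f : ℝ → EuclideanSpace ℝ (Fin n) → ℝ → EuclideanSpace ℝ (Fin n))
    (f₀ : EuclideanSpace ℝ (Fin n) → EuclideanSpace ℝ (Fin n))
    (hcont : ContinuousOn
      (fun p : ℝ × EuclideanSpace ℝ (Fin n) × ℝ => f p.1 p.2.1 p.2.2)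
      (Set.univ ×ˢ Metric.closedBall 0 r₁ ×ˢ Set.Icc 0 νbar))
    (hRAP : RAPUniform (fun t (p : EuclideanSpace ℝ (Fin n) × ℝ) => f t p.1 p.2)
      (Metric.closedBall 0 r₁ ×ˢ Set.Icc 0 νbar))
    (hdiff : ∀ t : ℝ, ∀ ν ∈ Set.Icc (0:ℝ) νbar,
      ∀ x ∈ Metric.ball (0 : EuclideanSpace ℝ (Fin n)) r₁,
      DifferentiableAt ℝ (fun y => f t y ν) x)
    (hdcont : ∀ ε > 0, ∃ δ > 0, ∀ t : ℝ, ∀ ν ∈ Set.Icc (0:ℝ) νbar,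
      ∀ x ∈ Metric.ball (0 : EuclideanSpace ℝ (Fin n)) r₁,
      ∀ y ∈ Metric.ball (0 : EuclideanSpace ℝ (Fin n)) r₁, ‖x - y‖ < δ →
      ‖fderiv ℝ (fun z => f t z ν) x - fderiv ℝ (fun z => f t z ν) y‖ ≤ ε)
    (havg : ∀ ε > 0, ∃ T₀ > 0, ∀ T ≥ T₀, ∀ s : ℝ,
      ∀ x ∈ Metric.closedBall (0 : EuclideanSpace ℝ (Fin n)) r₁,
      ‖(1 / (2 * T)) • (∫ t in -T..T, f (t + s) x 0) - f₀ x‖ ≤ ε)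
    (x₀ : EuclideanSpace ℝ (Fin n))
    (hx₀ : x₀ ∈ Metric.ball (0 : EuclideanSpace ℝ (Fin n)) r₁)
    (hzero : f₀ x₀ = 0)
    (hdf₀ : DifferentiableAt ℝ f₀ x₀)
    (heig : ∀ μ : ℂ,
      (((clmToMatrix (fderiv ℝ f₀ x₀)).map (Complex.ofReal)).charpoly).IsRoot μ →
      μ.re ≠ 0) :
    ∃ r₀ > 0, ∃ ν₀ > 0, ν₀ ≤ νbar ∧
      ∃ φ : ℝ → ℝ → EuclideanSpace ℝ (Fin n),
        ContinuousOn (fun p : ℝ × ℝ => φ p.2 p.1) (Set.univ ×ˢ Set.Ioc 0 ν₀) ∧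
        ∀ ν ∈ Set.Ioc (0:ℝ) ν₀,
          (RAP (φ ν) ∧
            (∀ t, HasDerivAt (φ ν) (ν • f t (φ ν t) ν) t) ∧
            ∀ t, ‖φ ν t - x₀‖ ≤ r₀) ∧
          ∀ ψ : ℝ → EuclideanSpace ℝ (Fin n), RAP ψ →
            (∀ t, HasDerivAt ψ (ν • f t (ψ t) ν) t) →
            (∀ t, ‖ψ t - x₀‖ ≤ r₀) → ψ = φ ν := by
  have hA := hdf₀.hasFDerivAt
  set A := fderiv ℝ f₀ x₀ with hAdef
  clear_value A
  obtain ⟨M, hG⟩ := green_exists A heig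
  have hM := hG.pos
  obtain ⟨⟨C, hCb⟩, huc, hrel⟩ := hRAP
  have hC : ∀ t, ∀ x ∈ Metric.closedBall (0 : EuclideanSpace ℝ (Fin n)) r₁, ∀ ν ∈ Set.Icc (0:ℝ) νbar,
      ‖f t x ν‖ ≤ C := fun t x hx ν hν => hCb t (x, ν) ⟨hx, hν⟩
  have hC0 : 0 ≤ C := (norm_nonneg _).trans (hC 0 0 (by simpa using hr₁.le) 0 ⟨le_rfl, hνbar.le⟩)
  obtain ⟨L, hL, Cg, hCg, hKL⟩ := KL_main r₁ νbar hr₁ hνbar f f₀ hcont C hC huc hdiff hdcont havg x₀ hx₀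
    hzero A hA
  have hD : 0 < 24 * M * (M * L + 1) := by positivity
  set ε := min 1 (1 / (24 * M * (M * L + 1))) with hεd
  have hε : 0 < ε := by positivity
  obtain ⟨r, hr, hrr, T, hT, ν₁, hν₁, hν₁', hNL⟩ := hKL ε hε (min_le_left _ _)
  obtain ⟨ν₂, hν₂, hpar⟩ := params M L ‖A‖ T r Cg hM hL (norm_nonneg _) hT hr hCg ε hε
    (by rw [← le_div_iff₀ hD]; exact min_le_right _ _)
  clear_value ε
  set ν₀ := min ν₁ ν₂ with hν₀d
  have hν₀ : 0 < ν₀ := lt_min hν₁ hν₂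
  have hνb : ∀ ν ∈ Set.Ioc 0 ν₀, ν ∈ Set.Icc 0 νbar := fun ν hν =>
    ⟨hν.1.le, (hν.2.trans (min_le_left _ _)).trans hν₁'⟩
  have hN : ∀ ν ∈ Set.Ioc 0 ν₀, NL r ε L T Cg (fun t a => f t (x₀ + a) ν - A a) := fun ν hν =>
    hNL ν ⟨hν.1.le, hν.2.trans (min_le_left _ _)⟩
  have hP := fun ν (hν : ν ∈ Set.Ioc 0 ν₀) => hpar ν hν.1 (hν.2.trans (min_le_right _ _))
  clear_value ν₀
  have hin : ∀ a : EuclideanSpace ℝ (Fin n), ‖a‖ ≤ r → x₀ + a ∈ Metric.closedBall (0 : EuclideanSpace ℝ (Fin n)) r₁ := by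
    intro a ha
    rw [mem_closedBall_zero_iff]
    linarith [norm_add_le x₀ a]
  have fcc : ∀ (a : ℝ → ℝ) (y : ℝ → EuclideanSpace ℝ (Fin n)), Continuous a → Continuous y → (∀ t, ‖y t‖ ≤ r) →
      ∀ ν ∈ Set.Icc 0 νbar, Continuous fun t => f (a t) (x₀ + y t) ν := by
    intro a y ha hy hyb ν hν
    exact hcont.comp_continuous (f := fun t : ℝ => (a t, x₀ + y t, ν)) (by fun_prop)
      (fun t => ⟨trivial, hin _ (hyb t), hν⟩)
  have gen1 : ∀ a b c : EuclideanSpace ℝ (Fin n), b + c = a + (b - a + c) := by intro a b c; abel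
  have gen2 : ∀ a b : EuclideanSpace ℝ (Fin n), b = a + (b - a) := by intro a b; abel
  have hsolp : ∀ ν (y e : ℝ → EuclideanSpace ℝ (Fin n)), (∀ t, HasDerivAt y (ν • (f t (x₀ + y t) ν + e t)) t) →
      Sol A ν y (fun t => (f t (x₀ + y t) ν - A (y t)) + e t) := by
    intro ν y e h t
    refine (h t).congr_deriv ?_
    exact congrArg (ν • ·) (gen1 _ _ _)
  have hsol : ∀ ν (y : ℝ → EuclideanSpace ℝ (Fin n)), (∀ t, HasDerivAt y (ν • f t (x₀ + y t) ν) t) →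
      Sol A ν y (fun t => (f t (x₀ + y t) ν - A (y t))) := by
    intro ν y h t
    refine (h t).congr_deriv ?_
    exact congrArg (ν • ·) (gen2 _ _)
  have hex : ∀ ν, ∃ y : ℝ → EuclideanSpace ℝ (Fin n), ν ∈ Set.Ioc 0 ν₀ →
      (∀ t, ‖y t‖ ≤ r) ∧ ∀ t, HasDerivAt y (ν • f t (x₀ + y t) ν) t := by
    intro ν
    by_cases hν : ν ∈ Set.Ioc 0 ν₀
    · obtain ⟨y, hy1, hy2⟩ := existence hG (hN ν hν) hT hL hε.le hr hCg hν.1 (hP ν hν).1 (hP ν hν).2.1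
      refine ⟨y, fun _ => ⟨hy1, fun t => (hy2 t).congr_deriv ?_⟩⟩
      exact congrArg (ν • ·) (gen2 _ _).symm
    · exact ⟨0, fun h => absurd h hν⟩
  choose y hy using hex
  have hyc : ∀ ν ∈ Set.Ioc 0 ν₀, Continuous (y ν) := fun ν hν =>
    continuous_iff_continuousAt.mpr fun t => ((hy ν hν).2 t).continuousAt
  set K : ℝ → ℝ := fun ν => 2*(M*(L*(ν*T)+1)+ν*T*(‖A‖*M+1)) with hK
  have hK0 : ∀ ν ∈ Set.Ioc 0 ν₀, 0 < K ν := by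
    intro ν hν
    have := hν.1
    simp only [hK]; positivity
  have stab : ∀ ν ∈ Set.Ioc 0 ν₀, ∀ (F : Filter ℝ) [F.NeBot], GoodF A M F →
      ∀ (y1 e : ℝ → EuclideanSpace ℝ (Fin n)), (∀ t, ‖y1 t‖ ≤ r) → Continuous e → (∃ K, ∀ t, ‖e t‖ ≤ K) →
      (∀ t, HasDerivAt y1 (ν • (f t (x₀ + y1 t) ν + e t)) t) → ∀ η ≥ 0, (∀ᶠ t in F, ‖e t‖ ≤ η) → ∀ δ > 0,
      ∀ᶠ t in F, ‖y1 t - y ν t‖ ≤ K ν * η + δ := by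
    intro ν hν F _ hF y1 e b1 ec eb h1 η hη he δ hδ
    exact stability hF hM (hN ν hν) hT hL hε.le hν.1 b1 (hy ν hν).1 ec eb (hsolp ν y1 e h1)
      (hsol ν _ (hy ν hν).2) (hP ν hν).2.2 hη he hδ
  refine ⟨r, hr, ν₀, hν₀, ?_, fun ν t => x₀ + y ν t, ?_, ?_⟩
  · exact (hνb ν₀ ⟨hν₀, le_rfl⟩).2
  · rw [Metric.continuousOn_iff]
    rintro ⟨t₀, ν⟩ ⟨-, hν⟩ ε' hε'
    have hν : ν ∈ Set.Ioc 0 ν₀ := hν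
    have hK1 := hK0 ν hν
    have hνp := hν.1
    obtain ⟨δ₁, hδ₁, hd1⟩ := Metric.continuous_iff.mp (hyc ν hν) t₀ (ε' / 2) (by positivity)
    set η := ε' / (8 * K ν) with hη
    have hη0 : 0 < η := by positivity
    obtain ⟨δ₂, hδ₂, hd2⟩ := Metric.uniformContinuousOn_iff.mp huc (η / 2) (by positivity)
    set δ₃ := ν * (η / 2) / (C + 1) with hδ₃
    have hδ₃0 : 0 < δ₃ := by positivity
    refine ⟨min δ₁ (min δ₂ δ₃), by positivity, ?_⟩
    rintro ⟨t, ν'⟩ ⟨-, hν'⟩ hdist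
    have hν' : ν' ∈ Set.Ioc 0 ν₀ := hν'
    simp only [Prod.dist_eq, max_lt_iff, lt_min_iff] at hdist
    obtain ⟨⟨ht1, -⟩, ⟨-, hn2⟩, -, hn3⟩ := hdist
    have key := stab ν hν ⊤ hG.top (y ν') (fun t => (ν' / ν) • f t (x₀ + y ν' t) ν' - f t (x₀ + y ν' t) ν)
      (hy ν' hν').1
      (((fcc (fun t => t) _ continuous_id (hyc ν' hν') (hy ν' hν').1 ν' (hνb ν' hν')).const_smul (ν' / ν)).sub
        (fcc (fun t => t) _ continuous_id (hyc ν' hν') (hy ν' hν').1 ν (hνb ν hν)))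
    have ebd : ∀ t, ‖(ν' / ν) • f t (x₀ + y ν' t) ν' - f t (x₀ + y ν' t) ν‖ ≤ η := by
      intro t
      have hx := hin _ ((hy ν' hν').1 t)
      have e1 : (ν' / ν) • f t (x₀ + y ν' t) ν' - f t (x₀ + y ν' t) ν
        = ((ν' - ν) / ν) • f t (x₀ + y ν' t) ν' + (f t (x₀ + y ν' t) ν' - f t (x₀ + y ν' t) ν) := by
        rw [sub_div, div_self hνp.ne']; module
      rw [e1]
      refine (norm_add_le _ _).trans ?_
      have q1 := hd2 (t, (x₀ + y ν' t, ν')) ⟨trivial, hx, hνb ν' hν'⟩ (t, (x₀ + y ν' t, ν)) ⟨trivial, hx, hνb ν hν⟩ (by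
        simp only [Prod.dist_eq, dist_self, max_lt_iff]; exact ⟨hδ₂, hδ₂, hn2⟩)
      rw [dist_eq_norm] at q1
      simp only at q1
      have q2 : ‖((ν' - ν) / ν) • f t (x₀ + y ν' t) ν'‖ ≤ η / 2 := by
        rw [norm_smul, norm_div, Real.norm_eq_abs, Real.norm_eq_abs, abs_of_pos hνp]
        rw [Real.dist_eq] at hn3
        have q3 := hC t _ hx ν' (hνb ν' hν')
        calc |ν' - ν| / ν * ‖f t (x₀ + y ν' t) ν'‖ ≤ δ₃ / ν * (C + 1) := by
              gcongr; linarith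
          _ = η / 2 := by rw [hδ₃]; field_simp
      linarith
    have key := key ⟨η, ebd⟩ (fun t => by
      refine ((hy ν' hν').2 t).congr_deriv ?_
      rw [add_sub_cancel, smul_smul, mul_div_cancel₀ _ hνp.ne']) η hη0.le (Filter.Eventually.of_forall ebd) (ε' / 8) (by positivity)
    rw [eventually_top] at key
    have k1 := key t
    have k2 : K ν * η = ε' / 8 := by rw [hη]; field_simp
    have k3 := hd1 t ht1
    simp only [dist_add_left]
    have k4 := dist_triangle (y ν' t) (y ν t) (y ν t₀)
    rw [dist_eq_norm (y ν' t)] at k4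
    rw [← dist_eq_norm] at k1 k4
    linarith
  · intro ν hν
    have hνp := hν.1
    have hK1 := hK0 ν hν
    have hder : ∀ t, HasDerivAt (fun t => x₀ + y ν t) (ν • f t (x₀ + y ν t) ν) t := fun t =>
      ((hy ν hν).2 t).const_add x₀
    refine ⟨⟨⟨⟨‖x₀‖ + r, fun t => (norm_add_le _ _).trans (by linarith [(hy ν hν).1 t])⟩, ?_, ?_⟩, hder, ?_⟩, ?_⟩
    · have hlip := glob_lip hνp (hsol ν _ (hy ν hν).2) (hy ν hν).1 (b := Cg) (fun t => (hN ν hν).g4 _ _ ((hy ν hν).1 t))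
      have : LipschitzWith (Real.toNNReal (ν * (‖A‖ * r + Cg))) (fun t => x₀ + y ν t) := by
        refine LipschitzWith.of_dist_le_mul fun s t => ?_
        rw [dist_add_left, dist_eq_norm, Real.dist_eq, Real.coe_toNNReal _ (by positivity)]
        exact hlip s t
      exact this.uniformContinuous
    · intro ε' hε'
      set η := ε' / (4 * K ν) with hη
      have hη0 : 0 < η := by positivity
      refine (hrel η hη0).mono' fun τ hτ => ?_
      have hτ := rap_event _ _ C hCb τ η hC0 hτ
      have hs := stab ν hν (cocompact ℝ) hG.cocompact (fun t => y ν (t + τ))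
        (fun t => f (t + τ) (x₀ + y ν (t + τ)) ν - f t (x₀ + y ν (t + τ)) ν)
        (fun t => (hy ν hν).1 _)
        ((fcc (fun t => t + τ) (fun t => y ν (t + τ)) (by fun_prop) ((hyc ν hν).comp (by fun_prop)) (fun t => (hy ν hν).1 _) ν (hνb ν hν)).sub
          (fcc (fun t => t) (fun t => y ν (t + τ)) (by fun_prop) ((hyc ν hν).comp (by fun_prop)) (fun t => (hy ν hν).1 _) ν (hνb ν hν)))
        ⟨C + C, fun t => (norm_sub_le _ _).trans (add_le_add (hC _ _ (hin _ ((hy ν hν).1 _)) ν (hνb ν hν)) (hC _ _ (hin _ ((hy ν hν).1 _)) ν (hνb ν hν)))⟩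
        (fun t => by
          refine (((hy ν hν).2 (t + τ)).comp_add_const t τ).congr_deriv ?_
          rw [add_sub_cancel])
        η hη0.le
        (hτ.mono fun t ht => ht (x₀ + y ν (t + τ), ν) ⟨hin _ ((hy ν hν).1 _), hνb ν hν⟩) (ε' / 4) (by positivity)
      refine limsup_lt_helper _ (fun t => norm_nonneg _) ε' hε' (hs.mono fun t ht => ?_)
      have k2 : K ν * η = ε' / 4 := by rw [hη]; field_simp
      rw [add_sub_add_left_eq_sub]
      linarith
    · intro t
      simpa using (hy ν hν).1 t
    · intro ψ _ hψ hψb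
      have key : ∀ δ > 0, ∀ t, ‖(ψ t - x₀) - y ν t‖ ≤ δ := by
        intro δ hδ
        have := stab ν hν ⊤ hG.top (fun t => ψ t - x₀) (fun _ => 0) hψb continuous_const ⟨0, by simp⟩
          (fun t => by
            refine ((hψ t).sub_const x₀).congr_deriv ?_
            rw [add_sub_cancel, add_zero]) 0 le_rfl (by simp) δ hδ
        rw [eventually_top] at this
        simpa using this
      funext t
      have h0 : ‖(ψ t - x₀) - y ν t‖ ≤ 0 := le_of_forall_gt_imp_ge_of_dense (fun δ hδ => key δ hδ t)
      have := norm_le_zero_iff.mp h0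
      have e : ψ t - (x₀ + y ν t) = 0 := by rw [← this]; abel
      exact sub_eq_zero.mp e
end

section
/- Let f : ℝ × ℝⁿ → ℝⁿ be twice continuously differentiable in x, let ξ : ℝ → ℝⁿ be continuous, and let r > 0, N₁ ≥ 0, N₂ ≥ 0. Suppose that for all t ∈ ℝ, all z, z' with ‖z − ξ(t)‖ ≤ r and ‖z' − ξ(t)‖ ≤ r, and all i,j ∈ {1,…,n}: ‖(∂²f/∂x_i∂x_j)(t,z)‖ ≤ N₁ and ‖(∂²f/∂x_i∂x_j)(t,z) − (∂²f/∂x_i∂x_j)(t,z')‖ ≤ N₂‖z − z'‖. Define f₂(t,y) := f(t, ξ(t)+y) − f(t, ξ(t)) − (∂f/∂x)(t,ξ(t))·y. Then ‖f₂(t,y) − f₂(t,ŷ)‖ ≤ (n·r·N₁ + r²·N₂)·‖y − ŷ‖ for every t ∈ ℝ and all y, ŷ with ‖y‖, ‖ŷ‖ ≤ r. -/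
open MeasureTheory Filter

theorem aux_sum_abs {n : ℕ} (u : EuclideanSpace ℝ (Fin n)) :
    ∑ i, |u i| ≤ Real.sqrt n * ‖u‖ := by
  rw [EuclideanSpace.norm_eq, ← Real.sqrt_mul (Nat.cast_nonneg n)]
  apply Real.le_sqrt_of_sq_le
  have h := sq_sum_le_card_mul_sum_sq (s := (Finset.univ : Finset (Fin n))) (f := fun i => |u i|)
  simpa using h

theorem aux_bilin {n : ℕ} {F : Type*} [NormedAddCommGroup F] [NormedSpace ℝ F]
    (B : EuclideanSpace ℝ (Fin n) →L[ℝ] EuclideanSpace ℝ (Fin n) →L[ℝ] F)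
    (N : ℝ) (hN : 0 ≤ N)
    (h : ∀ i j, ‖B (EuclideanSpace.single i (1:ℝ)) (EuclideanSpace.single j (1:ℝ))‖ ≤ N) :
    ‖B‖ ≤ n * N := by
  have hdec : ∀ u : EuclideanSpace ℝ (Fin n),
      u = ∑ i, u i • EuclideanSpace.single i (1:ℝ) := by
    intro u
    have := (EuclideanSpace.basisFun (Fin n) ℝ).sum_repr u
    simpa using this.symm
  refine B.opNorm_le_bound₂ (by positivity) fun u v => ?_
  have h1 : B u v = ∑ i, ∑ j, (u i * v j) •
      B (EuclideanSpace.single i (1:ℝ)) (EuclideanSpace.single j (1:ℝ)) := by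
    conv_lhs => rw [hdec u, hdec v]
    simp only [map_sum, map_smul, ContinuousLinearMap.sum_apply, ContinuousLinearMap.smul_apply,
      Finset.smul_sum, smul_smul]
    rw [Finset.sum_comm]
    simp only [mul_comm]
  calc ‖B u v‖ ≤ ∑ i, ∑ j, (|u i| * |v j|) * N := by
        rw [h1]
        refine (norm_sum_le _ _).trans (Finset.sum_le_sum fun i _ => ?_)
        refine (norm_sum_le _ _).trans (Finset.sum_le_sum fun j _ => ?_)
        rw [norm_smul, Real.norm_eq_abs, abs_mul]
        exact mul_le_mul_of_nonneg_left (h i j) (by positivity)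
    _ = (∑ i, |u i|) * (∑ j, |v j|) * N := by
        rw [Finset.sum_mul_sum, Finset.sum_mul]
        simp only [Finset.sum_mul]
    _ ≤ (Real.sqrt n * ‖u‖) * (Real.sqrt n * ‖v‖) * N := by
        have := aux_sum_abs u
        have := aux_sum_abs v
        gcongr
    _ = n * N * ‖u‖ * ‖v‖ := by
        have : Real.sqrt n * Real.sqrt n = n := Real.mul_self_sqrt (Nat.cast_nonneg n)
        linear_combination (‖u‖ * ‖v‖ * N) * this

/-- Lipschitz estimate (2.8) for the second-order Taylor
remainder `f₂(t,y) = f(t,ξ(t)+y) − f(t,ξ(t)) − (∂f/∂x)(t,ξ(t))·y`. -/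
theorem taylor_remainder_lipschitz {n : ℕ}
    (f : ℝ → EuclideanSpace ℝ (Fin n) → EuclideanSpace ℝ (Fin n))
    (ξ : ℝ → EuclideanSpace ℝ (Fin n))
    (hfC2 : ∀ t, ContDiff ℝ 2 (f t)) (hξ : Continuous ξ)
    (r N₁ N₂ : ℝ) (hr : 0 < r) (hN₁ : 0 ≤ N₁) (hN₂ : 0 ≤ N₂)
    (hbound : ∀ t : ℝ, ∀ z : EuclideanSpace ℝ (Fin n), ‖z - ξ t‖ ≤ r →
      ∀ i j : Fin n,
        ‖iteratedFDeriv ℝ 2 (f t) z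
          ![EuclideanSpace.single i (1:ℝ), EuclideanSpace.single j (1:ℝ)]‖ ≤ N₁)
    (hlip : ∀ t : ℝ, ∀ z z' : EuclideanSpace ℝ (Fin n),
      ‖z - ξ t‖ ≤ r → ‖z' - ξ t‖ ≤ r → ∀ i j : Fin n,
        ‖iteratedFDeriv ℝ 2 (f t) z
            ![EuclideanSpace.single i (1:ℝ), EuclideanSpace.single j (1:ℝ)] -
          iteratedFDeriv ℝ 2 (f t) z'
            ![EuclideanSpace.single i (1:ℝ), EuclideanSpace.single j (1:ℝ)]‖ ≤
          N₂ * ‖z - z'‖) :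
    ∀ t : ℝ, ∀ y yh : EuclideanSpace ℝ (Fin n), ‖y‖ ≤ r → ‖yh‖ ≤ r →
      ‖(f t (ξ t + y) - f t (ξ t) - fderiv ℝ (f t) (ξ t) y) -
        (f t (ξ t + yh) - f t (ξ t) - fderiv ℝ (f t) (ξ t) yh)‖ ≤
      (n * r * N₁ + r ^ 2 * N₂) * ‖y - yh‖ := by
  intro t y yh hy hyh
  have hd : Differentiable ℝ (f t) := (hfC2 t).differentiable (by norm_num)
  have hd2 : Differentiable ℝ (fderiv ℝ (f t)) :=
    ((hfC2 t).fderiv_right (m := 1) (by norm_num)).differentiable (by norm_num)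
  have hconv := convex_closedBall (ξ t) r
  have hB : ∀ z ∈ Metric.closedBall (ξ t) r, ‖fderiv ℝ (fderiv ℝ (f t)) z‖ ≤ n * N₁ := by
    intro z hz
    refine aux_bilin _ N₁ hN₁ fun i j => ?_
    have := hbound t z (by simpa [dist_eq_norm] using hz) i j
    simpa [iteratedFDeriv_two_apply] using this
  have hD : ∀ z ∈ Metric.closedBall (ξ t) r,
      ‖fderiv ℝ (f t) z - fderiv ℝ (f t) (ξ t)‖ ≤ n * r * N₁ := by
    intro z hz
    have h := hconv.norm_image_sub_le_of_norm_fderiv_le (fun x _ => hd2 x) hB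
      (Metric.mem_closedBall_self hr.le) hz
    have hz' : ‖z - ξ t‖ ≤ r := by simpa [dist_eq_norm] using hz
    calc _ ≤ _ := h
      _ ≤ n * N₁ * r := by gcongr
      _ = _ := by ring
  have h := hconv.norm_image_sub_le_of_norm_fderiv_le' (fun x _ => hd x) hD
    (x := ξ t + yh) (y := ξ t + y) (by simpa using hyh) (by simpa using hy)
  have e1 : ξ t + y - (ξ t + yh) = y - yh := by abel
  rw [e1, map_sub] at h
  calc _ = ‖f t (ξ t + y) - f t (ξ t + yh) -
        (fderiv ℝ (f t) (ξ t) y - fderiv ℝ (f t) (ξ t) yh)‖ := by congr 1; abel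
    _ ≤ n * r * N₁ * ‖y - yh‖ := h
    _ ≤ _ := by
      gcongr
      have : 0 ≤ r ^ 2 * N₂ := by positivity
      linarith
end

section
/- Let M : ℝ → Matrix (Fin n) (Fin n) ℝ be RAP (entrywise) and suppose there is δ with 0 ≤ δ < 1 such that ‖M(t)‖ ≤ δ for all t ∈ ℝ (operator norm). Then for every t the matrix I + M(t) is invertible, (I + M(t))⁻¹ = Σ_{k=0}^{∞} (−M(t))^k, and the function t ↦ (I + M(t))⁻¹ is RAP. -/
open MeasureTheory Filter

noncomputable def opNorm {n : ℕ} (A : Matrix (Fin n) (Fin n) ℝ) : ℝ :=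
  ‖LinearMap.toContinuousLinearMap (Matrix.toEuclideanLin A)‖

/-- A matrix-valued function is RAP: bounded, uniformly continuous, and with
relatively dense sets of ε-remote-translation numbers (operator norm). -/
def RAPMatrixOp {n : ℕ} (M : ℝ → Matrix (Fin n) (Fin n) ℝ) : Prop :=
  (∃ C, ∀ t, opNorm (M t) ≤ C) ∧ UniformContinuous M ∧
  ∀ ε > 0, RelativelyDense
    {τ | Filter.limsup (fun t => opNorm (M (t + τ) - M t)) (Filter.cocompact ℝ) < ε}

section
open scoped Matrix.Norms.L2Operator

theorem opNorm_eq_norm {n : ℕ} (A : Matrix (Fin n) (Fin n) ℝ) : opNorm A = ‖A‖ := by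
  rw [Matrix.l2_opNorm_def]; rfl

theorem neumann_aux {n : ℕ} (A : Matrix (Fin n) (Fin n) ℝ) (h : ‖A‖ < 1) :
    (1 + A) * (∑' k : ℕ, (-A) ^ k) = 1 := by
  have := mul_neg_geom_series (-A) (by simpa using h)
  simpa using this

theorem neumann_main {n : ℕ} (M : ℝ → Matrix (Fin n) (Fin n) ℝ)
    (hRAP : RAPMatrixOp M) (δ : ℝ) (hδ0 : 0 ≤ δ) (hδ1 : δ < 1)
    (hbd : ∀ t, opNorm (M t) ≤ δ) :
    (∀ t, IsUnit (1 + M t)) ∧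
    (∀ t, (1 + M t)⁻¹ = ∑' k : ℕ, (-M t) ^ k) ∧
    RAPMatrixOp (fun t => (1 + M t)⁻¹) := by
  obtain ⟨-, huc, hrd⟩ := hRAP
  simp only [opNorm_eq_norm] at hbd hrd
  have hs := fun t => neumann_aux (M t) ((hbd t).trans_lt hδ1)
  have hinv : ∀ t, (1 + M t)⁻¹ = ∑' k : ℕ, (-M t) ^ k := fun t =>
    Matrix.inv_eq_right_inv (hs t)
  have hr : ∀ t, (1 + M t) * (1 + M t)⁻¹ = 1 := fun t => by rw [hinv]; exact hs t
  have hl : ∀ t, (1 + M t)⁻¹ * (1 + M t) = 1 := fun t => mul_eq_one_comm.mp (hr t)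
  obtain ⟨C, hC0, hC⟩ : ∃ C : ℝ, 0 ≤ C ∧ ∀ t, ‖(1 + M t)⁻¹‖ ≤ C := by
    refine ⟨‖(1 : Matrix (Fin n) (Fin n) ℝ)‖ / (1 - δ), div_nonneg (norm_nonneg _) (by linarith), fun t => ?_⟩
    rw [le_div_iff₀ (by linarith)]
    have e : (1 + M t)⁻¹ = 1 - M t * (1 + M t)⁻¹ := by
      have := hr t
      rw [add_mul, one_mul] at this
      exact eq_sub_of_add_eq this
    have h1 : ‖(1 + M t)⁻¹‖ ≤ ‖(1 : Matrix (Fin n) (Fin n) ℝ)‖ + ‖M t * (1 + M t)⁻¹‖ := by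
      conv_lhs => rw [e]
      exact norm_sub_le _ _
    have h2 : ‖M t * (1 + M t)⁻¹‖ ≤ δ * ‖(1 + M t)⁻¹‖ :=
      (norm_mul_le _ _).trans (mul_le_mul_of_nonneg_right (hbd t) (norm_nonneg _))
    linarith
  have hlip : ∀ s t, ‖(1 + M s)⁻¹ - (1 + M t)⁻¹‖ ≤ (C * C) * ‖M s - M t‖ := by
    intro s t
    have e : (1 + M s)⁻¹ - (1 + M t)⁻¹ = (1 + M s)⁻¹ * (M t - M s) * (1 + M t)⁻¹ := by
      have : M t - M s = (1 + M t) - (1 + M s) := by abel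
      rw [this, mul_sub, sub_mul, hl, mul_assoc, hr, mul_one, one_mul]
    rw [e]
    calc _ ≤ ‖(1 + M s)⁻¹‖ * ‖M t - M s‖ * ‖(1 + M t)⁻¹‖ := norm_mul₃_le
      _ ≤ C * ‖M t - M s‖ * C := by
        gcongr
        · exact hC s
        · exact hC t
      _ = _ := by rw [norm_sub_rev]; ring
  have hK : 0 < C * C + 1 := by positivity
  refine ⟨fun t => IsUnit.of_mul_eq_one _ (hr t), hinv, ⟨C, fun t => ?_⟩, ?_, ?_⟩
  · rw [opNorm_eq_norm]; exact hC t
  · rw [Metric.uniformContinuous_iff] at huc ⊢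
    intro ε hε
    obtain ⟨d, hd, h⟩ := huc (ε / (C * C + 1)) (by positivity)
    refine ⟨d, hd, fun a b hab => ?_⟩
    have h1 := h hab
    rw [dist_eq_norm, lt_div_iff₀ hK] at h1
    rw [dist_eq_norm]
    have := hlip a b
    nlinarith [norm_nonneg (M a - M b)]
  · intro ε hε
    obtain ⟨l, hl0, h⟩ := hrd (ε / (C * C + 1)) (by positivity)
    refine ⟨l, hl0, fun a => ?_⟩
    obtain ⟨τ, hτ, hm⟩ := h a
    refine ⟨τ, ?_, hm⟩
    simp only [Set.mem_setOf_eq, opNorm_eq_norm] at hτ ⊢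
    have hb : IsBoundedUnder (· ≤ ·) (cocompact ℝ) (fun t => ‖M (t + τ) - M t‖) :=
      isBoundedUnder_of ⟨δ + δ, fun t =>
        (norm_sub_le _ _).trans (add_le_add (hbd _) (hbd _))⟩
    have hev := eventually_lt_of_limsup_lt hτ hb
    have hlt : (C * C) * (ε / (C * C + 1)) < ε := by
      rw [mul_div_assoc', div_lt_iff₀ hK]; nlinarith
    refine lt_of_le_of_lt (limsup_le_of_le ?_ ?_) hlt
    · exact IsBoundedUnder.isCoboundedUnder_le (isBoundedUnder_of ⟨0, fun t => norm_nonneg _⟩)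
    · filter_upwards [hev] with t ht
      exact (hlip _ _).trans (mul_le_mul_of_nonneg_left ht.le (by positivity))

end

/-- Neumann series — if `M` is RAP with `‖M(t)‖ ≤ δ < 1`, then
`I + M(t)` is invertible, `(I + M(t))⁻¹ = Σ (−M(t))^k`, and `t ↦ (I + M(t))⁻¹`
is RAP. -/
theorem neumann_series_RAP {n : ℕ} (M : ℝ → Matrix (Fin n) (Fin n) ℝ)
    (hRAP : RAPMatrixOp M) (δ : ℝ) (hδ0 : 0 ≤ δ) (hδ1 : δ < 1)
    (hbd : ∀ t, opNorm (M t) ≤ δ) :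
    (∀ t, IsUnit (1 + M t)) ∧
    (∀ t, (1 + M t)⁻¹ = ∑' k : ℕ, (-M t) ^ k) ∧
    RAPMatrixOp (fun t => (1 + M t)⁻¹) := by
  exact neumann_main M hRAP δ hδ0 hδ1 hbd
end
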